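/- For every pair of real numbers a and b with b ≤ 0, the set of positive real numbers c for which there exists a nonzero entire function w satisfying w''(z) + (z³ + a·z² + b·z − c)·w(z) = 0 for all z ∈ ℂ, such that w has infinitely many zeros and all but finitely many zeros of w are real, is infinite. -/

import Mathlib

open Complex Polynomial

/-!
The substitution `x = -(z + a / 3)` turns the equation into `u'' = (x³ - 4βx + c) u` with `β ≥ 0`.
A Volterra equation for the error of the Liouville–Green approximation produces the solution `u`
that decays upwards in the first quadrant. The argument of `u 0` is unbounded as `c` grows, so `u 0`
is real for arbitrarily large `c`. For such `c` the imaginary part of `u` on the positive axis is a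
solution that vanishes at `0` and is recessive, as `u` is dominant there and asymptotically real;
hence it is zero and `u` is real on the real axis. On the negative axis `u` then oscillates by
Sturm comparison. Monotonicity of `conj u * u'` along horizontal and vertical lines confines the
nonreal zeros to `x.re > 0`, where the asymptotics bound them.
-/

namespace CubicOscillator

open Filter Topology Set MeasureTheory

/-- `u` is a holomorphic solution on `U` of the equation `u'' = V u`. -/
structure IsSolutionOn (V u : ℂ → ℂ) (U : Set ℂ) : Prop where
  differentiableOn : DifferentiableOn ℂ u U
  deriv_deriv : ∀ z ∈ U, deriv (deriv u) z = V z * u z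

/-- The Wronskian `u v' - u' v`. -/
noncomputable def wronskian (u v : ℂ → ℂ) (z : ℂ) : ℂ := u z * deriv v z - deriv u z * v z

section Wronskian

variable {V u v : ℂ → ℂ} {U : Set ℂ} {z : ℂ}

theorem IsSolutionOn.mono {U' : Set ℂ} (hu : IsSolutionOn V u U) (h : U' ⊆ U) :
    IsSolutionOn V u U' :=
  ⟨hu.differentiableOn.mono h, fun z hz => hu.deriv_deriv z (h hz)⟩

theorem IsSolutionOn.hasDerivAt (hu : IsSolutionOn V u U) (hU : IsOpen U) (hz : z ∈ U) :
    HasDerivAt u (deriv u z) z :=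
  (hu.differentiableOn.differentiableAt (hU.mem_nhds hz)).hasDerivAt

theorem IsSolutionOn.hasDerivAt_deriv (hu : IsSolutionOn V u U) (hU : IsOpen U) (hz : z ∈ U) :
    HasDerivAt (deriv u) (V z * u z) z := by
  rw [← hu.deriv_deriv z hz]
  exact ((hu.differentiableOn.deriv hU).differentiableAt (hU.mem_nhds hz)).hasDerivAt

theorem IsSolutionOn.exists_wronskian_eq (hu : IsSolutionOn V u U) (hv : IsSolutionOn V v U)
    (hU : IsOpen U) (hUc : IsPreconnected U) : ∃ C, ∀ z ∈ U, wronskian u v z = C := by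
  have hW : ∀ z ∈ U, HasDerivAt (wronskian u v) 0 z := fun z hz =>
    (((hu.hasDerivAt hU hz).mul (hv.hasDerivAt_deriv hU hz)).sub
      ((hu.hasDerivAt_deriv hU hz).mul (hv.hasDerivAt hU hz))).congr_deriv (by ring)
  exact hU.exists_is_const_of_deriv_eq_zero hUc
    (fun z hz => (hW z hz).differentiableAt.differentiableWithinAt) fun z hz => (hW z hz).deriv

theorem IsSolutionOn.linearCombination (hu : IsSolutionOn V u univ) (hv : IsSolutionOn V v univ)
    (p q : ℂ) : IsSolutionOn V (fun z => p * u z - q * v z) univ := by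
  have hd : deriv (fun z => p * u z - q * v z) = fun z => p * deriv u z - q * deriv v z :=
    funext fun z => (((hu.hasDerivAt isOpen_univ (mem_univ z)).const_mul p).sub
      ((hv.hasDerivAt isOpen_univ (mem_univ z)).const_mul q)).deriv
  refine ⟨(hu.differentiableOn.const_mul p).sub (hv.differentiableOn.const_mul q), fun z hz => ?_⟩
  rw [hd]
  exact (((hu.hasDerivAt_deriv isOpen_univ hz).const_mul p).sub
    ((hv.hasDerivAt_deriv isOpen_univ hz).const_mul q)).deriv.trans (by ring)

/-- Two entire solutions of `u'' = V u` with Wronskian `1`; they span all solutions. -/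
structure IsFundamentalSystem (V S T : ℂ → ℂ) : Prop where
  left : IsSolutionOn V S univ
  right : IsSolutionOn V T univ
  wronskian_eq_one : ∀ z, wronskian S T z = 1

variable {S T : ℂ → ℂ}

theorem IsFundamentalSystem.eqOn (h : IsFundamentalSystem V S T) (hu : IsSolutionOn V u U)
    (hU : IsOpen U) (hUc : IsPreconnected U) {z₀ : ℂ} (hz₀ : z₀ ∈ U) :
    EqOn u (fun z => wronskian u T z₀ * S z - wronskian u S z₀ * T z) U := by
  intro z hz
  obtain ⟨p, hp⟩ := hu.exists_wronskian_eq (h.right.mono (subset_univ U)) hU hUc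
  obtain ⟨q, hq⟩ := hu.exists_wronskian_eq (h.left.mono (subset_univ U)) hU hUc
  have hW := h.wronskian_eq_one z
  simp only
  rw [hp z₀ hz₀, hq z₀ hz₀, ← hp z hz, ← hq z hz]
  simp only [wronskian] at hW ⊢
  linear_combination -u z * hW

theorem IsFundamentalSystem.eq_zero (h : IsFundamentalSystem V S T) (hu : IsSolutionOn V u univ)
    {z₀ : ℂ} (h₀ : u z₀ = 0) (h₁ : deriv u z₀ = 0) : u = 0 := by
  funext z
  rw [h.eqOn hu isOpen_univ isPreconnected_univ (mem_univ z₀) (mem_univ z)]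
  simp [wronskian, h₀, h₁]

end Wronskian

section PowerSeries

/-- The coefficient sequences of entire functions: `∑ ‖aₙ‖ Rⁿ` converges for every `R`. -/
def RapidlyDecreasing {E : Type*} [Norm E] (a : ℕ → E) : Prop :=
  ∀ R : ℝ, 0 ≤ R → Summable fun n => ‖a n‖ * R ^ n

theorem RapidlyDecreasing.mono {E F : Type*} [SeminormedAddCommGroup E] [Norm F] {a : ℕ → E}
    {A : ℕ → F} (hA : RapidlyDecreasing A) (h : ∀ n, ‖a n‖ ≤ ‖A n‖) : RapidlyDecreasing a :=
  fun R hR => (hA R hR).of_nonneg_of_le (fun n => by positivity)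
    fun n => mul_le_mul_of_nonneg_right (h n) (by positivity)

theorem rapidlyDecreasing_of_bounded {E : Type*} [SeminormedAddCommGroup E] {a : ℕ → E}
    (h : ∀ R : ℝ, 0 < R → ∃ K, ∀ n, ‖a n‖ * R ^ n ≤ K) : RapidlyDecreasing a := by
  intro R hR
  obtain ⟨K, hK⟩ := h (2 * R + 1) (by positivity)
  refine (summable_geometric_two.mul_left K).of_nonneg_of_le (fun n => by positivity) fun n => ?_
  calc ‖a n‖ * R ^ n ≤ ‖a n‖ * ((2 * R + 1) * (1 / 2)) ^ n := by gcongr; linarith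
    _ = ‖a n‖ * (2 * R + 1) ^ n * (1 / 2) ^ n := by rw [mul_pow, mul_assoc]
    _ ≤ K * (1 / 2) ^ n := by gcongr; exact hK n

theorem RapidlyDecreasing.derivative {a : ℕ → ℂ} (ha : RapidlyDecreasing a) :
    RapidlyDecreasing fun n => (n + 1 : ℂ) * a (n + 1) := by
  intro R hR
  refine ((summable_nat_add_iff 1).2 (ha (2 * (R + 1)) (by positivity))).of_nonneg_of_le
    (fun n => by positivity) fun n => ?_
  have hn : ‖(n + 1 : ℂ)‖ ≤ 2 ^ (n + 1) := by
    rw [← Nat.cast_succ, Complex.norm_natCast]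
    exact_mod_cast Nat.lt_two_pow_self.le
  have hRn : R ^ n ≤ (R + 1) ^ (n + 1) :=
    (pow_le_pow_left₀ hR (by linarith) n).trans (pow_le_pow_right₀ (by linarith) n.le_succ)
  calc ‖(n + 1 : ℂ) * a (n + 1)‖ * R ^ n ≤ 2 ^ (n + 1) * ‖a (n + 1)‖ * (R + 1) ^ (n + 1) := by
        rw [norm_mul]; gcongr
    _ = ‖a (n + 1)‖ * (2 * (R + 1)) ^ (n + 1) := by rw [mul_pow]; ring

/-- The entire function with Taylor coefficients `a`. -/
noncomputable def powerSeries (a : ℕ → ℂ) (z : ℂ) : ℂ := ∑' n, a n * z ^ n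

variable {a : ℕ → ℂ} {z : ℂ}

theorem norm_monomial_le {R A : ℝ} (n : ℕ) (ha : ‖a n‖ ≤ A) (hz : ‖z‖ ≤ R) :
    ‖a n * z ^ n‖ ≤ A * R ^ n := by
  rw [norm_mul, norm_pow]
  have := (norm_nonneg _).trans ha
  gcongr

theorem RapidlyDecreasing.summable_norm (ha : RapidlyDecreasing a) (z : ℂ) :
    Summable fun n => ‖a n * z ^ n‖ := by
  simpa only [norm_mul, norm_pow] using ha ‖z‖ (norm_nonneg z)

theorem RapidlyDecreasing.differentiable (ha : RapidlyDecreasing a) :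
    Differentiable ℂ (powerSeries a) := fun z =>
  (differentiableOn_tsum_of_summable_norm (ha (‖z‖ + 1) (by positivity))
    (fun n => by fun_prop) Metric.isOpen_ball fun n w hw =>
      norm_monomial_le n le_rfl (mem_ball_zero_iff.1 hw).le).differentiableAt
    (Metric.isOpen_ball.mem_nhds (mem_ball_zero_iff.2 (lt_add_one ‖z‖)))

theorem RapidlyDecreasing.deriv_powerSeries (ha : RapidlyDecreasing a) :
    deriv (powerSeries a) = powerSeries fun n => (n + 1 : ℂ) * a (n + 1) := by
  funext z
  have hsum : HasSum (fun n => deriv (fun w => a n * w ^ n) z) (deriv (powerSeries a) z) :=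
    hasSum_deriv_of_summable_norm (ha (‖z‖ + 1) (by positivity)) (fun n => by fun_prop)
      Metric.isOpen_ball (fun n w hw => norm_monomial_le n le_rfl (mem_ball_zero_iff.1 hw).le)
      (mem_ball_zero_iff.2 (lt_add_one ‖z‖))
  have hmonomial : ∀ n, deriv (fun w : ℂ => a n * w ^ n) z = a n * (n * z ^ (n - 1)) :=
    fun n => ((hasDerivAt_pow n z).const_mul (a n)).deriv
  simp only [hmonomial] at hsum
  rw [← hsum.tsum_eq, hsum.summable.tsum_eq_zero_add, powerSeries]
  simp only [Nat.cast_zero, zero_mul, mul_zero, zero_add, add_tsub_cancel_right, Nat.cast_add,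
    Nat.cast_one]
  exact tsum_congr fun n => by ring

theorem powerSeries_zero (a : ℕ → ℂ) : powerSeries a 0 = a 0 := by
  rw [powerSeries, tsum_eq_single 0 fun n hn => by simp [hn]]
  simp

theorem continuousOn_powerSeries {T : Type*} [TopologicalSpace T] {s : Set T} {a : T → ℕ → ℂ}
    {A : ℕ → ℝ} (hA : RapidlyDecreasing A) (hcont : ∀ n, ContinuousOn (fun t => a t n) s)
    (haA : ∀ t ∈ s, ∀ n, ‖a t n‖ ≤ A n) (z : ℂ) : ContinuousOn (fun t => powerSeries (a t) z) s :=
  continuousOn_tsum (fun n => (hcont n).mul continuousOn_const) (hA ‖z‖ (norm_nonneg z))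
    fun n t ht => norm_monomial_le n ((haA t ht n).trans (le_abs_self _)) le_rfl

end PowerSeries

section Coefficients

/-- The Taylor coefficients of the solution of `u'' = (∑ vₖ zᵏ) u`, `u(0) = p`, `u'(0) = q`. -/
def solutionCoeff {K : Type*} [Field K] (v : ℕ → K) (p q : K) : ℕ → K
  | 0 => p
  | 1 => q
  | n + 2 => (∑ k : Fin (n + 1), v (n - k) * solutionCoeff v p q k) / ((n + 1) * (n + 2))

theorem solutionCoeff_add_two {K : Type*} [Field K] (v : ℕ → K) (p q : K) (n : ℕ) :
    solutionCoeff v p q (n + 2) =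
      (∑ k ∈ Finset.range (n + 1), v (n - k) * solutionCoeff v p q k) / ((n + 1) * (n + 2)) := by
  rw [solutionCoeff, ← Fin.sum_univ_eq_sum_range (fun k => v (n - k) * solutionCoeff v p q k)]

theorem norm_solutionCoeff_le {v : ℕ → ℂ} {w : ℕ → ℝ} (hvw : ∀ k, ‖v k‖ ≤ w k) (p q : ℂ) (n : ℕ) :
    ‖solutionCoeff v p q n‖ ≤ solutionCoeff w ‖p‖ ‖q‖ n := by
  induction n using Nat.strong_induction_on with
  | _ n ih =>
    match n with
    | 0 => simp [solutionCoeff]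
    | 1 => simp [solutionCoeff]
    | n + 2 =>
      have hn : ‖((n + 1) * (n + 2) : ℂ)‖ = (n + 1) * (n + 2) := by
        exact_mod_cast Complex.norm_natCast ((n + 1) * (n + 2))
      rw [solutionCoeff_add_two, solutionCoeff_add_two, norm_div, hn]
      gcongr
      refine norm_sum_le_of_le _ fun k hk => ?_
      rw [norm_mul]
      exact mul_le_mul (hvw _) (ih k (by have := Finset.mem_range.1 hk; omega))
        (norm_nonneg _) ((norm_nonneg _).trans (hvw _))

theorem continuousOn_solutionCoeff {T : Type*} [TopologicalSpace T] {s : Set T} {v : T → ℕ → ℂ}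
    (hv : ∀ k, ContinuousOn (fun t => v t k) s) (p q : ℂ) (n : ℕ) :
    ContinuousOn (fun t => solutionCoeff (v t) p q n) s := by
  induction n using Nat.strong_induction_on with
  | _ n ih =>
    match n with
    | 0 => simpa only [solutionCoeff] using continuousOn_const
    | 1 => simpa only [solutionCoeff] using continuousOn_const
    | n + 2 =>
      simp only [solutionCoeff_add_two]
      exact (continuousOn_finsetSum _ fun k hk => (hv _).mul
        (ih k (by have := Finset.mem_range.1 hk; omega))).div_const _

theorem sum_weighted_solutionCoeff_le {v w : ℕ → ℝ} {R M : ℝ} {n : ℕ} (hR : 0 < R)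
    (hw : Summable fun k => ‖v k‖ * R ^ k) (ha : ∀ k ≤ n, ‖w k‖ * R ^ k ≤ M) :
    ‖∑ k ∈ Finset.range (n + 1), v (n - k) * w k‖ * R ^ n ≤ (∑' k, ‖v k‖ * R ^ k) * M := by
  have hM : 0 ≤ M := (by positivity : 0 ≤ ‖w 0‖ * R ^ 0).trans (ha 0 n.zero_le)
  calc ‖∑ k ∈ Finset.range (n + 1), v (n - k) * w k‖ * R ^ n
      ≤ ∑ k ∈ Finset.range (n + 1), ‖v (n - k) * w k‖ * R ^ n := by
        rw [← Finset.sum_mul]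
        gcongr
        exact norm_sum_le _ _
    _ ≤ ∑ k ∈ Finset.range (n + 1), ‖v (n - k)‖ * R ^ (n - k) * M := by
        refine Finset.sum_le_sum fun k hk => ?_
        have hkn : k ≤ n := Nat.lt_succ_iff.1 (Finset.mem_range.1 hk)
        calc ‖v (n - k) * w k‖ * R ^ n = ‖v (n - k)‖ * R ^ (n - k) * (‖w k‖ * R ^ k) := by
              rw [norm_mul, ← Nat.sub_add_cancel hkn, pow_add, Nat.sub_add_cancel hkn]; ring
          _ ≤ _ := by gcongr; exact ha k hkn
    _ = (∑ k ∈ Finset.range (n + 1), ‖v k‖ * R ^ k) * M := by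
        rw [← Finset.sum_mul, ← Finset.sum_range_reflect (fun k => ‖v k‖ * R ^ k) (n + 1)]
        rfl
    _ ≤ (∑' k, ‖v k‖ * R ^ k) * M := by
        gcongr
        exact hw.sum_le_tsum _ fun k _ => by positivity

theorem solutionCoeff_add_two_weighted_le {v : ℕ → ℝ} (hv : RapidlyDecreasing v) {p q R M : ℝ}
    (hR : 0 < R) {n : ℕ} (ha : ∀ k ≤ n, ‖solutionCoeff v p q k‖ * R ^ k ≤ M) :
    ‖solutionCoeff v p q (n + 2)‖ * R ^ (n + 2) ≤
      R ^ 2 * (∑' k, ‖v k‖ * R ^ k) / ((n + 1) * (n + 2)) * M := by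
  have hn : ‖((n + 1) * (n + 2) : ℝ)‖ = (n + 1) * (n + 2) := Real.norm_of_nonneg (by positivity)
  calc ‖solutionCoeff v p q (n + 2)‖ * R ^ (n + 2)
      = ‖∑ k ∈ Finset.range (n + 1), v (n - k) * solutionCoeff v p q k‖ * R ^ n * R ^ 2 /
          ((n + 1) * (n + 2)) := by
        rw [solutionCoeff_add_two, norm_div, hn]; ring
    _ ≤ (∑' k, ‖v k‖ * R ^ k) * M * R ^ 2 / ((n + 1) * (n + 2)) := by
        gcongr ?_ * _ / _
        exact sum_weighted_solutionCoeff_le hR (hv R hR.le) ha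
    _ = R ^ 2 * (∑' k, ‖v k‖ * R ^ k) / ((n + 1) * (n + 2)) * M := by ring

/-- The factors `S / ((n+1)(n+2)) ≤ exp (S / (n+1) - S / (n+2))` of the recurrence telescope. -/
theorem solutionCoeff_weighted_le {v : ℕ → ℝ} (hv : RapidlyDecreasing v) (p q : ℝ) {R : ℝ}
    (hR : 0 < R) (n : ℕ) : ‖solutionCoeff v p q n‖ * R ^ n ≤
      (|p| + |q| * R) * Real.exp (R ^ 2 * (∑' k, ‖v k‖ * R ^ k) * (1 - 1 / (n + 1))) := by
  set S := R ^ 2 * ∑' k, ‖v k‖ * R ^ k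
  have : 0 ≤ S := mul_nonneg (by positivity) (tsum_nonneg fun k => by positivity)
  set C := |p| + |q| * R
  have : 0 ≤ C := by positivity
  have hexp : ∀ {k n : ℕ}, k ≤ n → C * Real.exp (S * (1 - 1 / (k + 1))) ≤
      C * Real.exp (S * (1 - 1 / (n + 1))) := fun h => by gcongr
  induction n using Nat.strong_induction_on with
  | _ n ih =>
    match n with
    | 0 =>
      simp only [solutionCoeff, C]
      norm_num
      positivity
    | 1 =>
      refine le_trans ?_ (hexp zero_le_one)
      simp [solutionCoeff, C]
    | n + 2 =>
      have hprev : ∀ k ≤ n, ‖solutionCoeff v p q k‖ * R ^ k ≤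
          C * Real.exp (S * (1 - 1 / (n + 1))) := fun k hk => (ih k (by omega)).trans (hexp hk)
      calc ‖solutionCoeff v p q (n + 2)‖ * R ^ (n + 2)
          ≤ S / ((n + 1) * (n + 2)) * (C * Real.exp (S * (1 - 1 / (n + 1)))) :=
            solutionCoeff_add_two_weighted_le hv hR hprev
        _ ≤ Real.exp (S / ((n + 1) * (n + 2))) * (C * Real.exp (S * (1 - 1 / (n + 1)))) := by
            gcongr
            linarith [Real.add_one_le_exp (S / ((n + 1) * (n + 2) : ℝ))]
        _ = C * Real.exp (S * (1 - 1 / ((n + 1 : ℕ) + 1))) := by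
            rw [mul_left_comm, ← Real.exp_add]; congr 2; push_cast; field_simp; ring
        _ ≤ C * Real.exp (S * (1 - 1 / ((n + 2 : ℕ) + 1))) := hexp (n + 1).le_succ

theorem rapidlyDecreasing_solutionCoeff {v : ℕ → ℝ} (hv : RapidlyDecreasing v) (p q : ℝ) :
    RapidlyDecreasing (solutionCoeff v p q) :=
  rapidlyDecreasing_of_bounded fun R hR =>
    ⟨(|p| + |q| * R) * Real.exp (R ^ 2 * ∑' k, ‖v k‖ * R ^ k), fun n =>
      (solutionCoeff_weighted_le hv p q hR n).trans <| by
        have hS : 0 ≤ R ^ 2 * ∑' k, ‖v k‖ * R ^ k :=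
          mul_nonneg (by positivity) (tsum_nonneg fun k => by positivity)
        have hn : (1 - 1 / (n + 1) : ℝ) ≤ 1 := sub_le_self _ (by positivity)
        exact mul_le_mul_of_nonneg_left
          (Real.exp_le_exp.2 (mul_le_of_le_one_right hS hn)) (by positivity)⟩

theorem isSolutionOn_powerSeries {v : ℕ → ℂ} {p q : ℂ} (hv : RapidlyDecreasing v)
    (ha : RapidlyDecreasing (solutionCoeff v p q)) :
    IsSolutionOn (powerSeries v) (powerSeries (solutionCoeff v p q)) univ := by
  refine ⟨ha.differentiable.differentiableOn, fun z _ => ?_⟩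
  rw [ha.deriv_powerSeries, ha.derivative.deriv_powerSeries]
  simp only [powerSeries]
  rw [tsum_mul_tsum_eq_tsum_sum_range_of_summable_norm (hv.summable_norm z) (ha.summable_norm z)]
  refine tsum_congr fun n => ?_
  rw [← Finset.sum_range_reflect, add_assoc n 1 1, one_add_one_eq_two, solutionCoeff_add_two]
  have hn : (n + 1 : ℂ) ≠ 0 := by exact_mod_cast n.succ_ne_zero
  have hn' : (n + 2 : ℂ) ≠ 0 := by exact_mod_cast (n + 1).succ_ne_zero
  have hrec : (n + 1 : ℂ) * (((n + 1 : ℕ) + 1) * ((∑ k ∈ Finset.range (n + 1),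
      v (n - k) * solutionCoeff v p q k) / ((n + 1) * (n + 2)))) * z ^ n =
      (∑ k ∈ Finset.range (n + 1), v (n - k) * solutionCoeff v p q k) * z ^ n := by
    push_cast; field_simp; ring
  rw [hrec, Finset.sum_mul]
  refine Finset.sum_congr rfl fun k hk => ?_
  have hkn : k ≤ n := Nat.lt_succ_iff.1 (Finset.mem_range.1 hk)
  rw [show n + 1 - 1 - k = n - k by omega, show n - (n - k) = k by omega]
  rw [show z ^ n = z ^ (n - k) * z ^ k by rw [← pow_add, Nat.sub_add_cancel hkn]]
  ring

theorem exists_isSolutionOn_univ {T : Type*} [TopologicalSpace T] {s : Set T} {v : T → ℕ → ℂ}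
    {w : ℕ → ℝ} (hw : RapidlyDecreasing w) (hv : ∀ k, ContinuousOn (fun t => v t k) s)
    (hvw : ∀ t ∈ s, ∀ k, ‖v t k‖ ≤ w k) (p q : ℂ) :
    ∃ u : T → ℂ → ℂ, (∀ t ∈ s, IsSolutionOn (powerSeries (v t)) (u t) univ ∧
        u t 0 = p ∧ deriv (u t) 0 = q) ∧
      ∀ z, ContinuousOn (fun t => u t z) s ∧ ContinuousOn (fun t => deriv (u t) z) s := by
  set A := solutionCoeff w ‖p‖ ‖q‖
  have hA : RapidlyDecreasing A := rapidlyDecreasing_solutionCoeff hw _ _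
  have haA : ∀ t ∈ s, ∀ n, ‖solutionCoeff (v t) p q n‖ ≤ A n := fun t ht =>
    norm_solutionCoeff_le (hvw t ht) p q
  have ha : ∀ t ∈ s, RapidlyDecreasing (solutionCoeff (v t) p q) := fun t ht =>
    hA.mono fun n => (haA t ht n).trans (le_abs_self _)
  refine ⟨fun t => powerSeries (solutionCoeff (v t) p q), fun t ht => ⟨?_, ?_, ?_⟩,
    fun z => ⟨?_, ?_⟩⟩
  · exact isSolutionOn_powerSeries (hw.mono fun n => (hvw t ht n).trans (le_abs_self _)) (ha t ht)
  · exact (powerSeries_zero _).trans (by rw [solutionCoeff])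
  · rw [(ha t ht).deriv_powerSeries, powerSeries_zero]
    simp [solutionCoeff]
  · exact continuousOn_powerSeries hA (continuousOn_solutionCoeff hv p q) haA z
  · have hA' : RapidlyDecreasing fun n => ‖(n + 1 : ℂ) * (A (n + 1) : ℂ)‖ :=
      (RapidlyDecreasing.derivative (a := fun n => (A n : ℂ))
        (hA.mono fun n => by simp)).mono fun n => by simp
    refine (continuousOn_powerSeries (a := fun t n => (n + 1 : ℂ) * solutionCoeff (v t) p q (n + 1))
      hA' (fun n => continuousOn_const.mul (continuousOn_solutionCoeff hv p q (n + 1)))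
      (fun t ht n => ?_) z).congr fun t ht => by simp only [(ha t ht).deriv_powerSeries]
    rw [norm_mul, norm_mul]
    gcongr
    exact (haA t ht (n + 1)).trans (by simpa using le_abs_self _)

end Coefficients

/-! ### The cubic potential -/

section CubicPotential

/-- The cubic potential `x³ - 4βx + c`. The equation of the theorem is brought to this form by
`x = -(z + a/3)`, and the factor `4` keeps the asymptotic expansions free of fractions. -/
def potential (β c : ℝ) (x : ℂ) : ℂ := x ^ 3 - 4 * β * x + c

/-- The Taylor coefficients of `potential β c`. -/
def potentialCoeff (β c : ℝ) : ℕ → ℂ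
  | 0 => c
  | 1 => -(4 * β)
  | 3 => 1
  | _ => 0

theorem powerSeries_potentialCoeff (β c : ℝ) :
    powerSeries (potentialCoeff β c) = potential β c := by
  funext x
  rw [powerSeries, tsum_eq_sum (s := Finset.range 4) fun n hn => ?_]
  · simp only [Finset.sum_range_succ, Finset.sum_range_zero, potentialCoeff, potential]
    ring
  · obtain ⟨k, rfl⟩ := Nat.exists_eq_add_of_le (Nat.not_lt.1 (Finset.mem_range.not.1 hn))
    rw [add_comm 4 k]
    simp [potentialCoeff]

theorem exists_isFundamentalSystem_potential (β C : ℝ) : ∃ S T : ℝ → ℂ → ℂ,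
    (∀ c ∈ Icc 0 C, IsFundamentalSystem (potential β c) (S c) (T c)) ∧ ∀ z,
      (ContinuousOn (fun c => S c z) (Icc 0 C) ∧
        ContinuousOn (fun c => deriv (S c) z) (Icc 0 C)) ∧
      ContinuousOn (fun c => T c z) (Icc 0 C) ∧
        ContinuousOn (fun c => deriv (T c) z) (Icc 0 C) := by
  have hbound : ∀ c ∈ Icc 0 C, ∀ k, ‖potentialCoeff β c k‖ ≤ ‖potentialCoeff β C k‖ := by
    intro c hc k
    match k with
    | 0 =>
      simp only [potentialCoeff, Complex.norm_real]
      exact abs_le_abs_of_nonneg hc.1 hc.2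
    | 1 | 2 | 3 | k + 4 => simp [potentialCoeff]
  have hcont : ∀ k, ContinuousOn (fun c => potentialCoeff β c k) (Icc 0 C) := by
    intro k
    match k with
    | 0 | 1 | 2 | 3 | k + 4 => simp only [potentialCoeff]; fun_prop
  have hrapid : RapidlyDecreasing fun k => ‖potentialCoeff β C k‖ := fun R _ =>
    summable_of_ne_finset_zero (s := Finset.range 4) fun n hn => by
      obtain ⟨k, rfl⟩ := Nat.exists_eq_add_of_le (Nat.not_lt.1 (Finset.mem_range.not.1 hn))
      rw [add_comm 4 k]
      simp [potentialCoeff]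
  obtain ⟨S, hS, hS'⟩ := exists_isSolutionOn_univ hrapid hcont hbound 1 0
  obtain ⟨T, hT, hT'⟩ := exists_isSolutionOn_univ hrapid hcont hbound 0 1
  refine ⟨S, T, fun c hc => ?_, fun z => ⟨hS' z, hT' z⟩⟩
  obtain ⟨hSc, hS₀, hS₁⟩ := hS c hc
  obtain ⟨hTc, hT₀, hT₁⟩ := hT c hc
  rw [powerSeries_potentialCoeff] at hSc hTc
  obtain ⟨W, hW⟩ := hSc.exists_wronskian_eq hTc isOpen_univ isPreconnected_univ
  refine ⟨hSc, hTc, fun z => ?_⟩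
  rw [hW z (mem_univ z), ← hW 0 (mem_univ 0), wronskian, hS₀, hS₁, hT₀, hT₁]
  norm_num

end CubicPotential

/-! ### Volterra equations along a flow -/

section Volterra

variable {X : Type*} {σ : ℝ → X → X} {Φ g : X → ℂ} {D : Set X} {G : ℝ → ℝ} {x : X}

/-- The terms of the Neumann series of the equation
`m x = 1 + ∫₀^∞ (exp (2 (Φ (σ s x) - Φ x)) - 1) g (σ s x) m (σ s x) ds`. When `Φ` and `g` are the
phase and the error term of a Liouville–Green approximation along the orbits of `σ`, the solution
`m` is the factor that turns the approximation into an exact solution. -/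
noncomputable def volterraTerm (σ : ℝ → X → X) (Φ g : X → ℂ) : ℕ → X → ℂ
  | 0 => 1
  | n + 1 => fun x => ∫ s in Ioi (0 : ℝ),
      (exp (2 * (Φ (σ s x) - Φ x)) - 1) * (g (σ s x) * volterraTerm σ Φ g n (σ s x))

/-- The sum of the Neumann series of the Volterra equation along the flow `σ`. -/
noncomputable def volterraSolution (σ : ℝ → X → X) (Φ g : X → ℂ) (x : X) : ℂ :=
  ∑' n, volterraTerm σ Φ g n x

/-- The conditions under which the Neumann series of the Volterra equation converges on `D`: the
flow preserves `D`, `re Φ` decreases along it, and `g` is dominated along it by `G`, whose integral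
is so small that the integral operator is a contraction. -/
structure IsVolterraDatum [TopologicalSpace X] (σ : ℝ → X → X) (Φ g : X → ℂ) (D : Set X)
    (G : ℝ → ℝ) : Prop where
  mapsTo : ∀ s ∈ Ioi (0 : ℝ), MapsTo (σ s) D D
  continuousOn_flow : ContinuousOn (fun p : X × ℝ => σ p.2 p.1) (D ×ˢ Ioi 0)
  continuousOn_phase : ContinuousOn Φ D
  continuousOn_error : ContinuousOn g D
  re_phase_le : ∀ x ∈ D, ∀ s ∈ Ioi (0 : ℝ), (Φ (σ s x)).re ≤ (Φ x).re
  norm_error_le : ∀ x ∈ D, ∀ s ∈ Ioi (0 : ℝ), ‖g (σ s x)‖ ≤ G s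
  integrableOn : IntegrableOn G (Ioi 0)
  integral_le : ∫ s in Ioi 0, G s ≤ 1 / 8

theorem norm_exp_sub_one_le_two {w : ℂ} (hw : w.re ≤ 0) : ‖exp w - 1‖ ≤ 2 := by
  have h := norm_sub_le (exp w) 1
  rw [norm_exp, norm_one] at h
  linarith [Real.exp_le_one_iff.2 hw]

variable [TopologicalSpace X]

namespace IsVolterraDatum

theorem norm_integrand_le (h : IsVolterraDatum σ Φ g D G) {f : X → ℂ} {M : ℝ}
    (hM : ∀ x ∈ D, ‖f x‖ ≤ M) (hx : x ∈ D) {s : ℝ} (hs : s ∈ Ioi (0 : ℝ)) :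
    ‖(exp (2 * (Φ (σ s x) - Φ x)) - 1) * (g (σ s x) * f (σ s x))‖ ≤ 2 * M * G s := by
  have hk : ‖exp (2 * (Φ (σ s x) - Φ x)) - 1‖ ≤ 2 :=
    norm_exp_sub_one_le_two (by
      have := h.re_phase_le x hx s hs
      simp only [mul_re, re_ofNat, sub_re, im_ofNat, sub_im, zero_mul, sub_zero]
      linarith)
  have hg := h.norm_error_le x hx s hs
  have hG : 0 ≤ G s := (norm_nonneg _).trans hg
  calc _ = ‖exp (2 * (Φ (σ s x) - Φ x)) - 1‖ * (‖g (σ s x)‖ * ‖f (σ s x)‖) := by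
        rw [norm_mul, norm_mul]
    _ ≤ 2 * (G s * M) := by gcongr; exact hM _ (h.mapsTo s hs hx)
    _ = 2 * M * G s := by ring

theorem mapsTo_flow (h : IsVolterraDatum σ Φ g D G) :
    MapsTo (fun p : X × ℝ => σ p.2 p.1) (D ×ˢ Ioi 0) D :=
  fun p hp => h.mapsTo p.2 hp.2 hp.1

theorem continuousOn_exp_phase (h : IsVolterraDatum σ Φ g D G) :
    ContinuousOn (fun p : X × ℝ => exp (2 * (Φ (σ p.2 p.1) - Φ p.1))) (D ×ˢ Ioi 0) := by
  have hΦ := h.continuousOn_phase.comp h.continuousOn_flow h.mapsTo_flow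
  have hΦ₀ : ContinuousOn (fun p : X × ℝ => Φ p.1) (D ×ˢ Ioi 0) :=
    h.continuousOn_phase.comp continuousOn_fst fun p hp => hp.1
  exact (continuousOn_const.mul (hΦ.sub hΦ₀)).cexp

theorem continuousOn_integrand (h : IsVolterraDatum σ Φ g D G) {f : X → ℂ}
    (hf : ContinuousOn f D) :
    ContinuousOn (fun p : X × ℝ =>
      (exp (2 * (Φ (σ p.2 p.1) - Φ p.1)) - 1) * (g (σ p.2 p.1) * f (σ p.2 p.1)))
      (D ×ˢ Ioi 0) :=
  (h.continuousOn_exp_phase.sub continuousOn_const).mul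
    ((h.continuousOn_error.mul hf).comp h.continuousOn_flow h.mapsTo_flow)

theorem aestronglyMeasurable_integrand (h : IsVolterraDatum σ Φ g D G) {f : X → ℂ}
    (hf : ContinuousOn f D) (hx : x ∈ D) :
    AEStronglyMeasurable
      (fun s => (exp (2 * (Φ (σ s x) - Φ x)) - 1) * (g (σ s x) * f (σ s x)))
      (volume.restrict (Ioi 0)) :=
  ((h.continuousOn_integrand hf).comp (Continuous.prodMk_right x).continuousOn
    fun _ hs => ⟨hx, hs⟩).aestronglyMeasurable measurableSet_Ioi

theorem integrableOn_integrand (h : IsVolterraDatum σ Φ g D G) {f : X → ℂ} {M : ℝ}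
    (hf : ContinuousOn f D) (hM : ∀ x ∈ D, ‖f x‖ ≤ M) (hx : x ∈ D) :
    IntegrableOn (fun s => (exp (2 * (Φ (σ s x) - Φ x)) - 1) * (g (σ s x) * f (σ s x)))
      (Ioi 0) :=
  (h.integrableOn.const_mul (2 * M)).mono' (h.aestronglyMeasurable_integrand hf hx)
    (ae_restrict_of_forall_mem measurableSet_Ioi fun _ hs => h.norm_integrand_le hM hx hs)

theorem norm_integral_le (h : IsVolterraDatum σ Φ g D G) {f : X → ℂ} {M : ℝ}
    (hM : ∀ x ∈ D, ‖f x‖ ≤ M) (hx : x ∈ D) :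
    ‖∫ s in Ioi (0 : ℝ), (exp (2 * (Φ (σ s x) - Φ x)) - 1) * (g (σ s x) * f (σ s x))‖
      ≤ 2 * M * ∫ s in Ioi 0, G s := by
  rw [← integral_const_mul]
  exact norm_integral_le_of_norm_le (h.integrableOn.const_mul (2 * M))
    (ae_restrict_of_forall_mem measurableSet_Ioi fun _ hs => h.norm_integrand_le hM hx hs)

theorem norm_volterraTerm_le (h : IsVolterraDatum σ Φ g D G) (n : ℕ) :
    ∀ x ∈ D, ‖volterraTerm σ Φ g n x‖ ≤ (1 / 2) ^ n := by
  induction n with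
  | zero => simp [volterraTerm]
  | succ n ih =>
    intro x hx
    calc ‖volterraTerm σ Φ g (n + 1) x‖ ≤ 2 * (1 / 2) ^ n * ∫ s in Ioi 0, G s :=
          h.norm_integral_le ih hx
      _ ≤ 2 * (1 / 2) ^ n * (1 / 8) := by gcongr; exact h.integral_le
      _ ≤ (1 / 2) ^ (n + 1) := by
          rw [pow_succ]; linarith [show (0 : ℝ) < (1 / 2) ^ n by positivity]

theorem summable_volterraTerm (h : IsVolterraDatum σ Φ g D G) (hx : x ∈ D) :
    Summable fun n => volterraTerm σ Φ g n x :=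
  .of_norm_bounded summable_geometric_two fun n => h.norm_volterraTerm_le n x hx

theorem norm_volterraSolution_le (h : IsVolterraDatum σ Φ g D G) (hx : x ∈ D) :
    ‖volterraSolution σ Φ g x‖ ≤ 2 := by
  rw [volterraSolution]
  exact tsum_of_norm_bounded hasSum_geometric_two fun n => h.norm_volterraTerm_le n x hx

variable [FirstCountableTopology X]

theorem continuousOn_volterraTerm (h : IsVolterraDatum σ Φ g D G) (n : ℕ) :
    ContinuousOn (volterraTerm σ Φ g n) D := by
  induction n with
  | zero => exact continuousOn_const
  | succ n ih =>
    refine continuousOn_of_dominated (fun x hx => h.aestronglyMeasurable_integrand ih hx)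
      (fun x hx => ae_restrict_of_forall_mem measurableSet_Ioi fun s hs =>
        h.norm_integrand_le (h.norm_volterraTerm_le n) hx hs)
      (h.integrableOn.const_mul _)
      (ae_restrict_of_forall_mem measurableSet_Ioi fun s hs => ?_)
    have hslice : ContinuousOn (fun x => (x, s)) D := (Continuous.prodMk_left s).continuousOn
    have hcomp := (h.continuousOn_integrand ih).comp hslice fun _ hx => ⟨hx, hs⟩
    exact hcomp

theorem continuousOn_volterraSolution (h : IsVolterraDatum σ Φ g D G) :
    ContinuousOn (volterraSolution σ Φ g) D :=
  continuousOn_tsum h.continuousOn_volterraTerm summable_geometric_two h.norm_volterraTerm_le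

theorem volterraSolution_eq (h : IsVolterraDatum σ Φ g D G) (hx : x ∈ D) :
    volterraSolution σ Φ g x = 1 + ∫ s in Ioi (0 : ℝ),
      (exp (2 * (Φ (σ s x) - Φ x)) - 1) * (g (σ s x) * volterraSolution σ Φ g (σ s x)) := by
  have hterm : ∀ n, IntegrableOn (fun s => (exp (2 * (Φ (σ s x) - Φ x)) - 1) *
      (g (σ s x) * volterraTerm σ Φ g n (σ s x))) (Ioi 0) := fun n =>
    h.integrableOn_integrand (h.continuousOn_volterraTerm n) (h.norm_volterraTerm_le n) hx
  have hsum : Summable fun n => ∫ s in Ioi (0 : ℝ), ‖(exp (2 * (Φ (σ s x) - Φ x)) - 1) *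
      (g (σ s x) * volterraTerm σ Φ g n (σ s x))‖ := by
    refine .of_nonneg_of_le (fun n => integral_nonneg fun s => norm_nonneg _)
      (fun n => setIntegral_mono_on (hterm n).norm (h.integrableOn.const_mul (2 * (1 / 2) ^ n))
        measurableSet_Ioi fun s hs => h.norm_integrand_le (h.norm_volterraTerm_le n) hx hs) ?_
    simp_rw [integral_const_mul]
    exact (summable_geometric_two.mul_left 2).mul_right _
  calc volterraSolution σ Φ g x = 1 + ∑' n, volterraTerm σ Φ g (n + 1) x :=
        (h.summable_volterraTerm hx).tsum_eq_zero_add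
    _ = 1 + ∫ s in Ioi (0 : ℝ), ∑' n, (exp (2 * (Φ (σ s x) - Φ x)) - 1) *
          (g (σ s x) * volterraTerm σ Φ g n (σ s x)) := by
        rw [← integral_tsum_of_summable_integral_norm hterm hsum]
        rfl
    _ = _ := by simp only [tsum_mul_left, volterraSolution]

theorem norm_volterraSolution_sub_one_le (h : IsVolterraDatum σ Φ g D G) (hx : x ∈ D) :
    ‖volterraSolution σ Φ g x - 1‖ ≤ 4 * ∫ s in Ioi 0, G s := by
  rw [h.volterraSolution_eq hx, add_sub_cancel_left]
  exact (h.norm_integral_le (fun _ => h.norm_volterraSolution_le) hx).trans_eq (by ring)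

theorem volterraSolution_ne_zero (h : IsVolterraDatum σ Φ g D G) (hx : x ∈ D) :
    volterraSolution σ Φ g x ≠ 0 := by
  intro h₀
  have h₁ := h.norm_volterraSolution_sub_one_le hx
  rw [h₀, zero_sub, norm_neg, norm_one] at h₁
  linarith [h.integral_le]

end IsVolterraDatum

end Volterra

section Holomorphic

theorem differentiableOn_integral_of_dominated {α : Type*} [MeasurableSpace α] {μ : Measure α}
    {F : ℂ → α → ℂ} {G : α → ℝ} {U : Set ℂ} (hU : IsOpen U)
    (hmeas : ∀ z ∈ U, AEStronglyMeasurable (F z) μ)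
    (hdiff : ∀ᵐ s ∂μ, DifferentiableOn ℂ (F · s) U)
    (hle : ∀ᵐ s ∂μ, ∀ z ∈ U, ‖F z s‖ ≤ G s) (hG : Integrable G μ) :
    DifferentiableOn ℂ (fun z => ∫ s, F z s ∂μ) U := by
  intro z hz
  obtain ⟨ε, hε, hball⟩ := Metric.isOpen_iff.1 hU z hz
  have hderiv : ∀ᵐ s ∂μ, ∀ w ∈ U, HasDerivAt (F · s) (deriv (F · s) w) w := by
    filter_upwards [hdiff] with s hs w hw
    exact (hs.differentiableAt (hU.mem_nhds hw)).hasDerivAt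
  have hderiv_le : ∀ᵐ s ∂μ, ∀ w ∈ Metric.ball z (ε / 2), ‖deriv (F · s) w‖ ≤ G s / (ε / 3) := by
    filter_upwards [hdiff, hle] with s hs hsG w hw
    have hsub : Metric.closedBall w (ε / 3) ⊆ U := fun y hy => hball <| by
      rw [Metric.mem_ball, Metric.mem_closedBall] at *
      linarith [dist_triangle y w z]
    refine norm_deriv_le_of_forall_mem_sphere_norm_le (by positivity)
      (hs.diffContOnCl_ball hsub) fun y hy => hsG y (hsub (Metric.sphere_subset_closedBall hy))
  have hmeas' : AEStronglyMeasurable (fun s => deriv (F · s) z) μ := by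
    have hacc : z ∈ closure (U \ {z}) := mem_closure_iff_nhdsWithin_neBot.2 <| by
      rw [sdiff_eq, nhdsWithin_inter_of_mem (mem_nhdsWithin_of_mem_nhds (hU.mem_nhds hz))]
      infer_instance
    obtain ⟨w, hw, hwz⟩ := mem_closure_iff_seq_limit.1 hacc
    refine aestronglyMeasurable_of_tendsto_ae atTop (f := fun n s => slope (F · s) z (w n))
      (fun n => ((hmeas _ (hw n).1).sub (hmeas z hz)).const_smul _) ?_
    filter_upwards [hderiv] with s hs
    exact (hs z hz).tendsto_slope.comp
      (tendsto_nhdsWithin_iff.2 ⟨hwz, .of_forall fun n => (hw n).2⟩)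
  have hint : Integrable (F z) μ :=
    hG.mono' (hmeas z hz) (by filter_upwards [hle] with s hs using hs z hz)
  exact (hasDerivAt_integral_of_dominated_loc_of_deriv_le (Metric.ball_mem_nhds z (half_pos hε))
    (by filter_upwards [hU.mem_nhds hz] with w hw using hmeas w hw) hint hmeas' hderiv_le
    (hG.div_const _) (by
      filter_upwards [hderiv] with s hs w hw
      exact hs w (hball (Metric.ball_subset_ball (by linarith) hw)))).2
    |>.differentiableAt.differentiableWithinAt

variable {X : Type*} [TopologicalSpace X] [FirstCountableTopology X] {σ : ℝ → X → X}
  {Φ g : X → ℂ} {D : Set X} {G : ℝ → ℝ} {ι : ℂ → X} {U : Set ℂ} {v : ℂ}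

theorem IsVolterraDatum.differentiableOn_volterraTerm (h : IsVolterraDatum σ Φ g D G)
    (hU : IsOpen U) (hι : MapsTo ι U D) (hv : ∀ s ∈ Ioi (0 : ℝ), MapsTo (fun z => z + s * v) U U)
    (hσ : ∀ s ∈ Ioi (0 : ℝ), ∀ z ∈ U, σ s (ι z) = ι (z + s * v))
    (hΦ : DifferentiableOn ℂ (Φ ∘ ι) U) (hg : DifferentiableOn ℂ (g ∘ ι) U) (n : ℕ) :
    DifferentiableOn ℂ (volterraTerm σ Φ g n ∘ ι) U := by
  induction n with
  | zero => exact differentiableOn_const 1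
  | succ n ih =>
    refine differentiableOn_integral_of_dominated hU
      (fun z hz => h.aestronglyMeasurable_integrand (h.continuousOn_volterraTerm n) (hι hz))
      (ae_restrict_of_forall_mem measurableSet_Ioi fun s hs => ?_)
      (ae_restrict_of_forall_mem measurableSet_Ioi fun s hs z hz =>
        h.norm_integrand_le (h.norm_volterraTerm_le n) (hι hz) hs) (h.integrableOn.const_mul _)
    have hshift {f : X → ℂ} (hf : DifferentiableOn ℂ (f ∘ ι) U) :
        DifferentiableOn ℂ (fun z => f (σ s (ι z))) U :=
      (hf.comp (differentiableOn_id.add_const _) (hv s hs)).congr fun z hz => by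
        simp only [hσ s hs z hz, Function.comp_apply, id]
    exact ((((hshift hΦ).sub hΦ).const_mul 2).cexp.sub_const 1).mul ((hshift hg).mul (hshift ih))

theorem IsVolterraDatum.differentiableOn_volterraSolution (h : IsVolterraDatum σ Φ g D G)
    (hU : IsOpen U) (hι : MapsTo ι U D) (hv : ∀ s ∈ Ioi (0 : ℝ), MapsTo (fun z => z + s * v) U U)
    (hσ : ∀ s ∈ Ioi (0 : ℝ), ∀ z ∈ U, σ s (ι z) = ι (z + s * v))
    (hΦ : DifferentiableOn ℂ (Φ ∘ ι) U) (hg : DifferentiableOn ℂ (g ∘ ι) U) :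
    DifferentiableOn ℂ (volterraSolution σ Φ g ∘ ι) U :=
  differentiableOn_tsum_of_summable_norm summable_geometric_two
    (h.differentiableOn_volterraTerm hU hι hv hσ hΦ hg) hU
    fun n z hz => h.norm_volterraTerm_le n (ι z) (hι hz)

end Holomorphic

section Orbit

theorem hasDerivAt_integral_Ioi {f : ℝ → ℂ} {Y y : ℝ} (hf : IntegrableOn f (Ioi Y))
    (hc : ContinuousOn f (Ioi Y)) (hy : Y < y) :
    HasDerivAt (fun y => ∫ s in Ioi y, f s) (-f y) y := by
  have hfy : ContinuousAt f y := hc.continuousAt (Ioi_mem_nhds hy)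
  have hd : HasDerivAt (fun y => ∫ s in Y..y, f s) (f y) y :=
    intervalIntegral.integral_hasDerivAt_right
      ((intervalIntegrable_iff_integrableOn_Ioc_of_le hy.le).2 (hf.mono_set Ioc_subset_Ioi_self))
      (hc.stronglyMeasurableAtFilter isOpen_Ioi y hy) hfy
  refine (hd.const_sub (∫ s in Ioi Y, f s)).congr_of_eventuallyEq ?_
  filter_upwards [Ioi_mem_nhds hy] with t ht
  rw [← intervalIntegral.integral_Ioi_sub_Ioi hf (le_of_lt ht), sub_sub_cancel]

theorem integral_Ioi_add_left (f : ℝ → ℂ) (y : ℝ) :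
    ∫ s in Ioi 0, f (y + s) = ∫ s in Ioi y, f s := by
  simpa using (measurePreserving_add_left volume y).setIntegral_preimage_emb
    (measurableEmbedding_addLeft y) f (Ioi y)

/-- The curve `γ`, defined on `[Y, ∞)`, is an orbit of the flow `σ` inside `D`. -/
structure IsOrbit {X : Type*} [TopologicalSpace X] (σ : ℝ → X → X) (γ : ℝ → X) (Y : ℝ)
    (D : Set X) : Prop where
  continuousOn : ContinuousOn γ (Ici Y)
  mapsTo : MapsTo γ (Ici Y) D
  flow_eq : ∀ y ∈ Ici Y, ∀ s ∈ Ioi (0 : ℝ), σ s (γ y) = γ (y + s)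

/-- The part of the Volterra integral that carries the exponential. It measures the failure of
`m` to be constant along the flow. -/
noncomputable def volterraRemainder {X : Type*} (σ : ℝ → X → X) (Φ g : X → ℂ) (x : X) : ℂ :=
  ∫ s in Ioi (0 : ℝ), exp (2 * (Φ (σ s x) - Φ x)) *
    (g (σ s x) * volterraSolution σ Φ g (σ s x))

variable {X : Type*} [TopologicalSpace X] {σ : ℝ → X → X} {Φ g : X → ℂ} {D : Set X} {G : ℝ → ℝ}
  {γ : ℝ → X} {x : X} {Y y : ℝ} {q : ℂ}

theorem IsOrbit.mono (hγ : IsOrbit σ γ Y D) (hy : y ∈ Ici Y) : IsOrbit σ γ y D where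
  continuousOn := hγ.continuousOn.mono (Ici_subset_Ici.2 hy)
  mapsTo := hγ.mapsTo.mono_left (Ici_subset_Ici.2 hy)
  flow_eq t ht := hγ.flow_eq t (Ici_subset_Ici.2 hy ht)

theorem IsOrbit.integral_flow (hγ : IsOrbit σ γ Y D) (hy : y ∈ Ici Y) (F : X → ℂ) :
    ∫ s in Ioi (0 : ℝ), F (σ s (γ y)) = ∫ s in Ioi y, F (γ s) := by
  rw [← integral_Ioi_add_left (fun s => F (γ s)) y]
  exact setIntegral_congr_fun measurableSet_Ioi fun s hs => congrArg F (hγ.flow_eq y hy s hs)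

namespace IsVolterraDatum

theorem norm_exp_source_le (h : IsVolterraDatum σ Φ g D G) (hx : x ∈ D) {s : ℝ}
    (hs : s ∈ Ioi (0 : ℝ)) :
    ‖exp (2 * (Φ (σ s x) - Φ x)) * (g (σ s x) * volterraSolution σ Φ g (σ s x))‖ ≤ 2 * G s := by
  have hexp : ‖exp (2 * (Φ (σ s x) - Φ x))‖ ≤ 1 := by
    have := h.re_phase_le x hx s hs
    rw [norm_exp, Real.exp_le_one_iff]
    simp only [mul_re, re_ofNat, sub_re, im_ofNat, sub_im, zero_mul, sub_zero]
    linarith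
  have hm := h.norm_volterraSolution_le (h.mapsTo s hs hx)
  have hg := h.norm_error_le x hx s hs
  calc _ = ‖exp (2 * (Φ (σ s x) - Φ x))‖ *
        (‖g (σ s x)‖ * ‖volterraSolution σ Φ g (σ s x)‖) := by rw [norm_mul, norm_mul]
    _ ≤ 1 * (G s * 2) := by gcongr; exact (norm_nonneg _).trans hg
    _ = 2 * G s := by ring

theorem norm_volterraRemainder_le (h : IsVolterraDatum σ Φ g D G) (hx : x ∈ D) :
    ‖volterraRemainder σ Φ g x‖ ≤ 1 := by
  have hint := norm_integral_le_of_norm_le (h.integrableOn.const_mul 2)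
    (ae_restrict_of_forall_mem measurableSet_Ioi fun s hs => h.norm_exp_source_le hx hs)
  rw [integral_const_mul] at hint
  exact hint.trans (by linarith [h.integral_le])

variable [FirstCountableTopology X]

theorem continuousOn_volterraRemainder (h : IsVolterraDatum σ Φ g D G) :
    ContinuousOn (volterraRemainder σ Φ g) D := by
  have hcont : ContinuousOn (fun p : X × ℝ => exp (2 * (Φ (σ p.2 p.1) - Φ p.1)) *
      (g (σ p.2 p.1) * volterraSolution σ Φ g (σ p.2 p.1))) (D ×ˢ Ioi 0) :=
    h.continuousOn_exp_phase.mul ((h.continuousOn_error.mul h.continuousOn_volterraSolution).comp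
      h.continuousOn_flow h.mapsTo_flow)
  refine continuousOn_of_dominated (fun x hx => (hcont.comp (Continuous.prodMk_right x).continuousOn
      fun _ hs => ⟨hx, hs⟩).aestronglyMeasurable measurableSet_Ioi)
    (fun x hx => ae_restrict_of_forall_mem measurableSet_Ioi fun s hs =>
      h.norm_exp_source_le hx hs) (h.integrableOn.const_mul 2)
    (ae_restrict_of_forall_mem measurableSet_Ioi fun s hs => ?_)
  have hslice : ContinuousOn (fun x => (x, s)) D := (Continuous.prodMk_left s).continuousOn
  have hcomp := hcont.comp hslice fun _ hx => ⟨hx, hs⟩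
  exact hcomp

theorem continuousOn_source (h : IsVolterraDatum σ Φ g D G) (hγ : IsOrbit σ γ Y D) :
    ContinuousOn (fun s => g (γ s) * volterraSolution σ Φ g (γ s)) (Ici Y) :=
  (h.continuousOn_error.mul h.continuousOn_volterraSolution).comp hγ.continuousOn hγ.mapsTo

theorem integrableOn_source (h : IsVolterraDatum σ Φ g D G) (hγ : IsOrbit σ γ Y D) :
    IntegrableOn (fun s => g (γ s) * volterraSolution σ Φ g (γ s)) (Ioi Y) := by
  have hG : IntegrableOn (fun s => 2 * G (s - Y)) (Ioi Y) := by
    have := ((measurePreserving_sub_right volume Y).integrableOn_comp_preimage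
      (measurableEmbedding_subRight Y)).2 (h.integrableOn.const_mul 2)
    simpa [Function.comp_def] using this
  refine hG.mono' (((h.continuousOn_source hγ).mono Ioi_subset_Ici_self).aestronglyMeasurable
    measurableSet_Ioi) (ae_restrict_of_forall_mem measurableSet_Ioi fun s hs => ?_)
  have hs' : s - Y ∈ Ioi (0 : ℝ) := mem_Ioi.2 (sub_pos.2 hs)
  have hγY := hγ.mapsTo (mem_Ici.2 le_rfl)
  have hg := h.norm_error_le (γ Y) hγY (s - Y) hs'
  rw [hγ.flow_eq Y (mem_Ici.2 le_rfl) _ hs', add_sub_cancel] at hg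
  have hm := h.norm_volterraSolution_le (hγ.mapsTo (mem_Ici_of_Ioi hs))
  rw [norm_mul, mul_comm]
  gcongr

theorem integrableOn_exp_source (h : IsVolterraDatum σ Φ g D G) (hγ : IsOrbit σ γ Y D) :
    IntegrableOn (fun s => exp (2 * (Φ (γ s) - Φ (γ Y))) *
      (g (γ s) * volterraSolution σ Φ g (γ s))) (Ioi Y) := by
  have hΦ : ContinuousOn (fun s => exp (2 * (Φ (γ s) - Φ (γ Y)))) (Ioi Y) :=
    (continuousOn_const.mul (((h.continuousOn_phase.comp hγ.continuousOn hγ.mapsTo).mono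
      Ioi_subset_Ici_self).sub continuousOn_const)).cexp
  refine (h.integrableOn_source hγ).norm.mono'
    ((hΦ.mul ((h.continuousOn_source hγ).mono Ioi_subset_Ici_self)).aestronglyMeasurable
      measurableSet_Ioi) (ae_restrict_of_forall_mem measurableSet_Ioi fun s hs => ?_)
  have hre := h.re_phase_le (γ Y) (hγ.mapsTo (mem_Ici.2 le_rfl)) (s - Y) (mem_Ioi.2 (sub_pos.2 hs))
  rw [hγ.flow_eq Y (mem_Ici.2 le_rfl) _ (mem_Ioi.2 (sub_pos.2 hs)), add_sub_cancel] at hre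
  rw [norm_mul]
  refine mul_le_of_le_one_left (norm_nonneg _) ?_
  rw [norm_exp, Real.exp_le_one_iff]
  simp only [mul_re, re_ofNat, sub_re, im_ofNat, sub_im, zero_mul, sub_zero]
  linarith

theorem hasDerivAt_volterraRemainder (h : IsVolterraDatum σ Φ g D G) (hγ : IsOrbit σ γ Y D)
    (hy : Y < y) (hq : HasDerivAt (Φ ∘ γ) q y) :
    HasDerivAt (volterraRemainder σ Φ g ∘ γ)
      (-2 * q * volterraRemainder σ Φ g (γ y) - g (γ y) * volterraSolution σ Φ g (γ y)) y := by
  set f : ℝ → ℂ := fun s => g (γ s) * volterraSolution σ Φ g (γ s)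
  set E : ℝ → ℂ := fun s => exp (2 * (Φ (γ s) - Φ (γ Y)))
  have hΦ := h.continuousOn_phase.comp hγ.continuousOn hγ.mapsTo
  have hcont : ContinuousOn (fun s => E s * f s) (Ioi Y) :=
    ((continuousOn_const.mul (hΦ.sub continuousOn_const)).cexp.mul
      (h.continuousOn_source hγ)).mono Ioi_subset_Ici_self
  have heq : ∀ t ∈ Ici Y, volterraRemainder σ Φ g (γ t) = (E t)⁻¹ * ∫ s in Ioi t, E s * f s := by
    intro t ht
    rw [volterraRemainder, hγ.integral_flow ht (fun x => exp (2 * (Φ x - Φ (γ t))) *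
      (g x * volterraSolution σ Φ g x)), ← integral_const_mul]
    congr 1 with s
    simp only [E, f, ← mul_assoc, ← Complex.exp_neg, ← Complex.exp_add]
    ring_nf
  have hE : HasDerivAt E (E y * (2 * q)) y := ((hq.sub_const _).const_mul 2).cexp
  have hEy : E y ≠ 0 := exp_ne_zero _
  refine ((hE.inv hEy).mul (hasDerivAt_integral_Ioi (f := fun s => E s * f s)
    (h.integrableOn_exp_source hγ) hcont hy)).congr_of_eventuallyEq ?_ |>.congr_deriv ?_
  · filter_upwards [Ioi_mem_nhds hy] with t ht using heq t (mem_Ici_of_Ioi ht)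
  · rw [heq y (mem_Ici_of_Ioi hy)]
    change _ = -2 * q * _ - f y
    simp only [Pi.inv_apply]
    generalize E y = e at hEy ⊢
    generalize ∫ s in Ioi y, E s * f s = I
    field_simp
    ring

theorem volterraSolution_eq_remainder (h : IsVolterraDatum σ Φ g D G) (hγ : IsOrbit σ γ Y D)
    (hy : y ∈ Ici Y) :
    volterraSolution σ Φ g (γ y) = 1 + (volterraRemainder σ Φ g (γ y) -
      ∫ s in Ioi y, g (γ s) * volterraSolution σ Φ g (γ s)) := by
  have hγ' := hγ.mono hy
  rw [h.volterraSolution_eq (hγ.mapsTo hy), volterraRemainder,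
    hγ.integral_flow hy (fun x => (exp (2 * (Φ x - Φ (γ y))) - 1) *
      (g x * volterraSolution σ Φ g x)),
    hγ.integral_flow hy (fun x => exp (2 * (Φ x - Φ (γ y))) *
      (g x * volterraSolution σ Φ g x)),
    ← integral_sub (h.integrableOn_exp_source hγ') (h.integrableOn_source hγ')]
  simp only [sub_mul, one_mul]

theorem hasDerivAt_volterraSolution (h : IsVolterraDatum σ Φ g D G) (hγ : IsOrbit σ γ Y D)
    (hy : Y < y) (hq : HasDerivAt (Φ ∘ γ) q y) :
    HasDerivAt (volterraSolution σ Φ g ∘ γ) (-2 * q * volterraRemainder σ Φ g (γ y)) y := by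
  refine (((h.hasDerivAt_volterraRemainder hγ hy hq).sub (hasDerivAt_integral_Ioi
    (h.integrableOn_source hγ) ((h.continuousOn_source hγ).mono Ioi_subset_Ici_self) hy)).const_add
    1).congr_of_eventuallyEq ?_ |>.congr_deriv (by ring)
  filter_upwards [Ioi_mem_nhds hy] with t ht
    using h.volterraSolution_eq_remainder hγ (mem_Ici_of_Ioi ht)

end IsVolterraDatum

end Orbit

section LiouvilleGreen

variable {X : Type*} {σ : ℝ → X → X} {Φ g ρ ρ' : X → ℂ} {D : Set X} {G : ℝ → ℝ} {γ : ℝ → X}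
  {Y y : ℝ} {κ : ℂ}

/-- The Liouville–Green approximation `ρ exp Φ`, corrected by the solution of the Volterra
equation. -/
noncomputable def liouvilleGreen (σ : ℝ → X → X) (Φ g ρ : X → ℂ) (x : X) : ℂ :=
  ρ x * exp (Φ x) * volterraSolution σ Φ g x

/-- The derivative of `liouvilleGreen σ Φ g ρ` along orbits of `σ` on which `Φ` has the derivative
`κ / ρ ^ 2` and `ρ` has the derivative `ρ'`. -/
noncomputable def liouvilleGreenDeriv (σ : ℝ → X → X) (Φ g ρ ρ' : X → ℂ) (κ : ℂ) (x : X) : ℂ :=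
  exp (Φ x) * (ρ' x * volterraSolution σ Φ g x +
    κ / ρ x * (volterraSolution σ Φ g x - 2 * volterraRemainder σ Φ g x))

variable [TopologicalSpace X] [FirstCountableTopology X]

namespace IsVolterraDatum

theorem hasDerivAt_liouvilleGreen (h : IsVolterraDatum σ Φ g D G) (hγ : IsOrbit σ γ Y D)
    (hy : Y < y) (hρ₀ : ρ (γ y) ≠ 0) (hΦ : HasDerivAt (Φ ∘ γ) (κ / ρ (γ y) ^ 2) y)
    (hρ : HasDerivAt (ρ ∘ γ) (ρ' (γ y)) y) :
    HasDerivAt (liouvilleGreen σ Φ g ρ ∘ γ) (liouvilleGreenDeriv σ Φ g ρ ρ' κ (γ y)) y := by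
  have hm := h.hasDerivAt_volterraSolution hγ hy hΦ
  refine ((hρ.mul hΦ.cexp).mul hm).congr_deriv ?_
  simp only [Pi.mul_apply, Function.comp_apply, liouvilleGreenDeriv]
  field_simp
  ring

/-- The condition on `g` says that it is the relative defect of `ρ exp Φ` as a solution of
`u'' = V u`. -/
theorem hasDerivAt_liouvilleGreenDeriv (h : IsVolterraDatum σ Φ g D G) (hγ : IsOrbit σ γ Y D)
    (hy : Y < y) (hρ₀ : ρ (γ y) ≠ 0) (hΦ : HasDerivAt (Φ ∘ γ) (κ / ρ (γ y) ^ 2) y)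
    (hρ : HasDerivAt (ρ ∘ γ) (ρ' (γ y)) y) {ρ'' V : ℂ} (hρ' : HasDerivAt (ρ' ∘ γ) ρ'' y)
    (hg : 2 * (κ / ρ (γ y) ^ 2) * g (γ y) * ρ (γ y) =
      (V - (κ / ρ (γ y) ^ 2) ^ 2) * ρ (γ y) - ρ'') :
    HasDerivAt (liouvilleGreenDeriv σ Φ g ρ ρ' κ ∘ γ) (V * liouvilleGreen σ Φ g ρ (γ y)) y := by
  have hm := h.hasDerivAt_volterraSolution hγ hy hΦ
  have hB := h.hasDerivAt_volterraRemainder hγ hy hΦ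
  have hinv := (hρ.inv hρ₀).const_mul κ
  refine (hΦ.cexp.mul ((hρ'.mul hm).add (hinv.mul (hm.sub (hB.const_mul 2))))).congr_deriv ?_
  obtain rfl : ρ'' = V * ρ (γ y) - (κ / ρ (γ y) ^ 2) ^ 2 * ρ (γ y) -
      2 * (κ / ρ (γ y) ^ 2) * g (γ y) * ρ (γ y) := by rw [hg]; ring
  simp only [Pi.mul_apply, Pi.add_apply, Pi.sub_apply, Pi.inv_apply, Function.comp_apply,
    liouvilleGreen]
  field_simp
  ring

end IsVolterraDatum

end LiouvilleGreen

/-! ### The Liouville–Green approximation far out in the first quadrant -/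

section FourthRoot

variable {x : ℂ}

/-- The principal fourth root. -/
noncomputable def fourthRoot (x : ℂ) : ℂ := exp (log x / 4)

theorem fourthRoot_ne_zero (x : ℂ) : fourthRoot x ≠ 0 := exp_ne_zero _

theorem fourthRoot_pow_four (hx : x ≠ 0) : fourthRoot x ^ 4 = x := by
  rw [fourthRoot, ← exp_nat_mul, Nat.cast_ofNat, mul_div_cancel₀ _ (by norm_num), exp_log hx]

theorem fourthRoot_pow_eight (hx : x ≠ 0) : fourthRoot x ^ 8 = x ^ 2 := by
  rw [show fourthRoot x ^ 8 = (fourthRoot x ^ 4) ^ 2 by ring, fourthRoot_pow_four hx]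

theorem norm_fourthRoot_pow_four (hx : x ≠ 0) : ‖fourthRoot x‖ ^ 4 = ‖x‖ := by
  rw [← norm_pow, fourthRoot_pow_four hx]

theorem hasDerivAt_fourthRoot (hx : x ∈ slitPlane) :
    HasDerivAt fourthRoot (1 / (4 * fourthRoot x ^ 3)) x := by
  have h₀ := fourthRoot_ne_zero x
  have hx₀ := slitPlane_ne_zero hx
  refine ((hasDerivAt_log hx).div_const 4).cexp.congr_deriv ?_
  change fourthRoot x * (x⁻¹ / 4) = _
  field_simp
  exact fourthRoot_pow_four hx₀

theorem fourthRoot_sq (x : ℂ) : fourthRoot x ^ 2 = exp (log x / 2) := by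
  rw [fourthRoot, ← exp_nat_mul]
  congr 1
  push_cast
  ring

theorem im_log_div_two (x : ℂ) : (log x / 2).im = arg x / 2 := by
  rw [← ofReal_ofNat, div_ofReal_im, log_im]

theorem re_fourthRoot_sq_pos (hr : 0 ≤ x.re) : 0 < (fourthRoot x ^ 2).re := by
  have hle : |arg x| ≤ Real.pi / 2 := abs_arg_le_pi_div_two_iff.2 hr
  have hpi := Real.pi_pos
  rw [fourthRoot_sq, exp_re, im_log_div_two]
  exact mul_pos (Real.exp_pos _) (Real.cos_pos_of_mem_Ioo ⟨by linarith [(abs_le.1 hle).1],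
    by linarith [(abs_le.1 hle).2]⟩)

theorem im_fourthRoot_sq_nonneg (hi : 0 ≤ x.im) : 0 ≤ (fourthRoot x ^ 2).im := by
  have hpos := arg_nonneg_iff.2 hi
  rw [fourthRoot_sq, exp_im, im_log_div_two]
  exact mul_nonneg (Real.exp_pos _).le
    (Real.sin_nonneg_of_nonneg_of_le_pi (by linarith) (by linarith [arg_le_pi x]))

end FourthRoot

section Approximant

/-- A primitive of `(x² - β)² / x ^ (5/2)`, which agrees with `√(x³ - 4βx + c)` up to
`O(x ^ (-3/2))` and has a rational square root up to a power of `x`. -/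
noncomputable def phase (β : ℝ) (x : ℂ) : ℂ :=
  2 / 5 * fourthRoot x ^ 10 - 4 * β * fourthRoot x ^ 2 - 2 / 3 * β ^ 2 * (fourthRoot x ^ 6)⁻¹

/-- The amplitude of the approximate solution, chosen so that its inverse square is the derivative
of the phase. -/
noncomputable def amplitude (β : ℝ) (x : ℂ) : ℂ := fourthRoot x ^ 5 / (fourthRoot x ^ 8 - β)

/-- The derivative of the amplitude. -/
noncomputable def amplitudeDeriv (β : ℝ) (x : ℂ) : ℂ :=
  fourthRoot x * (-3 * fourthRoot x ^ 8 - 5 * β) / (4 * (fourthRoot x ^ 8 - β) ^ 2)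

/-- The second derivative of the amplitude. -/
noncomputable def amplitudeDeriv₂ (β : ℝ) (x : ℂ) : ℂ :=
  (21 * fourthRoot x ^ 16 + 102 * β * fourthRoot x ^ 8 + 5 * β ^ 2) /
    (16 * fourthRoot x ^ 3 * (fourthRoot x ^ 8 - β) ^ 3)

/-- The defect `(V v - v'') / v` of the approximate solution `v = amplitude * exp phase`. -/
noncomputable def defect (β c : ℝ) (x : ℂ) : ℂ :=
  c - 6 * β ^ 2 / x + 4 * β ^ 3 / x ^ 3 - β ^ 4 / x ^ 5
    - (21 * x ^ 4 + 102 * β * x ^ 2 + 5 * β ^ 2) / (16 * x ^ 2 * (x ^ 2 - β) ^ 2)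

variable {β : ℝ} {x : ℂ}

theorem hasDerivAt_phase (hx : x ∈ slitPlane) :
    HasDerivAt (phase β) (1 / amplitude β x ^ 2) x := by
  have h₀ := fourthRoot_ne_zero x
  have h := hasDerivAt_fourthRoot hx
  refine ((((h.pow 10).const_mul (2 / 5)).sub ((h.pow 2).const_mul (4 * (β : ℂ)))).sub
    (((h.pow 6).inv (pow_ne_zero 6 h₀)).const_mul (2 / 3 * (β : ℂ) ^ 2))).congr_deriv ?_
  simp only [amplitude, Pi.pow_apply]
  field_simp
  push_cast
  ring

theorem amplitude_ne_zero (hD : fourthRoot x ^ 8 - β ≠ 0) : amplitude β x ≠ 0 :=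
  div_ne_zero (pow_ne_zero _ (fourthRoot_ne_zero x)) hD

theorem hasDerivAt_amplitude (hx : x ∈ slitPlane) (hD : fourthRoot x ^ 8 - β ≠ 0) :
    HasDerivAt (amplitude β) (amplitudeDeriv β x) x := by
  have h₀ := fourthRoot_ne_zero x
  have h := hasDerivAt_fourthRoot hx
  refine ((h.pow 5).div ((h.pow 8).sub_const (β : ℂ)) hD).congr_deriv ?_
  simp only [amplitudeDeriv, Pi.pow_apply]
  field_simp
  push_cast
  ring

theorem hasDerivAt_amplitudeDeriv (hx : x ∈ slitPlane) (hD : fourthRoot x ^ 8 - β ≠ 0) :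
    HasDerivAt (amplitudeDeriv β) (amplitudeDeriv₂ β x) x := by
  have h₀ := fourthRoot_ne_zero x
  have h := hasDerivAt_fourthRoot hx
  refine ((h.mul (((h.pow 8).const_mul (-3)).sub_const (5 * (β : ℂ)))).div
    ((((h.pow 8).sub_const (β : ℂ)).pow 2).const_mul 4)
      (mul_ne_zero (by norm_num) (pow_ne_zero 2 hD))).congr_deriv ?_
  simp only [amplitudeDeriv₂, Pi.pow_apply, Pi.mul_apply]
  field_simp
  push_cast
  ring

theorem defect_mul_amplitude (c : ℝ) (hx : x ≠ 0) (hD : fourthRoot x ^ 8 - β ≠ 0) :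
    defect β c x * amplitude β x =
      (potential β c x - 1 / amplitude β x ^ 4) * amplitude β x - amplitudeDeriv₂ β x := by
  have h₀ := fourthRoot_ne_zero x
  have h₄ := fourthRoot_pow_four hx
  simp only [defect, amplitude, amplitudeDeriv₂, potential]
  generalize fourthRoot x = h at *
  subst h₄
  rw [show (h ^ 4) ^ 2 - (β : ℂ) = h ^ 8 - β by ring]
  field_simp
  ring

end Approximant

/-- The point `x` lies in the closed first quadrant, so far out that the error terms of the
Liouville–Green approximation with parameter `β ≥ 0` are small. -/
structure IsFar (β : ℝ) (x : ℂ) : Prop where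
  nonneg : 0 ≤ β
  re_nonneg : 0 ≤ x.re
  im_nonneg : 0 ≤ x.im
  le_re_add_im : 200 * (1 + β) ^ 2 ≤ x.re + x.im

namespace IsFar

variable {β c : ℝ} {x : ℂ}

theorem le_norm (h : IsFar β x) : 100 * (1 + β) ^ 2 ≤ ‖x‖ := by
  linarith [re_le_norm x, im_le_norm x, h.le_re_add_im]

theorem one_le_norm (h : IsFar β x) : 1 ≤ ‖x‖ := by
  nlinarith [h.le_norm, h.nonneg]

theorem beta_le_norm (h : IsFar β x) : 100 * β ≤ ‖x‖ := by
  nlinarith [h.le_norm, h.nonneg]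

theorem beta_sq_le_norm (h : IsFar β x) : 100 * β ^ 2 ≤ ‖x‖ := by
  nlinarith [h.le_norm, h.nonneg]

theorem ne_zero (h : IsFar β x) : x ≠ 0 := norm_pos_iff.1 (zero_lt_one.trans_le h.one_le_norm)

theorem mem_slitPlane (h : IsFar β x) : x ∈ slitPlane := by
  refine mem_slitPlane_iff.2 (h.re_nonneg.lt_or_eq.imp_right fun hre him => h.ne_zero ?_)
  exact Complex.ext hre.symm him

theorem norm_beta (h : IsFar β x) : ‖(β : ℂ)‖ = β := by
  rw [norm_real, Real.norm_of_nonneg h.nonneg]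

theorem le_norm_sq_sub (h : IsFar β x) : 3 / 4 * ‖x‖ ^ 2 ≤ ‖x ^ 2 - β‖ := by
  have hsub := norm_sub_norm_le (x ^ 2) (β : ℂ)
  rw [norm_pow, h.norm_beta] at hsub
  nlinarith [h.beta_le_norm, h.one_le_norm, h.nonneg]

theorem norm_sq_sub_le (h : IsFar β x) : ‖x ^ 2 - β‖ ≤ 5 / 4 * ‖x‖ ^ 2 := by
  have hsub := norm_sub_le (x ^ 2) (β : ℂ)
  rw [norm_pow, h.norm_beta] at hsub
  nlinarith [h.beta_le_norm, h.one_le_norm, h.nonneg]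

theorem sq_sub_ne_zero (h : IsFar β x) : x ^ 2 - β ≠ 0 :=
  norm_pos_iff.1 (lt_of_lt_of_le (by nlinarith [h.one_le_norm]) h.le_norm_sq_sub)

theorem fourthRoot_sub_ne_zero (h : IsFar β x) : fourthRoot x ^ 8 - β ≠ 0 := by
  rw [fourthRoot_pow_eight h.ne_zero]
  exact h.sq_sub_ne_zero

theorem one_le_norm_fourthRoot (h : IsFar β x) : 1 ≤ ‖fourthRoot x‖ := by
  rw [← one_le_pow_iff_of_nonneg (norm_nonneg _) four_ne_zero, norm_fourthRoot_pow_four h.ne_zero]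
  exact h.one_le_norm

theorem norm_defect_rational_le (h : IsFar β x) :
    ‖(21 * x ^ 4 + 102 * β * x ^ 2 + 5 * β ^ 2) / (16 * x ^ 2 * (x ^ 2 - β) ^ 2)‖ ≤ 1 / 10 := by
  have hx : 100 ≤ ‖x‖ := by nlinarith [h.le_norm, h.nonneg]
  have hβ := h.nonneg
  have hβx : β ≤ ‖x‖ ^ 2 := by nlinarith [h.beta_le_norm]
  have hnum : ‖21 * x ^ 4 + 102 * β * x ^ 2 + 5 * β ^ 2‖ ≤ 128 * ‖x‖ ^ 4 := by
    refine norm_add₃_le.trans ?_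
    simp only [norm_mul, norm_pow, h.norm_beta, RCLike.norm_ofNat]
    nlinarith
  have hden : 9 * ‖x‖ ^ 6 ≤ ‖16 * x ^ 2 * (x ^ 2 - β) ^ 2‖ := by
    simp only [norm_mul, norm_pow, RCLike.norm_ofNat]
    calc 9 * ‖x‖ ^ 6 = 16 * ‖x‖ ^ 2 * (3 / 4 * ‖x‖ ^ 2) ^ 2 := by ring
      _ ≤ _ := by gcongr; exact h.le_norm_sq_sub
  rw [norm_div, div_le_iff₀ (lt_of_lt_of_le (by positivity) hden)]
  have hpow : 100 ^ 2 * ‖x‖ ^ 4 ≤ ‖x‖ ^ 2 * ‖x‖ ^ 4 := by gcongr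
  have h₄ := pow_nonneg (norm_nonneg x) 4
  linarith [show ‖x‖ ^ 2 * ‖x‖ ^ 4 = ‖x‖ ^ 6 by ring]

theorem norm_defect_le (h : IsFar β x) (hc : 0 ≤ c) : ‖defect β c x‖ ≤ c + 1 := by
  have hx : 0 < ‖x‖ := zero_lt_one.trans_le h.one_le_norm
  have hβ := h.nonneg
  have hβx : β / ‖x‖ ≤ 1 / 100 := by rw [div_le_iff₀ hx]; linarith [h.beta_le_norm]
  have h₁ : ‖6 * (β : ℂ) ^ 2 / x‖ ≤ 1 / 10 := by
    rw [norm_div, norm_mul, norm_pow, h.norm_beta, RCLike.norm_ofNat, div_le_iff₀ hx]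
    linarith [h.beta_sq_le_norm]
  have h₂ : ‖4 * (β : ℂ) ^ 3 / x ^ 3‖ ≤ 1 / 10 := by
    rw [mul_div_assoc, ← div_pow, norm_mul, norm_pow, norm_div, h.norm_beta, RCLike.norm_ofNat]
    have : (β / ‖x‖) ^ 3 ≤ (1 / 100) ^ 3 := by gcongr
    linarith
  have h₃ : ‖(β : ℂ) ^ 4 / x ^ 5‖ ≤ 1 / 10 := by
    rw [pow_succ x, ← div_div, ← div_pow, norm_div, norm_pow, norm_div, h.norm_beta,
      div_le_iff₀ hx]
    have : (β / ‖x‖) ^ 4 ≤ (1 / 100) ^ 4 := by gcongr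
    linarith [h.one_le_norm]
  have h₄ := h.norm_defect_rational_le
  have hc' : ‖(c : ℂ)‖ = c := by rw [norm_real, Real.norm_of_nonneg hc]
  refine (norm_sub_le _ _).trans ?_
  have s₁ := norm_sub_le ((c : ℂ) - 6 * β ^ 2 / x + 4 * β ^ 3 / x ^ 3) (β ^ 4 / x ^ 5)
  have s₂ := norm_add_le ((c : ℂ) - 6 * β ^ 2 / x) (4 * β ^ 3 / x ^ 3)
  have s₃ := norm_sub_le (c : ℂ) (6 * β ^ 2 / x)
  linarith

theorem norm_amplitude_sq_le (h : IsFar β x) : ‖amplitude β x‖ ^ 2 ≤ 2 / ‖fourthRoot x‖ ^ 6 := by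
  have hr : 0 < ‖fourthRoot x‖ := zero_lt_one.trans_le h.one_le_norm_fourthRoot
  have hD := h.le_norm_sq_sub
  rw [← norm_fourthRoot_pow_four h.ne_zero] at hD
  have hD₀ : 0 < ‖x ^ 2 - (β : ℂ)‖ := lt_of_lt_of_le (by positivity) hD
  rw [amplitude, fourthRoot_pow_eight h.ne_zero, norm_div, norm_pow, div_pow,
    div_le_div_iff₀ (by positivity) (by positivity)]
  calc _ = ‖fourthRoot x‖ ^ 16 := by ring
    _ ≤ 2 * (3 / 4 * (‖fourthRoot x‖ ^ 4) ^ 2) ^ 2 := by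
      ring_nf; linarith [pow_pos hr 16]
    _ ≤ _ := by gcongr

theorem norm_amplitude_le (h : IsFar β x) : ‖amplitude β x‖ ≤ 2 := by
  have hle : 2 / ‖fourthRoot x‖ ^ 6 ≤ 2 :=
    div_le_self zero_le_two (one_le_pow₀ h.one_le_norm_fourthRoot)
  nlinarith [h.norm_amplitude_sq_le, norm_nonneg (amplitude β x)]

theorem norm_inv_amplitude_le (h : IsFar β x) : ‖1 / amplitude β x‖ ≤ 2 * ‖x‖ := by
  have hr := h.one_le_norm_fourthRoot
  have hr₀ : 0 < ‖fourthRoot x‖ := zero_lt_one.trans_le hr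
  rw [amplitude, fourthRoot_pow_eight h.ne_zero, one_div_div, norm_div, norm_pow,
    div_le_iff₀ (by positivity)]
  refine h.norm_sq_sub_le.trans ?_
  rw [← norm_fourthRoot_pow_four h.ne_zero]
  have hpow : ‖fourthRoot x‖ ^ 8 ≤ ‖fourthRoot x‖ ^ 9 := pow_le_pow_right₀ hr (by norm_num)
  nlinarith [pow_pos hr₀ 9]

theorem norm_amplitudeDeriv_le (h : IsFar β x) : ‖amplitudeDeriv β x‖ ≤ 8 * ‖x‖ := by
  have hx := h.one_le_norm
  have hroot : ‖fourthRoot x‖ ≤ ‖x‖ := by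
    rw [← norm_fourthRoot_pow_four h.ne_zero]
    exact le_self_pow₀ h.one_le_norm_fourthRoot four_ne_zero
  have hnum : ‖-3 * x ^ 2 - 5 * β‖ ≤ 8 * ‖x‖ ^ 2 := by
    refine (norm_sub_le _ _).trans ?_
    simp only [norm_mul, norm_neg, norm_pow, h.norm_beta, RCLike.norm_ofNat]
    nlinarith [h.beta_le_norm]
  have hden : 9 / 4 * ‖x‖ ^ 4 ≤ ‖4 * (x ^ 2 - β) ^ 2‖ := by
    simp only [norm_mul, norm_pow, RCLike.norm_ofNat]
    calc 9 / 4 * ‖x‖ ^ 4 = 4 * (3 / 4 * ‖x‖ ^ 2) ^ 2 := by ring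
      _ ≤ _ := by gcongr; exact h.le_norm_sq_sub
  rw [amplitudeDeriv, fourthRoot_pow_eight h.ne_zero, norm_div, norm_mul,
    div_le_iff₀ (lt_of_lt_of_le (by positivity) hden)]
  calc ‖fourthRoot x‖ * ‖-3 * x ^ 2 - 5 * β‖ ≤ ‖x‖ * (8 * ‖x‖ ^ 2) := by gcongr
    _ = 8 * ‖x‖ * ‖x‖ ^ 2 := by ring
    _ ≤ 8 * ‖x‖ * (9 / 4 * ‖x‖ ^ 4) := by
      gcongr
      linarith [pow_le_pow_right₀ hx (show 2 ≤ 4 by norm_num), pow_pos (zero_lt_one.trans_le hx) 4]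
    _ ≤ _ := by gcongr

end IsFar

theorem abs_im_pow_succ_le (w : ℂ) (n : ℕ) :
    |(w ^ (n + 1)).im| ≤ (n + 1) * ‖w‖ ^ n * |w.im| := by
  induction n with
  | zero => simp
  | succ n ih =>
    rw [pow_succ, mul_im]
    have hre := abs_re_le_norm (w ^ (n + 1))
    rw [norm_pow] at hre
    calc _ ≤ |(w ^ (n + 1)).re| * |w.im| + |(w ^ (n + 1)).im| * |w.re| := by
          rw [← abs_mul, ← abs_mul]; exact abs_add_le _ _
      _ ≤ ‖w‖ ^ (n + 1) * |w.im| + (n + 1) * ‖w‖ ^ n * |w.im| * ‖w‖ := by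
          gcongr; exact abs_re_le_norm w
      _ = _ := by push_cast; ring

theorem I_div_amplitude_sq (β : ℝ) (x : ℂ) :
    I / amplitude β x ^ 2 = I * (fourthRoot x ^ 2) ^ 3 - (2 * β : ℝ) * (I * (fourthRoot x ^ 2)⁻¹) +
      (β ^ 2 : ℝ) * (I * ((fourthRoot x ^ 2)⁻¹) ^ 5) := by
  have h₀ := fourthRoot_ne_zero x
  rw [amplitude]
  push_cast
  field_simp
  ring

theorem re_I_mul_cube_le {t : ℂ} {β : ℝ} (hβ : 0 ≤ β) (him : 0 ≤ t.im) (hre : t.im ^ 2 ≤ t.re ^ 2)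
    (ht : 1 ≤ ‖t‖ ^ 2) (htβ : 10 * β ^ 2 ≤ ‖t‖ ^ 2) :
    (I * t ^ 3 - (2 * β : ℝ) * (I * t⁻¹) + (β ^ 2 : ℝ) * (I * t⁻¹ ^ 5)).re ≤
      -(t.re ^ 2 * t.im) := by
  have ht₀ : 0 < ‖t‖ := by by_contra hcon; nlinarith [norm_nonneg t]
  have hN : ‖t‖ ^ 2 = t.re ^ 2 + t.im ^ 2 := by rw [← normSq_eq_norm_sq, normSq_apply]; ring
  have hinv : t⁻¹.im = -(t.im / ‖t‖ ^ 2) := by rw [inv_im, normSq_eq_norm_sq, neg_div]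
  have hcube : (t ^ 3).im = 3 * t.re ^ 2 * t.im - t.im ^ 3 := by
    simp only [pow_succ, pow_zero, one_mul, mul_im, mul_re]
    ring
  have hfive : -(t⁻¹ ^ 5).im ≤ 5 * (t.im / ‖t‖ ^ 6) := by
    refine (neg_le_abs _).trans ((abs_im_pow_succ_le t⁻¹ 4).trans_eq ?_)
    rw [hinv, abs_neg, abs_of_nonneg (by positivity), norm_inv]
    push_cast
    field_simp
    ring
  have hlast : β ^ 2 * (5 * (t.im / ‖t‖ ^ 6)) ≤ t.re ^ 2 * t.im := by
    rw [← mul_div_assoc, ← mul_div_assoc, div_le_iff₀ (by positivity)]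
    have h₆ : ‖t‖ ^ 2 ≤ ‖t‖ ^ 6 := by
      rw [show ‖t‖ ^ 6 = (‖t‖ ^ 2) ^ 3 by ring]
      exact le_self_pow₀ ht three_ne_zero
    have hre₁ : 1 / 2 ≤ t.re ^ 2 := by linarith
    calc β ^ 2 * (5 * t.im) = 1 / 2 * (10 * β ^ 2) * t.im := by ring
      _ ≤ t.re ^ 2 * ‖t‖ ^ 6 * t.im := by gcongr; exact htβ.trans h₆
      _ = _ := by ring
  have hmid : 0 ≤ 2 * β * (t.im / ‖t‖ ^ 2) := by positivity
  have hlast' := mul_le_mul_of_nonneg_left hfive (sq_nonneg β)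
  simp only [add_re, sub_re, re_ofReal_mul, I_mul_re, hcube, hinv]
  nlinarith

theorem IsFar.re_I_div_amplitude_sq_le {β : ℝ} {x : ℂ} (h : IsFar β x) :
    (I / amplitude β x ^ 2).re ≤ -(x.im * √x.im / 3) := by
  have him := im_fourthRoot_sq_nonneg h.im_nonneg
  have hre := re_fourthRoot_sq_pos h.re_nonneg
  have hnorm : ‖fourthRoot x ^ 2‖ ^ 2 = ‖x‖ := by
    rw [← norm_fourthRoot_pow_four h.ne_zero, norm_pow]; ring
  have hsq : (fourthRoot x ^ 2) ^ 2 = x := by rw [← pow_mul, fourthRoot_pow_four h.ne_zero]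
  rw [I_div_amplitude_sq]
  generalize fourthRoot x ^ 2 = t at *
  have hx_re : x.re = t.re ^ 2 - t.im ^ 2 := by rw [← hsq]; simp [pow_two]
  have hx_im : x.im = 2 * t.re * t.im := by
    simp only [← hsq, pow_two, mul_im]
    ring
  have hle := re_I_mul_cube_le h.nonneg him (by linarith [h.re_nonneg])
    (hnorm ▸ h.one_le_norm) (by linarith [h.beta_sq_le_norm, sq_nonneg β])
  have hsqrt : √x.im * (2 / 3) ≤ t.re := by
    have := Real.sq_sqrt h.im_nonneg
    nlinarith [sq_nonneg (t.re - t.im), Real.sqrt_nonneg x.im, h.re_nonneg]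
  have hprod : x.im * √x.im / 3 ≤ t.re ^ 2 * t.im := by
    rw [show t.re ^ 2 * t.im = x.im * t.re / 2 by rw [hx_im]; ring]
    nlinarith [h.im_nonneg]
  linarith

/-! ### The subdominant solutions -/

section VerticalLines

theorem hasDerivAt_vertical (r y : ℝ) : HasDerivAt (fun y : ℝ => (r + y * I : ℂ)) I y := by
  simpa using ((ofRealCLM.hasDerivAt (x := y)).mul_const I).const_add (r : ℂ)

theorem hasDerivAt_comp_vertical {f : ℂ → ℂ} {f' : ℂ} {r y : ℝ}
    (h : HasDerivAt f f' (r + y * I)) :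
    HasDerivAt (fun y : ℝ => f (r + y * I)) (f' * I) y :=
  h.comp y (hasDerivAt_vertical r y)

theorem isFar_vertical {β r y : ℝ} (hβ : 0 ≤ β) (hr : 0 ≤ r) (hy : 0 ≤ y)
    (h : 200 * (1 + β) ^ 2 ≤ r + y) : IsFar β (r + y * I) := by
  constructor <;> simpa

theorem antitoneOn_re_phase_add {β r Y K : ℝ} (hβ : 0 ≤ β) (hr : 0 ≤ r) (hY : 0 ≤ Y)
    (h : 200 * (1 + β) ^ 2 ≤ r + Y) (hK : 6 * K ≤ √Y) :
    AntitoneOn (fun y : ℝ => (phase β (r + y * I)).re + K * y ^ 2) (Ici Y) := by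
  have hfar : ∀ y ∈ Ici Y, IsFar β (r + y * I) := fun y hy =>
    isFar_vertical hβ hr (hY.trans hy) (h.trans (add_le_add_right hy r))
  have hd : ∀ y ∈ Ici Y, HasDerivAt (fun y : ℝ => (phase β (r + y * I)).re + K * y ^ 2)
      ((I / amplitude β (r + y * I) ^ 2).re + K * (2 * y)) y := by
    intro y hy
    have hre := reCLM.hasFDerivAt.comp_hasDerivAt y
      (hasDerivAt_comp_vertical (hasDerivAt_phase (β := β) (hfar y hy).mem_slitPlane))
    refine (hre.add ((hasDerivAt_pow 2 y).const_mul K)).congr_deriv ?_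
    rw [reCLM_apply, one_div_mul_eq_div]
    norm_num
  refine antitoneOn_of_deriv_nonpos (convex_Ici Y)
    (fun y hy => (hd y hy).continuousAt.continuousWithinAt)
    (fun y hy => (hd y (interior_subset hy)).differentiableAt.differentiableWithinAt)
    fun y hy => ?_
  replace hy : y ∈ Ici Y := interior_subset hy
  rw [(hd y hy).deriv]
  have hre := (hfar y hy).re_I_div_amplitude_sq_le
  simp only [add_im, ofReal_im, mul_im, ofReal_re, I_im, mul_one, I_re, mul_zero, add_zero,
    zero_add] at hre
  have hKy : 6 * K ≤ √y := hK.trans (Real.sqrt_le_sqrt hy)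
  linarith [mul_le_mul_of_nonneg_left hKy (hY.trans hy)]

theorem exp_phase_isBigO {β r K : ℝ} (hβ : 0 ≤ β) (hr : 0 ≤ r) :
    (fun y : ℝ => exp (phase β (r + y * I))) =O[atTop] fun y => Real.exp (-(K * y ^ 2)) := by
  set Y := max (200 * (1 + β) ^ 2) ((6 * K) ^ 2)
  have hY : 0 ≤ Y := le_max_of_le_right (sq_nonneg _)
  have hanti := antitoneOn_re_phase_add (K := K) hβ hr hY
    (le_add_of_nonneg_of_le hr (le_max_left _ _)) (Real.le_sqrt_of_sq_le (le_max_right _ _))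
  refine .of_bound (Real.exp ((phase β (r + Y * I)).re + K * Y ^ 2))
    ((eventually_ge_atTop Y).mono fun y hy => ?_)
  rw [norm_exp, Real.norm_of_nonneg (Real.exp_nonneg _), ← Real.exp_add, Real.exp_le_exp]
  have := hanti self_mem_Ici hy hy
  simp only at this
  linarith

end VerticalLines

section Datum

/-- The upward vertical flow on pairs `(x, c)` of a point and a value of the parameter. -/
noncomputable def verticalFlow (s : ℝ) (p : ℂ × ℝ) : ℂ × ℝ := (p.1 + s * I, p.2)

/-- The error term of the Liouville–Green approximation along vertical lines. -/
noncomputable def errorTerm (β : ℝ) (p : ℂ × ℝ) : ℂ :=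
  I * defect β p.2 p.1 * amplitude β p.1 ^ 2 / 2

/-- The pairs `(x, c)` with `0 ≤ c ≤ C` and `x` in the closed first quadrant, at `ℓ¹`-distance at
least `R` from the origin. -/
def region (C R : ℝ) : Set (ℂ × ℝ) :=
  {p | 0 ≤ p.1.re ∧ 0 ≤ p.1.im ∧ R ≤ p.1.re + p.1.im ∧ p.2 ∈ Icc 0 C}

/-- A distance from which on the Volterra equation for the error is contractive. -/
noncomputable def radius (β C : ℝ) : ℝ := (96 * (C + 1)) ^ 2 + 200 * (1 + β) ^ 2

variable {β C R c r y Y : ℝ} {p : ℂ × ℝ} {x : ℂ}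

theorem le_sqrt_of_radius_le (hR : radius β C ≤ R) : 96 * (C + 1) ≤ √R :=
  Real.le_sqrt_of_sq_le (by unfold radius at hR; nlinarith [sq_nonneg (1 + β)])

theorem radius_pos (β : ℝ) (hC : 0 ≤ C) : 0 < radius β C := by
  unfold radius; positivity

theorem isFar_of_radius_le (hβ : 0 ≤ β) (hre : 0 ≤ x.re) (him : 0 ≤ x.im)
    (h : radius β C ≤ x.re + x.im) : IsFar β x :=
  ⟨hβ, hre, him, by unfold radius at h; nlinarith [sq_nonneg (96 * (C + 1))]⟩

theorem isFar_of_mem_region (hβ : 0 ≤ β) (hR : radius β C ≤ R) (hp : p ∈ region C R) :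
    IsFar β p.1 :=
  isFar_of_radius_le hβ hp.1 hp.2.1 (hR.trans hp.2.2.1)

theorem norm_errorTerm_le (h : IsFar β x) (hc : 0 ≤ c) :
    ‖errorTerm β (x, c)‖ ≤ 3 * (c + 1) * (1 / √(x.re + x.im) ^ 3) := by
  have hdefect := h.norm_defect_le hc
  have hamp := h.norm_amplitude_sq_le
  have hnorm := norm_fourthRoot_pow_four h.ne_zero
  have hsum : 0 < x.re + x.im := by nlinarith [h.nonneg, h.le_re_add_im]
  have hroot := h.one_le_norm_fourthRoot
  set N := ‖fourthRoot x‖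
  have hcube : √(x.re + x.im) ^ 3 ≤ 3 * N ^ 6 := by
    have hsq : √(x.re + x.im) ^ 2 ≤ 2 * N ^ 4 := by
      rw [Real.sq_sqrt hsum.le, hnorm]
      linarith [re_le_norm x, im_le_norm x]
    refine le_of_sq_le_sq ?_ (by positivity)
    calc (√(x.re + x.im) ^ 3) ^ 2 = (√(x.re + x.im) ^ 2) ^ 3 := by ring
      _ ≤ (2 * N ^ 4) ^ 3 := by gcongr
      _ ≤ (3 * N ^ 6) ^ 2 := by nlinarith [pow_pos (zero_lt_one.trans_le hroot) 12]
  have : 0 < √(x.re + x.im) := Real.sqrt_pos.2 hsum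
  calc ‖errorTerm β (x, c)‖ = ‖defect β c x‖ * ‖amplitude β x‖ ^ 2 / 2 := by simp [errorTerm]
    _ ≤ (c + 1) * (2 / N ^ 6) / 2 := by gcongr
    _ = 3 * (c + 1) * (1 / (3 * N ^ 6)) := by field_simp
    _ ≤ 3 * (c + 1) * (1 / √(x.re + x.im) ^ 3) := by gcongr

theorem tendsto_neg_two_div_sqrt (R : ℝ) :
    Tendsto (fun s => -(2 / √(R + s))) atTop (𝓝 0) := by
  rw [← neg_zero]
  exact (tendsto_const_nhds.div_atTop
    (Real.tendsto_sqrt_atTop.comp (tendsto_atTop_add_const_left _ R tendsto_id))).neg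

theorem hasDerivAt_neg_two_div_sqrt {R s : ℝ} (h : 0 < R + s) :
    HasDerivAt (fun s => -(2 / √(R + s))) (1 / √(R + s) ^ 3) s := by
  have hs := Real.sqrt_pos.2 h
  refine (((((hasDerivAt_id s).const_add R).sqrt h.ne').inv hs.ne').const_mul 2).neg.congr_deriv ?_
  simp only [id]
  field_simp

theorem integrableOn_one_div_sqrt_pow_three (hR : 0 < R) :
    IntegrableOn (fun s => 1 / √(R + s) ^ 3) (Ioi 0) :=
  integrableOn_Ioi_deriv_of_nonneg'
    (fun _ hs => hasDerivAt_neg_two_div_sqrt (add_pos_of_pos_of_nonneg hR hs))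
    (fun _ _ => by positivity) (tendsto_neg_two_div_sqrt R)

theorem integral_one_div_sqrt_pow_three (hR : 0 < R) :
    ∫ s in Ioi 0, 1 / √(R + s) ^ 3 = 2 / √R := by
  rw [integral_Ioi_of_hasDerivAt_of_nonneg'
    (fun _ hs => hasDerivAt_neg_two_div_sqrt (add_pos_of_pos_of_nonneg hR hs))
    (fun _ _ => by positivity) (tendsto_neg_two_div_sqrt R), add_zero]
  ring

theorem continuousAt_errorTerm (h : IsFar β p.1) : ContinuousAt (errorTerm β) p := by
  have h₀ := h.ne_zero
  have h₁ := h.sq_sub_ne_zero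
  have hamp : ContinuousAt (fun p : ℂ × ℝ => amplitude β p.1) p :=
    (hasDerivAt_amplitude h.mem_slitPlane h.fourthRoot_sub_ne_zero).continuousAt.comp
      continuousAt_fst
  unfold errorTerm defect
  fun_prop (disch := simp [h₀, h₁])

theorem differentiableAt_errorTerm (c : ℝ) (h : IsFar β x) :
    DifferentiableAt ℂ (fun x => errorTerm β (x, c)) x := by
  have h₀ := h.ne_zero
  have h₁ := h.sq_sub_ne_zero
  have hamp := (hasDerivAt_amplitude h.mem_slitPlane h.fourthRoot_sub_ne_zero).differentiableAt
  simp only [errorTerm, defect]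
  fun_prop (disch := simp [h₀, h₁])

theorem verticalFlow_mem_region (hp : p ∈ region C R) {s : ℝ} (hs : s ∈ Ioi (0 : ℝ)) :
    verticalFlow s p ∈ region C (R + s) := by
  obtain ⟨hre, him, hsum, hc⟩ := hp
  rw [mem_Ioi] at hs
  refine ⟨by simpa [verticalFlow] using hre, ?_, ?_, hc⟩ <;>
    simp only [verticalFlow, add_re, add_im, re_ofReal_mul, im_ofReal_mul, I_re, I_im] <;> linarith

theorem region_anti {R' : ℝ} (h : R ≤ R') : region C R' ⊆ region C R :=
  fun _ hp => ⟨hp.1, hp.2.1, h.trans hp.2.2.1, hp.2.2.2⟩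

theorem isVolterraDatum_region (hβ : 0 ≤ β) (hC : 0 ≤ C) (hR : radius β C ≤ R) :
    IsVolterraDatum verticalFlow (fun p => phase β p.1) (errorTerm β) (region C R)
      fun s => 3 * (C + 1) * (1 / √(R + s) ^ 3) where
  mapsTo s hs p hp := region_anti (le_add_of_nonneg_right (le_of_lt hs))
    (verticalFlow_mem_region hp hs)
  continuousOn_flow := by unfold verticalFlow; fun_prop
  continuousOn_phase p hp := ((hasDerivAt_phase (isFar_of_mem_region hβ hR hp).mem_slitPlane
    ).continuousAt.comp continuousAt_fst).continuousWithinAt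
  continuousOn_error p hp :=
    (continuousAt_errorTerm (isFar_of_mem_region hβ hR hp)).continuousWithinAt
  re_phase_le p hp s hs := by
    have h := isFar_of_mem_region hβ hR hp
    have hanti := antitoneOn_re_phase_add (K := 0) hβ h.re_nonneg h.im_nonneg h.le_re_add_im
      (by simp) self_mem_Ici (mem_Ici.2 (le_add_of_nonneg_right (le_of_lt hs)))
      (le_add_of_nonneg_right (le_of_lt hs))
    simpa [verticalFlow, add_mul, ← add_assoc, re_add_im] using hanti
  norm_error_le p hp s hs := by
    have hps := verticalFlow_mem_region hp hs
    have hRs : radius β C ≤ R + s := hR.trans (le_add_of_nonneg_right (le_of_lt hs))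
    have hpos : 0 < √(R + s) := Real.sqrt_pos.2 ((radius_pos β hC).trans_le hRs)
    refine (norm_errorTerm_le (isFar_of_mem_region hβ hRs hps) hps.2.2.2.1).trans ?_
    have h₁ := hps.2.2.1
    have h₂ := hps.2.2.2.2
    gcongr
  integrableOn := (integrableOn_one_div_sqrt_pow_three ((radius_pos β hC).trans_le hR)).const_mul _
  integral_le := by
    rw [integral_const_mul, integral_one_div_sqrt_pow_three ((radius_pos β hC).trans_le hR)]
    have h := le_sqrt_of_radius_le hR
    rw [mul_div_assoc', div_le_iff₀ (by linarith)]
    linarith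

theorem isOrbit_vertical (hr : 0 ≤ r) (hY : 0 ≤ Y) (h : R ≤ r + Y) (hc : c ∈ Icc 0 C) :
    IsOrbit verticalFlow (fun y => ((r + y * I : ℂ), c)) Y (region C R) where
  continuousOn := by fun_prop
  mapsTo y hy := by
    rw [mem_Ici] at hy
    refine ⟨by simpa, by simpa using hY.trans hy, ?_, hc⟩
    simp only [add_re, ofReal_re, mul_re, I_re, mul_zero, ofReal_im, I_im, mul_one, sub_self,
      add_zero, add_im, mul_im, zero_add]
    linarith
  flow_eq y _ s _ := by
    simp only [verticalFlow, ofReal_add, Prod.mk.injEq, and_true]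
    ring

end Datum

section Outer

/-- The solution of `u'' = potential β c u` far out in the first quadrant which decays upwards,
normalised by its Liouville–Green approximation. -/
noncomputable def outerSolution (β c : ℝ) (x : ℂ) : ℂ :=
  liouvilleGreen verticalFlow (fun p => phase β p.1) (errorTerm β) (fun p => amplitude β p.1) (x, c)

/-- The derivative of the outer solution in the upward vertical direction. -/
noncomputable def outerSolutionDeriv (β c : ℝ) (x : ℂ) : ℂ :=
  liouvilleGreenDeriv verticalFlow (fun p => phase β p.1) (errorTerm β) (fun p => amplitude β p.1)
    (fun p => I * amplitudeDeriv β p.1) I (x, c)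

/-- The interior of the part of the first quadrant in which the outer solution is defined. -/
def outerDomain (β c : ℝ) : Set ℂ := {x | 0 < x.re ∧ 0 < x.im ∧ radius β c < x.re + x.im}

variable {β c C r y : ℝ} {x : ℂ}

theorem isOpen_outerDomain : IsOpen (outerDomain β c) :=
  (isOpen_lt continuous_const continuous_re).inter ((isOpen_lt continuous_const continuous_im).inter
    (isOpen_lt continuous_const (continuous_re.add continuous_im)))

theorem add_mul_I_mem_outerDomain :
    (r + y * I : ℂ) ∈ outerDomain β c ↔ 0 < r ∧ 0 < y ∧ radius β c < r + y := by
  simp [outerDomain]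

theorem isPreconnected_outerDomain : IsPreconnected (outerDomain β c) :=
  ((convex_halfSpace_re_gt 0).inter ((convex_halfSpace_im_gt 0).inter
    (convex_halfSpace_gt (f := fun x : ℂ => x.re + x.im)
      ⟨fun x y => by simp only [add_re, add_im]; ring, fun a x => by simp [mul_add]⟩
        (radius β c)))).isPreconnected

theorem isFar_of_mem_outerDomain (hβ : 0 ≤ β) (hx : x ∈ outerDomain β c) : IsFar β x :=
  isFar_of_radius_le hβ hx.1.le hx.2.1.le hx.2.2.le

theorem mk_mem_region (hc : 0 ≤ c) (hx : x ∈ outerDomain β c) : (x, c) ∈ region c (radius β c) :=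
  ⟨hx.1.le, hx.2.1.le, hx.2.2.le, hc, le_rfl⟩

theorem norm_volterraSolution_sub_one_le_of_region (hβ : 0 ≤ β) (hc : 0 ≤ c) (hre : 0 ≤ x.re)
    (him : 0 ≤ x.im) (h : radius β c ≤ x.re + x.im) :
    ‖volterraSolution verticalFlow (fun p => phase β p.1) (errorTerm β) (x, c) - 1‖ ≤
      24 * (c + 1) / √(x.re + x.im) := by
  have hle := (isVolterraDatum_region hβ hc h).norm_volterraSolution_sub_one_le
    (x := (x, c)) ⟨hre, him, le_rfl, hc, le_rfl⟩
  rw [integral_const_mul, integral_one_div_sqrt_pow_three ((radius_pos β hc).trans_le h)] at hle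
  exact hle.trans_eq (by ring)

theorem outerSolution_ne_zero (hβ : 0 ≤ β) (hc : 0 ≤ c) (hre : 0 ≤ x.re) (him : 0 ≤ x.im)
    (h : radius β c ≤ x.re + x.im) : outerSolution β c x ≠ 0 :=
  mul_ne_zero (mul_ne_zero
    (amplitude_ne_zero (isFar_of_radius_le hβ hre him h).fourthRoot_sub_ne_zero) (exp_ne_zero _))
    ((isVolterraDatum_region hβ hc h).volterraSolution_ne_zero ⟨hre, him, le_rfl, hc, le_rfl⟩)

theorem hasDerivAt_phase_vertical (h : IsFar β (r + y * I)) :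
    HasDerivAt (fun y : ℝ => phase β (r + y * I)) (I / amplitude β (r + y * I) ^ 2) y :=
  (hasDerivAt_comp_vertical (hasDerivAt_phase h.mem_slitPlane)).congr_deriv (by ring)

theorem hasDerivAt_amplitude_vertical (h : IsFar β (r + y * I)) :
    HasDerivAt (fun y : ℝ => amplitude β (r + y * I)) (I * amplitudeDeriv β (r + y * I)) y :=
  (hasDerivAt_comp_vertical (hasDerivAt_amplitude h.mem_slitPlane
    h.fourthRoot_sub_ne_zero)).congr_deriv (mul_comm _ _)

theorem hasDerivAt_amplitudeDeriv_vertical (h : IsFar β (r + y * I)) :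
    HasDerivAt (fun y : ℝ => I * amplitudeDeriv β (r + y * I))
      (-amplitudeDeriv₂ β (r + y * I)) y :=
  ((hasDerivAt_comp_vertical (hasDerivAt_amplitudeDeriv h.mem_slitPlane
    h.fourthRoot_sub_ne_zero)).const_mul I).congr_deriv
      (by linear_combination amplitudeDeriv₂ β (r + y * I) * I_mul_I)

theorem errorTerm_mul_amplitude (c : ℝ) (h : IsFar β x) :
    2 * (I / amplitude β x ^ 2) * errorTerm β (x, c) * amplitude β x =
      (-potential β c x - (I / amplitude β x ^ 2) ^ 2) * amplitude β x - -amplitudeDeriv₂ β x := by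
  have hA := amplitude_ne_zero h.fourthRoot_sub_ne_zero
  have hdefect := defect_mul_amplitude c h.ne_zero h.fourthRoot_sub_ne_zero
  calc 2 * (I / amplitude β x ^ 2) * errorTerm β (x, c) * amplitude β x
      = -(defect β c x * amplitude β x) := by
        simp only [errorTerm]
        field_simp
        rw [I_sq]
        ring
    _ = _ := by
        rw [hdefect, div_pow, I_sq]
        ring

theorem hasDerivAt_outerSolution_vertical (hβ : 0 ≤ β) (hc : 0 ≤ c) (hr : 0 ≤ r) (hy : 0 < y)
    (h : radius β c < r + y) :
    HasDerivAt (fun y : ℝ => outerSolution β c (r + y * I)) (outerSolutionDeriv β c (r + y * I)) y ∧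
    HasDerivAt (fun y : ℝ => outerSolutionDeriv β c (r + y * I))
      (-potential β c (r + y * I) * outerSolution β c (r + y * I)) y := by
  have hfar : IsFar β (r + y * I) :=
    isFar_of_radius_le (C := c) hβ (by simpa) (by simpa using hy.le) (by simpa using h.le)
  have hdatum := isVolterraDatum_region hβ hc (le_refl (radius β c))
  have horbit : IsOrbit verticalFlow (fun y : ℝ => ((r + y * I : ℂ), c)) (max 0 (radius β c - r))
      (region c (radius β c)) :=
    isOrbit_vertical hr (le_max_left _ _)
      (sub_le_iff_le_add'.1 (le_max_right 0 (radius β c - r))) ⟨hc, le_rfl⟩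
  have hY : max 0 (radius β c - r) < y := max_lt hy (by linarith)
  have hamp₀ := amplitude_ne_zero hfar.fourthRoot_sub_ne_zero
  have hu := hdatum.hasDerivAt_liouvilleGreen (ρ := fun p => amplitude β p.1)
    (ρ' := fun p => I * amplitudeDeriv β p.1) (κ := I) horbit hY
  have hu' := hdatum.hasDerivAt_liouvilleGreenDeriv (ρ := fun p => amplitude β p.1)
    (ρ' := fun p => I * amplitudeDeriv β p.1) (κ := I) horbit hY
  exact ⟨hu hamp₀ (hasDerivAt_phase_vertical hfar) (hasDerivAt_amplitude_vertical hfar),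
    hu' hamp₀ (hasDerivAt_phase_vertical hfar) (hasDerivAt_amplitude_vertical hfar)
      (hasDerivAt_amplitudeDeriv_vertical hfar) (errorTerm_mul_amplitude c hfar)⟩

theorem norm_outerSolution_le (hβ : 0 ≤ β) (hc : 0 ≤ c) (hre : 0 ≤ x.re) (him : 0 ≤ x.im)
    (h : radius β c ≤ x.re + x.im) : ‖outerSolution β c x‖ ≤ 4 * ‖exp (phase β x)‖ := by
  have hamp := (isFar_of_radius_le hβ hre him h).norm_amplitude_le
  have hm := (isVolterraDatum_region hβ hc h).norm_volterraSolution_le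
    (x := (x, c)) ⟨hre, him, le_rfl, hc, le_rfl⟩
  calc ‖outerSolution β c x‖ = ‖amplitude β x‖ * ‖exp (phase β x)‖ * _ := by
        rw [outerSolution, liouvilleGreen, norm_mul, norm_mul]
    _ ≤ 2 * ‖exp (phase β x)‖ * 2 := by gcongr
    _ = 4 * ‖exp (phase β x)‖ := by ring

theorem norm_outerSolutionDeriv_le (hβ : 0 ≤ β) (hc : 0 ≤ c) (hre : 0 ≤ x.re) (him : 0 ≤ x.im)
    (h : radius β c ≤ x.re + x.im) :
    ‖outerSolutionDeriv β c x‖ ≤ 24 * ‖x‖ * ‖exp (phase β x)‖ := by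
  have hfar := isFar_of_radius_le hβ hre him h
  have hmem : (x, c) ∈ region c (x.re + x.im) := ⟨hre, him, le_rfl, hc, le_rfl⟩
  have hm := (isVolterraDatum_region hβ hc h).norm_volterraSolution_le hmem
  have hB := (isVolterraDatum_region hβ hc h).norm_volterraRemainder_le hmem
  have hinv := hfar.norm_inv_amplitude_le
  have hamp' := hfar.norm_amplitudeDeriv_le
  rw [outerSolutionDeriv, liouvilleGreenDeriv]
  set m := volterraSolution _ _ _ _
  set B := volterraRemainder _ _ _ _
  calc ‖exp (phase β x) * (I * amplitudeDeriv β x * m + I / amplitude β x * (m - 2 * B))‖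
      ≤ ‖exp (phase β x)‖ *
        (‖amplitudeDeriv β x‖ * ‖m‖ + ‖1 / amplitude β x‖ * (‖m‖ + 2 * ‖B‖)) := by
        rw [norm_mul, div_eq_mul_one_div I]
        gcongr
        refine (norm_add_le _ _).trans (add_le_add (by simp) ?_)
        rw [norm_mul, norm_mul, norm_I, one_mul]
        gcongr
        exact (norm_sub_le _ _).trans_eq (by simp)
    _ ≤ ‖exp (phase β x)‖ * (8 * ‖x‖ * 2 + 2 * ‖x‖ * (2 + 2 * 1)) := by gcongr
    _ = 24 * ‖x‖ * ‖exp (phase β x)‖ := by ring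

theorem differentiableOn_outerSolution (hβ : 0 ≤ β) (hc : 0 ≤ c) :
    DifferentiableOn ℂ (outerSolution β c) (outerDomain β c) := by
  have hphase : DifferentiableOn ℂ (phase β) (outerDomain β c) := fun x hx =>
    (hasDerivAt_phase (isFar_of_mem_outerDomain hβ hx).mem_slitPlane
      ).differentiableAt.differentiableWithinAt
  have hamp : DifferentiableOn ℂ (amplitude β) (outerDomain β c) := fun x hx =>
    (hasDerivAt_amplitude (isFar_of_mem_outerDomain hβ hx).mem_slitPlane
      (isFar_of_mem_outerDomain hβ hx).fourthRoot_sub_ne_zero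
      ).differentiableAt.differentiableWithinAt
  refine (hamp.mul hphase.cexp).mul
    ((isVolterraDatum_region hβ hc (le_refl (radius β c))).differentiableOn_volterraSolution
      (ι := fun x => (x, c)) (v := I) isOpen_outerDomain (fun x => mk_mem_region hc)
      (fun s hs x hx => ?_) (fun s _ x _ => rfl) hphase fun x hx =>
        (differentiableAt_errorTerm c (isFar_of_mem_outerDomain hβ hx)).differentiableWithinAt)
  obtain ⟨hre, him, hsum⟩ := hx
  have hs : 0 < s := hs
  refine ⟨by simpa, ?_, ?_⟩ <;> simp <;> linarith

theorem deriv_outerSolution (hβ : 0 ≤ β) (hc : 0 ≤ c) (hx : x ∈ outerDomain β c) :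
    deriv (outerSolution β c) x = -I * outerSolutionDeriv β c x := by
  obtain ⟨r, y⟩ := x
  rw [mk_eq_add_mul_I] at hx ⊢
  obtain ⟨hr, hy, hsum⟩ := add_mul_I_mem_outerDomain.1 hx
  have hd := (hasDerivAt_comp_vertical ((differentiableOn_outerSolution hβ hc).differentiableAt
    (isOpen_outerDomain.mem_nhds hx)).hasDerivAt).unique
      (hasDerivAt_outerSolution_vertical hβ hc hr.le hy hsum).1
  linear_combination -I * hd + deriv (outerSolution β c) (r + y * I) * I_mul_I

theorem isSolutionOn_outerSolution (hβ : 0 ≤ β) (hc : 0 ≤ c) :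
    IsSolutionOn (potential β c) (outerSolution β c) (outerDomain β c) := by
  refine ⟨differentiableOn_outerSolution hβ hc, fun x hx => ?_⟩
  have hd := ((differentiableOn_outerSolution hβ hc).deriv isOpen_outerDomain).differentiableAt
    (isOpen_outerDomain.mem_nhds hx) |>.hasDerivAt
  obtain ⟨r, y⟩ := x
  rw [mk_eq_add_mul_I] at hx hd ⊢
  obtain ⟨hr, hy, hsum⟩ := add_mul_I_mem_outerDomain.1 hx
  have hcomp := hasDerivAt_comp_vertical hd
  have hvert := (hasDerivAt_outerSolution_vertical hβ hc hr.le hy hsum).2.const_mul (-I)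
  have heq : (fun y : ℝ => deriv (outerSolution β c) (r + y * I)) =ᶠ[𝓝 y]
      fun y => -I * outerSolutionDeriv β c (r + y * I) :=
    ((hasDerivAt_vertical r y).continuousAt.eventually_mem (isOpen_outerDomain.mem_nhds hx)).mono
      fun t ht => deriv_outerSolution hβ hc ht
  linear_combination -I * (hcomp.congr_of_eventuallyEq heq.symm).unique hvert +
    (deriv (deriv (outerSolution β c)) (r + y * I) -
      potential β c (r + y * I) * outerSolution β c (r + y * I)) * I_mul_I

theorem continuousOn_outerSolution (hβ : 0 ≤ β) (hC : 0 ≤ C) :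
    ContinuousOn (fun p : ℂ × ℝ => outerSolution β p.2 p.1) (region C (radius β C)) := by
  have hdatum := isVolterraDatum_region hβ hC (le_refl (radius β C))
  have hamp : ContinuousOn (fun p : ℂ × ℝ => amplitude β p.1) (region C (radius β C)) :=
    fun p hp => by
      have h := isFar_of_mem_region hβ le_rfl hp
      exact ((hasDerivAt_amplitude h.mem_slitPlane h.fourthRoot_sub_ne_zero).continuousAt.comp
        continuousAt_fst).continuousWithinAt
  exact (hamp.mul hdatum.continuousOn_phase.cexp).mul hdatum.continuousOn_volterraSolution

theorem continuousOn_outerSolutionDeriv (hβ : 0 ≤ β) (hx : x ∈ outerDomain β C) :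
    ContinuousOn (fun c => outerSolutionDeriv β c x) (Icc 0 C) := by
  intro c hc
  have hC : 0 ≤ C := hc.1.trans hc.2
  have hdatum := isVolterraDatum_region hβ hC (le_refl (radius β C))
  have hmaps : MapsTo (fun c => (x, c)) (Icc 0 C) (region C (radius β C)) := fun t ht =>
    ⟨hx.1.le, hx.2.1.le, hx.2.2.le, ht⟩
  have hm := hdatum.continuousOn_volterraSolution.comp (by fun_prop) hmaps
  have hB := hdatum.continuousOn_volterraRemainder.comp (by fun_prop) hmaps
  exact (continuousOn_const.mul ((continuousOn_const.mul hm).add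
    (continuousOn_const.mul (hm.sub (continuousOn_const.mul hB))))) c hc

end Outer

section Subdominant

/-- An entire solution of `u'' = potential β c u` that continues the outer solution; up to a factor
it is the only one which decays upwards in the first quadrant. -/
structure IsSubdominant (β c : ℝ) (u : ℂ → ℂ) : Prop where
  isSolutionOn : IsSolutionOn (potential β c) u univ
  eq_outerSolution : ∀ x : ℂ, 0 ≤ x.re → 0 ≤ x.im → radius β c ≤ x.re + x.im →
    u x = outerSolution β c x

variable {β c C : ℝ}

theorem isSubdominant_of_eqOn (hβ : 0 ≤ β) (hc : 0 ≤ c) {u : ℂ → ℂ}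
    (hu : IsSolutionOn (potential β c) u univ)
    (heq : EqOn u (outerSolution β c) (outerDomain β c)) : IsSubdominant β c u := by
  refine ⟨hu, fun x hre him hsum => ?_⟩
  have hshift : ∀ ε ∈ Ioi (0 : ℝ), x + ε * (1 + I) ∈ outerDomain β c := fun ε hε => by
    rw [mem_Ioi] at hε
    refine ⟨?_, ?_, ?_⟩ <;> simp <;> linarith
  have hlim : Tendsto (fun ε : ℝ => x + ε * (1 + I)) (𝓝[>] 0) (𝓝 x) :=
    tendsto_nhdsWithin_of_tendsto_nhds (Continuous.tendsto' (by fun_prop) _ _ (by simp))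
  have hout : ContinuousWithinAt (outerSolution β c) (outerDomain β c) x :=
    ((continuousOn_outerSolution hβ hc) (x, c) ⟨hre, him, hsum, hc, le_rfl⟩).comp
      (f := fun x => (x, c)) (by fun_prop) fun z hz => mk_mem_region hc hz
  refine tendsto_nhds_unique (hu.differentiableOn.continuousOn.continuousAt univ_mem |>.tendsto.comp
    hlim) ((hout.tendsto.comp (tendsto_nhdsWithin_iff.2 ⟨hlim, ?_⟩)).congr' ?_)
  · exact eventually_mem_nhdsWithin.mono hshift
  · exact eventually_mem_nhdsWithin.mono fun ε hε => (heq (hshift ε hε)).symm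

theorem norm_vertical_isBigO (r : ℝ) :
    (fun y : ℝ => ‖(r + y * I : ℂ)‖) =O[atTop] fun y => Real.exp (y ^ 2) := by
  refine .of_bound (|r| + 1) ((eventually_ge_atTop 0).mono fun y hy => ?_)
  rw [norm_norm, Real.norm_of_nonneg (Real.exp_nonneg _)]
  have hexp := Real.add_one_le_exp (y ^ 2)
  calc ‖(r + y * I : ℂ)‖ ≤ |r| + |y| := by
        simpa using norm_add_le (r : ℂ) (y * I)
    _ ≤ (|r| + 1) * Real.exp (y ^ 2) := by
        rw [abs_of_nonneg hy]
        nlinarith [abs_nonneg r, sq_nonneg (y - 1)]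

namespace IsSubdominant

variable {u : ℂ → ℂ} {r : ℝ}

theorem isBigO_vertical (hu : IsSubdominant β c u) (hβ : 0 ≤ β) (hc : 0 ≤ c) (hr : 0 ≤ r) (K : ℝ) :
    (fun y : ℝ => u (r + y * I)) =O[atTop] fun y => Real.exp (-(K * y ^ 2)) := by
  refine .trans (.of_bound 4 ?_) (exp_phase_isBigO hβ hr)
  filter_upwards [eventually_ge_atTop (0 : ℝ), eventually_ge_atTop (radius β c)] with y hy hRy
  have hsum : radius β c ≤ (r + y * I : ℂ).re + (r + y * I : ℂ).im := by
    simp only [add_re, ofReal_re, mul_re, I_re, mul_zero, ofReal_im, I_im, mul_one, sub_self,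
      add_zero, add_im, mul_im, zero_add]
    linarith
  rw [hu.eq_outerSolution _ (by simpa) (by simpa) hsum]
  exact norm_outerSolution_le hβ hc (by simpa) (by simpa) hsum

theorem deriv_isBigO_vertical (hu : IsSubdominant β c u) (hβ : 0 ≤ β) (hc : 0 ≤ c) (hr : 0 ≤ r)
    (K : ℝ) :
    (fun y : ℝ => deriv u (r + y * I)) =O[atTop] fun y => Real.exp (-(K * y ^ 2)) := by
  have hexp : (fun y : ℝ => ‖(r + y * I : ℂ)‖ * ‖exp (phase β (r + y * I))‖) =O[atTop]
      fun y => Real.exp (-(K * y ^ 2)) :=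
    ((norm_vertical_isBigO r).mul (exp_phase_isBigO (K := K + 1) hβ hr).norm_left).congr_right
      fun y => by rw [← Real.exp_add]; ring_nf
  refine .trans (.of_bound 24 ?_) hexp
  filter_upwards [eventually_gt_atTop (0 : ℝ), eventually_gt_atTop (radius β c)] with y hy hRy
  have heq : (fun y : ℝ => u (r + y * I)) =ᶠ[𝓝 y] fun y => outerSolution β c (r + y * I) := by
    filter_upwards [Ioi_mem_nhds hy, Ioi_mem_nhds hRy] with t ht hRt
    rw [mem_Ioi] at ht hRt
    exact hu.eq_outerSolution _ (by simpa) (by simpa using ht.le) (by simp; linarith)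
  have hderiv := (hasDerivAt_comp_vertical
    (hu.isSolutionOn.hasDerivAt isOpen_univ (mem_univ (r + y * I : ℂ)))).unique
      ((hasDerivAt_outerSolution_vertical hβ hc hr hy (by linarith)).1.congr_of_eventuallyEq heq)
  calc ‖deriv u (r + y * I)‖ = ‖outerSolutionDeriv β c (r + y * I)‖ := by simp [← hderiv]
    _ ≤ 24 * ‖(r + y * I : ℂ)‖ * ‖exp (phase β (r + y * I))‖ :=
        norm_outerSolutionDeriv_le hβ hc (by simpa) (by simpa using hy.le) (by simp; linarith)
    _ = 24 * ‖‖(r + y * I : ℂ)‖ * ‖exp (phase β (r + y * I))‖‖ := by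
      simp only [norm_mul, norm_norm]
      ring

end IsSubdominant

theorem exists_subdominant_family (hβ : 0 ≤ β) (hC : 0 ≤ C) : ∃ u : ℝ → ℂ → ℂ,
    (∀ c ∈ Icc 0 C, IsSubdominant β c (u c)) ∧ ContinuousOn (u · 0) (Icc 0 C) := by
  obtain ⟨S, T, hST, hcont⟩ := exists_isFundamentalSystem_potential β C
  set z₀ : ℂ := radius β C * (1 + I)
  have hpos := radius_pos β hC
  have hz₀ : ∀ c ∈ Icc 0 C, z₀ ∈ outerDomain β c := fun c hc => by
    have hle : radius β c ≤ radius β C := by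
      unfold radius
      gcongr
      · linarith [hc.1]
      · exact hc.2
    refine ⟨?_, ?_, ?_⟩ <;> simp [z₀] <;> linarith
  have hv : ContinuousOn (fun c => outerSolution β c z₀) (Icc 0 C) :=
    (continuousOn_outerSolution hβ hC).comp (f := fun c => (z₀, c)) (by fun_prop) fun c hc =>
      ⟨(hz₀ c hc).1.le, (hz₀ c hc).2.1.le, (hz₀ C ⟨hC, le_rfl⟩).2.2.le, hc⟩
  have hv' : ContinuousOn (fun c => deriv (outerSolution β c) z₀) (Icc 0 C) :=
    (continuousOn_const.mul (continuousOn_outerSolutionDeriv hβ (hz₀ C ⟨hC, le_rfl⟩))).congr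
      fun c hc => deriv_outerSolution hβ hc.1 (hz₀ c hc)
  refine ⟨fun c z => wronskian (outerSolution β c) (T c) z₀ * S c z -
    wronskian (outerSolution β c) (S c) z₀ * T c z, fun c hc => ?_, ?_⟩
  · exact isSubdominant_of_eqOn hβ hc.1 ((hST c hc).left.linearCombination (hST c hc).right _ _)
      ((hST c hc).eqOn (isSolutionOn_outerSolution hβ hc.1) isOpen_outerDomain
        isPreconnected_outerDomain (hz₀ c hc)).symm
  · obtain ⟨⟨hS, hS'⟩, hT, hT'⟩ := hcont z₀
    exact (((hv.mul hT').sub (hv'.mul hT)).mul (hcont 0).1.1).sub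
      (((hv.mul hS').sub (hv'.mul hS)).mul (hcont 0).2.1)

end Subdominant

/-! ### The Liouville–Green approximation on the imaginary axis -/

section Axis

/-- The potential at the point `iy` of the imaginary axis. -/
noncomputable def axisPotential (β c y : ℝ) : ℂ := c - (y ^ 3 + 4 * β * y : ℝ) * I

/-- The square root of the potential on the imaginary axis. -/
noncomputable def momentum (β c y : ℝ) : ℂ := fourthRoot (axisPotential β c y) ^ 2

/-- The phase of the Liouville–Green approximation on the imaginary axis. -/
noncomputable def axisPhase (β c y : ℝ) : ℂ := -I * ∫ s in (0 : ℝ)..y, momentum β c s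

/-- The amplitude of the Liouville–Green approximation on the imaginary axis. -/
noncomputable def axisAmplitude (β c y : ℝ) : ℂ := 1 / fourthRoot (axisPotential β c y)

/-- The derivative of the amplitude on the imaginary axis. -/
noncomputable def axisAmplitudeDeriv (β c y : ℝ) : ℂ :=
  (3 * y ^ 2 + 4 * β : ℝ) * I / (4 * fourthRoot (axisPotential β c y) ^ 5)

/-- The second derivative of the amplitude on the imaginary axis. -/
noncomputable def axisAmplitudeDeriv₂ (β c y : ℝ) : ℂ :=
  (6 * y : ℝ) * I / (4 * fourthRoot (axisPotential β c y) ^ 5) -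
    5 * (3 * y ^ 2 + 4 * β : ℝ) ^ 2 / (16 * fourthRoot (axisPotential β c y) ^ 9)

/-- The error term of the Liouville–Green approximation on the imaginary axis. -/
noncomputable def axisError (β c y : ℝ) : ℂ :=
  (6 * y : ℝ) / (8 * fourthRoot (axisPotential β c y) ^ 6) +
    5 * (3 * y ^ 2 + 4 * β : ℝ) ^ 2 * I / (32 * fourthRoot (axisPotential β c y) ^ 10)

variable {β c y : ℝ}

theorem potential_mul_I (β c y : ℝ) : potential β c (y * I) = axisPotential β c y := by
  simp only [potential, axisPotential]
  push_cast
  linear_combination (y : ℂ) ^ 3 * I * I_sq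

theorem re_axisPotential (β c y : ℝ) : (axisPotential β c y).re = c := by
  rw [axisPotential, sub_re, ofReal_re, re_ofReal_mul, I_re, mul_zero, sub_zero]

theorem im_axisPotential (β c y : ℝ) : (axisPotential β c y).im = -(y ^ 3 + 4 * β * y) := by
  rw [axisPotential, sub_im, ofReal_im, zero_sub, im_ofReal_mul, I_im, mul_one]

theorem axisPotential_mem_slitPlane (hc : 0 < c) : axisPotential β c y ∈ slitPlane :=
  .inl (by rwa [re_axisPotential])

theorem momentum_sq (hc : 0 < c) : momentum β c y ^ 2 = axisPotential β c y := by
  rw [momentum, ← pow_mul, fourthRoot_pow_four (slitPlane_ne_zero (axisPotential_mem_slitPlane hc))]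

theorem hasDerivAt_axisPotential (β c y : ℝ) :
    HasDerivAt (axisPotential β c) (-((3 * y ^ 2 + 4 * β : ℝ) * I)) y := by
  have h : HasDerivAt (fun y : ℝ => y ^ 3 + 4 * β * y) (3 * y ^ 2 + 4 * β) y :=
    ((hasDerivAt_pow 3 y).add ((hasDerivAt_id y).const_mul (4 * β))).congr_deriv (by norm_num)
  exact (h.ofReal_comp.mul_const I).const_sub (c : ℂ)

theorem hasDerivAt_fourthRoot_axisPotential (hc : 0 < c) :
    HasDerivAt (fun y => fourthRoot (axisPotential β c y))
      (-((3 * y ^ 2 + 4 * β : ℝ) * I) / (4 * fourthRoot (axisPotential β c y) ^ 3)) y :=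
  ((hasDerivAt_fourthRoot (axisPotential_mem_slitPlane hc)).comp y
    (hasDerivAt_axisPotential β c y)).congr_deriv (by ring)

theorem continuous_fourthRoot_axisPotential (hc : 0 < c) :
    Continuous fun y => fourthRoot (axisPotential β c y) :=
  continuous_iff_continuousAt.2 fun _ => (hasDerivAt_fourthRoot_axisPotential hc).continuousAt

theorem continuous_momentum (hc : 0 < c) : Continuous (momentum β c) :=
  (continuous_fourthRoot_axisPotential hc).pow 2

theorem axisAmplitude_ne_zero (β c y : ℝ) : axisAmplitude β c y ≠ 0 :=
  one_div_ne_zero (fourthRoot_ne_zero _)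

theorem hasDerivAt_axisPhase (hc : 0 < c) :
    HasDerivAt (axisPhase β c) (-I / axisAmplitude β c y ^ 2) y := by
  refine (intervalIntegral.integral_hasDerivAt_right
    ((continuous_momentum hc).intervalIntegrable 0 y)
    (continuous_momentum hc).stronglyMeasurable.stronglyMeasurableAtFilter
    (continuous_momentum hc).continuousAt).const_mul (-I) |>.congr_deriv ?_
  rw [momentum, axisAmplitude, div_pow, one_pow, div_div_eq_mul_div, div_one]

theorem hasDerivAt_axisAmplitude (hc : 0 < c) :
    HasDerivAt (axisAmplitude β c) (axisAmplitudeDeriv β c y) y := by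
  have h₀ := fourthRoot_ne_zero (axisPotential β c y)
  refine ((hasDerivAt_const y (1 : ℂ)).div
    (hasDerivAt_fourthRoot_axisPotential hc) h₀).congr_deriv ?_
  unfold axisAmplitudeDeriv
  field_simp
  ring

theorem hasDerivAt_axisAmplitudeDeriv (hc : 0 < c) :
    HasDerivAt (axisAmplitudeDeriv β c) (axisAmplitudeDeriv₂ β c y) y := by
  have h₀ := fourthRoot_ne_zero (axisPotential β c y)
  have hnum : HasDerivAt (fun y : ℝ => 3 * y ^ 2 + 4 * β) (6 * y) y :=
    (((hasDerivAt_pow 2 y).const_mul 3).add_const (4 * β)).congr_deriv (by norm_num; ring)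
  refine ((hnum.ofReal_comp.mul_const I).div
    (((hasDerivAt_fourthRoot_axisPotential hc).pow 5).const_mul 4)
    (mul_ne_zero (by norm_num) (pow_ne_zero 5 h₀))).congr_deriv ?_
  simp only [axisAmplitudeDeriv₂, Pi.pow_apply]
  field_simp
  push_cast
  linear_combination 80 * (y ^ 2 * 3 + 4 * β : ℂ) ^ 2 *
    fourthRoot (axisPotential β c y) ^ 4 * I_sq

theorem axisError_mul_axisAmplitude (hc : 0 < c) :
    2 * (-I / axisAmplitude β c y ^ 2) * axisError β c y * axisAmplitude β c y =
      (-axisPotential β c y - (-I / axisAmplitude β c y ^ 2) ^ 2) * axisAmplitude β c y -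
        axisAmplitudeDeriv₂ β c y := by
  have h₀ := fourthRoot_ne_zero (axisPotential β c y)
  have hsq : (-I / axisAmplitude β c y ^ 2) ^ 2 = -axisPotential β c y := by
    rw [← fourthRoot_pow_four (slitPlane_ne_zero (axisPotential_mem_slitPlane hc)), axisAmplitude]
    field_simp
    exact I_sq
  rw [hsq, sub_self, zero_mul, zero_sub, axisAmplitude, axisError, axisAmplitudeDeriv₂]
  field_simp
  push_cast
  linear_combination -5120 * (y ^ 2 * 3 + 4 * β : ℂ) ^ 2 * I_sq

theorem re_momentum_pos (hc : 0 < c) : 0 < (momentum β c y).re :=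
  re_fourthRoot_sq_pos (by rw [re_axisPotential]; exact hc.le)

theorem re_sq_sub_im_sq_momentum (hc : 0 < c) :
    (momentum β c y).re ^ 2 - (momentum β c y).im ^ 2 = c := by
  have h := congrArg re (momentum_sq (β := β) (y := y) hc)
  rw [re_axisPotential, sq, mul_re] at h
  linarith

theorem im_momentum_nonpos (hβ : 0 ≤ β) (hc : 0 < c) (hy : 0 ≤ y) : (momentum β c y).im ≤ 0 := by
  have h := congrArg im (momentum_sq (β := β) (y := y) hc)
  rw [im_axisPotential, sq, mul_im] at h
  have hy' : 0 ≤ y ^ 3 + 4 * β * y := by positivity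
  exact nonpos_of_mul_nonpos_right (by linarith) (re_momentum_pos (β := β) (y := y) hc)

theorem sqrt_le_re_momentum (hc : 0 < c) : √c ≤ (momentum β c y).re :=
  Real.sqrt_le_iff.2 ⟨(re_momentum_pos hc).le, by
    nlinarith [re_sq_sub_im_sq_momentum (β := β) (y := y) hc, sq_nonneg (momentum β c y).im]⟩

theorem norm_momentum_sq (hc : 0 < c) : ‖momentum β c y‖ ^ 2 = ‖axisPotential β c y‖ := by
  rw [← norm_pow, momentum_sq hc]

theorem norm_momentum_sq_le (hc : 0 < c) :
    ‖momentum β c y‖ ^ 2 ≤ 2 * (momentum β c y).re ^ 2 := by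
  rw [Complex.sq_norm, normSq_apply]
  nlinarith [re_sq_sub_im_sq_momentum (β := β) (y := y) hc]

theorem le_norm_axisPotential (β c y : ℝ) : c ≤ ‖axisPotential β c y‖ := by
  simpa only [re_axisPotential] using re_le_norm (axisPotential β c y)

theorem one_add_pow_three_le (hβ : 0 ≤ β) (hc : 1 ≤ c) (hy : 0 ≤ y) :
    (1 + y) ^ 3 ≤ 8 * ‖axisPotential β c y‖ := by
  have hre := le_norm_axisPotential β c y
  have him := (neg_le_abs _).trans (abs_im_le_norm (axisPotential β c y))
  rw [im_axisPotential] at him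
  nlinarith [mul_nonneg hβ hy, mul_nonneg (add_nonneg zero_le_one hy) (sq_nonneg (y - 1))]

theorem norm_axisPotential_le (hβ : 0 ≤ β) (hc : 0 ≤ c) (hy : 0 ≤ y) :
    ‖axisPotential β c y‖ ≤ c + (y ^ 3 + 4 * β * y) := by
  refine (norm_sub_le _ _).trans_eq ?_
  rw [norm_mul, norm_I, mul_one, norm_real, norm_real, Real.norm_of_nonneg hc,
    Real.norm_of_nonneg (by positivity)]

theorem one_le_norm_fourthRoot_axisPotential (hc : 1 ≤ c) :
    1 ≤ ‖fourthRoot (axisPotential β c y)‖ := by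
  refine (one_le_pow_iff_of_nonneg (norm_nonneg _) four_ne_zero).1 ?_
  rw [norm_fourthRoot_pow_four
    (slitPlane_ne_zero (axisPotential_mem_slitPlane (zero_lt_one.trans_le hc)))]
  exact hc.trans (le_norm_axisPotential β c y)

theorem sqrt_le_norm_momentum (hc : 0 < c) : √c ≤ ‖fourthRoot (axisPotential β c y)‖ ^ 2 := by
  rw [← norm_pow]
  exact (sqrt_le_re_momentum (β := β) (y := y) hc).trans (re_le_norm _)

theorem sqrt_one_add_pow_three_le (hy : 0 ≤ y) : √(1 + y) ^ 3 ≤ (1 + y) ^ 2 := by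
  have hsq := Real.sq_sqrt (by linarith : 0 ≤ 1 + y)
  have hone : 1 ≤ √(1 + y) := Real.one_le_sqrt.2 (by linarith)
  calc √(1 + y) ^ 3 ≤ √(1 + y) ^ 4 := pow_le_pow_right₀ hone (by norm_num)
    _ = (√(1 + y) ^ 2) ^ 2 := by ring
    _ = (1 + y) ^ 2 := by rw [hsq]

theorem linear_div_norm_fourthRoot_pow_le (hβ : 0 ≤ β) (hc : 1 ≤ c) (hy : 0 ≤ y) :
    6 * y / (8 * ‖fourthRoot (axisPotential β c y)‖ ^ 6) ≤ 6 / (√c * √(1 + y) ^ 3) := by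
  have hc₀ : 0 < c := zero_lt_one.trans_le hc
  have hone := one_le_norm_fourthRoot_axisPotential (β := β) (y := y) hc
  have hroot := sqrt_le_norm_momentum (β := β) (y := y) hc₀
  have hcube := one_add_pow_three_le hβ hc hy
  rw [← norm_fourthRoot_pow_four (slitPlane_ne_zero (axisPotential_mem_slitPlane hc₀))] at hcube
  have hsqrt := sqrt_one_add_pow_three_le hy
  have : 0 < √(1 + y) := Real.sqrt_pos.2 (by linarith)
  set H := ‖fourthRoot (axisPotential β c y)‖
  rw [div_le_div_iff₀ (by positivity) (by positivity)]
  calc 6 * y * (√c * √(1 + y) ^ 3) ≤ 6 * (1 + y) * (H ^ 2 * (1 + y) ^ 2) := by gcongr; linarith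
    _ = 6 * (H ^ 2 * (1 + y) ^ 3) := by ring
    _ ≤ 6 * (H ^ 2 * (8 * H ^ 4)) := by gcongr
    _ = 6 * (8 * H ^ 6) := by ring

theorem quartic_div_norm_fourthRoot_pow_le (hβ : 0 ≤ β) (hc : 1 ≤ c) (hy : 0 ≤ y) :
    5 * (3 * y ^ 2 + 4 * β) ^ 2 / (32 * ‖fourthRoot (axisPotential β c y)‖ ^ 10) ≤
      160 * (1 + β) ^ 2 / (√c * √(1 + y) ^ 3) := by
  have hc₀ : 0 < c := zero_lt_one.trans_le hc
  have hone := one_le_norm_fourthRoot_axisPotential (β := β) (y := y) hc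
  have hroot := sqrt_le_norm_momentum (β := β) (y := y) hc₀
  have hcube := one_add_pow_three_le hβ hc hy
  rw [← norm_fourthRoot_pow_four (slitPlane_ne_zero (axisPotential_mem_slitPlane hc₀))] at hcube
  have hsqrt := sqrt_one_add_pow_three_le hy
  have : 0 < √(1 + y) := Real.sqrt_pos.2 (by linarith)
  set H := ‖fourthRoot (axisPotential β c y)‖
  have hquad : 3 * y ^ 2 + 4 * β ≤ 4 * (1 + β) * (1 + y) ^ 2 := by nlinarith [mul_nonneg hβ hy]
  rw [div_le_div_iff₀ (by positivity) (by positivity)]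
  calc 5 * (3 * y ^ 2 + 4 * β) ^ 2 * (√c * √(1 + y) ^ 3)
      ≤ 5 * (4 * (1 + β) * (1 + y) ^ 2) ^ 2 * (H ^ 2 * (1 + y) ^ 2) := by gcongr
    _ = 80 * (1 + β) ^ 2 * (H ^ 2 * ((1 + y) ^ 3) ^ 2) := by ring
    _ ≤ 80 * (1 + β) ^ 2 * (H ^ 2 * (8 * H ^ 4) ^ 2) := by gcongr
    _ = 160 * (1 + β) ^ 2 * (32 * H ^ 10) := by ring

theorem norm_axisError_le (hβ : 0 ≤ β) (hc : 1 ≤ c) (hy : 0 ≤ y) :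
    ‖axisError β c y‖ ≤ 170 * (1 + β) ^ 2 / √c * (1 / √(1 + y) ^ 3) := by
  calc ‖axisError β c y‖
      ≤ 6 * y / (8 * ‖fourthRoot (axisPotential β c y)‖ ^ 6) +
          5 * (3 * y ^ 2 + 4 * β) ^ 2 / (32 * ‖fourthRoot (axisPotential β c y)‖ ^ 10) := by
        refine (norm_add_le _ _).trans_eq ?_
        simp only [norm_div, norm_mul, norm_pow, norm_I, mul_one, norm_real, norm_ofNat,
          Real.norm_of_nonneg (by positivity : 0 ≤ 3 * y ^ 2 + 4 * β),
          Real.norm_of_nonneg (by positivity : 0 ≤ 6 * y)]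
    _ ≤ 10 * (1 + β) ^ 2 / (√c * √(1 + y) ^ 3) + 160 * (1 + β) ^ 2 / (√c * √(1 + y) ^ 3) := by
        refine add_le_add ((linear_div_norm_fourthRoot_pow_le hβ hc hy).trans ?_)
          (quartic_div_norm_fourthRoot_pow_le hβ hc hy)
        gcongr
        nlinarith
    _ = 170 * (1 + β) ^ 2 / √c * (1 / √(1 + y) ^ 3) := by
        rw [← add_div, div_mul_div_comm, mul_one]
        ring

theorem continuous_axisError (hc : 0 < c) : Continuous (axisError β c) := by
  have h := continuous_fourthRoot_axisPotential (β := β) hc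
  unfold axisError
  fun_prop (disch := simp [fourthRoot_ne_zero])

theorem antitoneOn_re_axisPhase (hβ : 0 ≤ β) (hc : 0 < c) :
    AntitoneOn (fun y => (axisPhase β c y).re) (Ici 0) := by
  have hd : ∀ y, HasDerivAt (fun y => (axisPhase β c y).re) (momentum β c y).im y := fun y => by
    refine (reCLM.hasFDerivAt.comp_hasDerivAt y (hasDerivAt_axisPhase hc)).congr_deriv ?_
    simp [axisAmplitude, momentum]
  refine antitoneOn_of_deriv_nonpos (convex_Ici 0)
    (fun y _ => (hd y).continuousAt.continuousWithinAt)
    (fun y _ => (hd y).differentiableAt.differentiableWithinAt) fun y hy => ?_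
  rw [interior_Ici] at hy
  rw [(hd y).deriv]
  exact im_momentum_nonpos hβ hc (le_of_lt hy)

/-- A value of the parameter from which on the Liouville–Green approximation is valid on the whole
upper imaginary axis. -/
noncomputable def axisThreshold (β : ℝ) : ℝ := (3000 * (1 + β) ^ 2) ^ 2

theorem one_le_of_axisThreshold_le (hβ : 0 ≤ β) (hc : axisThreshold β ≤ c) : 1 ≤ c := by
  refine le_trans ?_ hc
  unfold axisThreshold
  nlinarith [sq_nonneg β, sq_nonneg (β ^ 2)]

/-- The flow of translations of the line. -/
def translationFlow (s y : ℝ) : ℝ := y + s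

theorem isVolterraDatum_axis {Y : ℝ} (hβ : 0 ≤ β) (hc : axisThreshold β ≤ c) (hY : 0 ≤ Y) :
    IsVolterraDatum translationFlow (axisPhase β c) (axisError β c) (Ici Y)
      fun s => 170 * (1 + β) ^ 2 / √c * (1 / √(1 + Y + s) ^ 3) where
  mapsTo s hs y hy := mem_Ici.2 (le_add_of_le_of_nonneg (mem_Ici.1 hy) (le_of_lt hs))
  continuousOn_flow := by unfold translationFlow; fun_prop
  continuousOn_phase y _ := (hasDerivAt_axisPhase
    (zero_lt_one.trans_le (one_le_of_axisThreshold_le hβ hc))).continuousAt.continuousWithinAt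
  continuousOn_error :=
    (continuous_axisError (zero_lt_one.trans_le (one_le_of_axisThreshold_le hβ hc))).continuousOn
  re_phase_le y hy s hs :=
    antitoneOn_re_axisPhase hβ (zero_lt_one.trans_le (one_le_of_axisThreshold_le hβ hc))
      (mem_Ici.2 (hY.trans hy)) (mem_Ici.2 (add_nonneg (hY.trans hy) (le_of_lt hs)))
      (le_add_of_nonneg_right (le_of_lt hs))
  norm_error_le y hy s hs := by
    rw [mem_Ici] at hy
    rw [mem_Ioi] at hs
    refine (norm_axisError_le hβ (one_le_of_axisThreshold_le hβ hc)
      (add_nonneg (hY.trans hy) hs.le)).trans ?_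
    have : 0 < √(1 + Y + s) := Real.sqrt_pos.2 (by linarith)
    have hle : 1 + Y + s ≤ 1 + (y + s) := by linarith
    gcongr
  integrableOn := (integrableOn_one_div_sqrt_pow_three (by linarith)).const_mul _
  integral_le := by
    rw [integral_const_mul, integral_one_div_sqrt_pow_three (by linarith)]
    have hsqrt : 3000 * (1 + β) ^ 2 ≤ √c := Real.le_sqrt_of_sq_le hc
    have hone : 1 ≤ √(1 + Y) := Real.one_le_sqrt.2 (by linarith)
    have : 0 < (1 + β) ^ 2 := by positivity
    calc 170 * (1 + β) ^ 2 / √c * (2 / √(1 + Y))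
        ≤ 170 * (1 + β) ^ 2 / (3000 * (1 + β) ^ 2) * (2 / 1) := by gcongr
      _ ≤ 1 / 8 := by
        field_simp
        norm_num

theorem isOrbit_axis : IsOrbit translationFlow id 0 (Ici 0) where
  continuousOn := continuousOn_id
  mapsTo := mapsTo_id _
  flow_eq _ _ _ _ := rfl

end Axis

/-! ### The phase of the subdominant solution at the origin -/

section Wronskian

theorem exists_eq_mul_of_tendsto_wronskian {u u' v v' V : ℝ → ℂ} {Y : ℝ}
    (hu : ∀ y ∈ Ioi Y, HasDerivAt u (u' y) y) (hu' : ∀ y ∈ Ioi Y, HasDerivAt u' (V y * u y) y)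
    (hv : ∀ y ∈ Ioi Y, HasDerivAt v (v' y) y) (hv' : ∀ y ∈ Ioi Y, HasDerivAt v' (V y * v y) y)
    (hv₀ : ∀ y ∈ Ioi Y, v y ≠ 0)
    (hlim : Tendsto (fun y => u y * v' y - u' y * v y) atTop (𝓝 0)) :
    ∃ γ : ℂ, ∀ y ∈ Ioi Y, u y = γ * v y := by
  have hconst : ∀ y ∈ Ioi Y, HasDerivAt (fun y => u y * v' y - u' y * v y) 0 y := fun y hy =>
    (((hu y hy).mul (hv' y hy)).sub ((hu' y hy).mul (hv y hy))).congr_deriv (by ring)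
  obtain ⟨W, hW⟩ := isOpen_Ioi.exists_is_const_of_deriv_eq_zero isPreconnected_Ioi
    (fun y hy => (hconst y hy).differentiableAt.differentiableWithinAt)
    fun y hy => (hconst y hy).deriv
  obtain rfl : W = 0 := tendsto_nhds_unique (tendsto_const_nhds.congr'
    ((eventually_gt_atTop Y).mono fun y hy => (hW y hy).symm)) hlim
  have hquot : ∀ y ∈ Ioi Y, HasDerivAt (fun y => u y / v y) 0 y := fun y hy =>
    ((hu y hy).div (hv y hy) (hv₀ y hy)).congr_deriv
      (div_eq_zero_iff.2 (.inl (by linear_combination -hW y hy)))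
  obtain ⟨γ, hγ⟩ := isOpen_Ioi.exists_is_const_of_deriv_eq_zero isPreconnected_Ioi
    (fun y hy => (hquot y hy).differentiableAt.differentiableWithinAt)
    fun y hy => (hquot y hy).deriv
  exact ⟨γ, fun y hy => (div_eq_iff (hv₀ y hy)).1 (hγ y hy)⟩

end Wronskian

section AxisSolution

/-- The Volterra correction of the Liouville–Green approximation on the imaginary axis. -/
noncomputable def axisCorrection (β c y : ℝ) : ℂ :=
  volterraSolution translationFlow (axisPhase β c) (axisError β c) y

/-- The solution of the equation on the imaginary axis that is close to its Liouville–Green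
approximation. -/
noncomputable def axisSolution (β c y : ℝ) : ℂ :=
  liouvilleGreen translationFlow (axisPhase β c) (axisError β c) (axisAmplitude β c) y

/-- The derivative of `axisSolution`. -/
noncomputable def axisSolutionDeriv (β c y : ℝ) : ℂ :=
  liouvilleGreenDeriv translationFlow (axisPhase β c) (axisError β c) (axisAmplitude β c)
    (axisAmplitudeDeriv β c) (-I) y

variable {β c y : ℝ}

theorem axisSolution_eq (β c y : ℝ) : axisSolution β c y =
    axisAmplitude β c y * exp (axisPhase β c y) * axisCorrection β c y := rfl

theorem norm_axisCorrection_sub_one_le (hβ : 0 ≤ β) (hc : axisThreshold β ≤ c) (hy : 0 ≤ y) :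
    ‖axisCorrection β c y - 1‖ ≤ 1 / 2 / √(1 + y) := by
  have hle := (isVolterraDatum_axis hβ hc hy).norm_volterraSolution_sub_one_le (x := y) self_mem_Ici
  rw [integral_const_mul, integral_one_div_sqrt_pow_three (by linarith)] at hle
  have hsqrt : 3000 * (1 + β) ^ 2 ≤ √c := Real.le_sqrt_of_sq_le hc
  have : 0 < (1 + β) ^ 2 := by positivity
  have : 0 < √(1 + y) := Real.sqrt_pos.2 (by linarith)
  calc ‖axisCorrection β c y - 1‖ ≤ 4 * (170 * (1 + β) ^ 2 / √c * (2 / √(1 + y))) := hle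
    _ ≤ 4 * (170 * (1 + β) ^ 2 / (3000 * (1 + β) ^ 2) * (2 / √(1 + y))) := by gcongr
    _ ≤ 1 / 2 / √(1 + y) := by
      field_simp
      norm_num

theorem tendsto_one_div_sqrt_one_add {n : ℕ} (hn : n ≠ 0) :
    Tendsto (fun y : ℝ => 1 / √(1 + y) ^ n) atTop (𝓝 0) :=
  tendsto_const_nhds.div_atTop ((tendsto_pow_atTop hn).comp
    (Real.tendsto_sqrt_atTop.comp (tendsto_atTop_add_const_left _ 1 tendsto_id)))

theorem tendsto_axisCorrection (hβ : 0 ≤ β) (hc : axisThreshold β ≤ c) :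
    Tendsto (axisCorrection β c) atTop (𝓝 1) := by
  refine tendsto_iff_norm_sub_tendsto_zero.2 (squeeze_zero' (.of_forall fun _ => norm_nonneg _)
    ((eventually_ge_atTop 0).mono fun y hy => norm_axisCorrection_sub_one_le hβ hc hy) ?_)
  simpa [div_eq_mul_inv] using (tendsto_one_div_sqrt_one_add one_ne_zero).const_mul 2⁻¹

theorem re_axisCorrection_zero_pos (hβ : 0 ≤ β) (hc : axisThreshold β ≤ c) :
    0 < (axisCorrection β c 0).re := by
  have hle := (abs_re_le_norm _).trans (norm_axisCorrection_sub_one_le hβ hc le_rfl)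
  rw [sub_re, one_re, add_zero, Real.sqrt_one] at hle
  linarith [(abs_le.1 hle).1]

theorem axisCorrection_ne_zero (hβ : 0 ≤ β) (hc : axisThreshold β ≤ c) (hy : 0 ≤ y) :
    axisCorrection β c y ≠ 0 :=
  (isVolterraDatum_axis hβ hc le_rfl).volterraSolution_ne_zero hy

theorem axisSolution_ne_zero (hβ : 0 ≤ β) (hc : axisThreshold β ≤ c) (hy : 0 ≤ y) :
    axisSolution β c y ≠ 0 :=
  mul_ne_zero (mul_ne_zero (axisAmplitude_ne_zero β c y) (exp_ne_zero _))
    (axisCorrection_ne_zero hβ hc hy)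

theorem hasDerivAt_axisSolution (hβ : 0 ≤ β) (hc : axisThreshold β ≤ c) (hy : 0 < y) :
    HasDerivAt (axisSolution β c) (axisSolutionDeriv β c y) y := by
  have hc₀ : 0 < c := zero_lt_one.trans_le (one_le_of_axisThreshold_le hβ hc)
  have hu := (isVolterraDatum_axis hβ hc le_rfl).hasDerivAt_liouvilleGreen
    (ρ := axisAmplitude β c) (ρ' := axisAmplitudeDeriv β c) (κ := -I) isOrbit_axis hy
  exact hu (axisAmplitude_ne_zero β c y) (hasDerivAt_axisPhase hc₀) (hasDerivAt_axisAmplitude hc₀)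

theorem hasDerivAt_axisSolutionDeriv (hβ : 0 ≤ β) (hc : axisThreshold β ≤ c) (hy : 0 < y) :
    HasDerivAt (axisSolutionDeriv β c) (-axisPotential β c y * axisSolution β c y) y := by
  have hc₀ : 0 < c := zero_lt_one.trans_le (one_le_of_axisThreshold_le hβ hc)
  have hu := (isVolterraDatum_axis hβ hc le_rfl).hasDerivAt_liouvilleGreenDeriv
    (ρ := axisAmplitude β c) (ρ' := axisAmplitudeDeriv β c) (κ := -I) isOrbit_axis hy
  exact hu (axisAmplitude_ne_zero β c y) (hasDerivAt_axisPhase hc₀) (hasDerivAt_axisAmplitude hc₀)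
    (hasDerivAt_axisAmplitudeDeriv hc₀) (axisError_mul_axisAmplitude hc₀)

theorem continuousOn_axisSolution (hβ : 0 ≤ β) (hc : axisThreshold β ≤ c) :
    ContinuousOn (axisSolution β c) (Ici 0) := by
  have hc₀ : 0 < c := zero_lt_one.trans_le (one_le_of_axisThreshold_le hβ hc)
  have hρ : Continuous (axisAmplitude β c) :=
    continuous_iff_continuousAt.2 fun _ => (hasDerivAt_axisAmplitude hc₀).continuousAt
  have hΦ : Continuous (axisPhase β c) :=
    continuous_iff_continuousAt.2 fun _ => (hasDerivAt_axisPhase hc₀).continuousAt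
  exact (hρ.mul hΦ.cexp).continuousOn.mul
    (isVolterraDatum_axis hβ hc le_rfl).continuousOn_volterraSolution

theorem norm_exp_axisPhase_le (hβ : 0 ≤ β) (hc : 0 < c) (hy : 0 ≤ y) :
    ‖exp (axisPhase β c y)‖ ≤ 1 := by
  rw [norm_exp, Real.exp_le_one_iff]
  simpa [axisPhase] using antitoneOn_re_axisPhase hβ hc self_mem_Ici hy hy

theorem norm_axisSolution_le (hβ : 0 ≤ β) (hc : axisThreshold β ≤ c) (hy : 0 ≤ y) :
    ‖axisSolution β c y‖ ≤ 2 := by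
  have hc₁ := one_le_of_axisThreshold_le hβ hc
  have hρ : ‖axisAmplitude β c y‖ ≤ 1 := by
    rw [axisAmplitude, norm_div, norm_one]
    exact div_le_self zero_le_one (one_le_norm_fourthRoot_axisPotential hc₁)
  have hm := (isVolterraDatum_axis hβ hc le_rfl).norm_volterraSolution_le (x := y) hy
  rw [axisSolution_eq, norm_mul, norm_mul]
  calc ‖axisAmplitude β c y‖ * ‖exp (axisPhase β c y)‖ * ‖axisCorrection β c y‖ ≤ 1 * 1 * 2 := by
        gcongr
        exacts [norm_exp_axisPhase_le hβ (zero_lt_one.trans_le hc₁) hy, hm]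
    _ = 2 := by norm_num

theorem norm_axisAmplitudeDeriv_le (hβ : 0 ≤ β) (hc : 1 ≤ c) :
    ‖axisAmplitudeDeriv β c y‖ ≤ 3 * y ^ 2 + 4 * β := by
  have hone := one_le_pow₀ (n := 5) (one_le_norm_fourthRoot_axisPotential (β := β) (y := y) hc)
  rw [axisAmplitudeDeriv, norm_div, norm_mul, norm_I, mul_one, norm_real,
    Real.norm_of_nonneg (by positivity), norm_mul, norm_pow, norm_ofNat]
  exact div_le_self (by positivity) (by linarith)

theorem norm_I_div_axisAmplitude_le (hβ : 0 ≤ β) (hc : 1 ≤ c) (hy : 0 ≤ y) :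
    ‖-I / axisAmplitude β c y‖ ≤ c + (y ^ 3 + 4 * β * y) := by
  have hc₀ : 0 < c := zero_lt_one.trans_le hc
  rw [norm_div, norm_neg, norm_I, axisAmplitude, norm_div, norm_one, one_div_one_div]
  calc ‖fourthRoot (axisPotential β c y)‖ ≤ ‖fourthRoot (axisPotential β c y)‖ ^ 4 :=
        le_self_pow₀ (one_le_norm_fourthRoot_axisPotential hc) four_ne_zero
    _ = ‖axisPotential β c y‖ :=
        norm_fourthRoot_pow_four (slitPlane_ne_zero (axisPotential_mem_slitPlane hc₀))
    _ ≤ c + (y ^ 3 + 4 * β * y) := norm_axisPotential_le hβ hc₀.le hy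

theorem norm_axisSolutionDeriv_le (hβ : 0 ≤ β) (hc : axisThreshold β ≤ c) (hy : 0 ≤ y) :
    ‖axisSolutionDeriv β c y‖ ≤
      1 * ((3 * y ^ 2 + 4 * β) * 2 + (c + (y ^ 3 + 4 * β * y)) * (2 + 2 * 1)) := by
  have hc₁ := one_le_of_axisThreshold_le hβ hc
  have hdatum := isVolterraDatum_axis hβ hc le_rfl
  refine (norm_mul_le _ _).trans ?_
  gcongr
  · exact norm_exp_axisPhase_le hβ (zero_lt_one.trans_le hc₁) hy
  refine (norm_add_le _ _).trans ?_
  rw [norm_mul, norm_mul]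
  gcongr
  · exact norm_axisAmplitudeDeriv_le hβ hc₁
  · exact hdatum.norm_volterraSolution_le hy
  · exact norm_I_div_axisAmplitude_le hβ hc₁ hy
  refine (norm_sub_le _ _).trans ?_
  rw [norm_mul, Complex.norm_two]
  gcongr
  exacts [hdatum.norm_volterraSolution_le hy, hdatum.norm_volterraRemainder_le hy]

theorem axisSolutionDeriv_isBigO (hβ : 0 ≤ β) (hc : axisThreshold β ≤ c) :
    axisSolutionDeriv β c =O[atTop] fun y => Real.exp (y ^ 2) := by
  have hc₁ := one_le_of_axisThreshold_le hβ hc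
  refine .of_bound (10 + 24 * β + 4 * c) ((eventually_ge_atTop 0).mono fun y hy => ?_)
  refine (norm_axisSolutionDeriv_le hβ hc hy).trans ?_
  rw [Real.norm_of_nonneg (Real.exp_nonneg _)]
  have hexp := Real.quadratic_le_exp_of_nonneg (sq_nonneg y)
  set E := Real.exp (y ^ 2)
  have hone : 1 ≤ E := by nlinarith [sq_nonneg y]
  have hlinear : y ≤ E := by nlinarith [sq_nonneg (y - 1)]
  have hsq : y ^ 2 ≤ E := by nlinarith
  have hcube : y ^ 3 ≤ E := by nlinarith [sq_nonneg (y ^ 2 - y)]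
  have hcE : c * 1 ≤ c * E := by gcongr
  have hβE : β * 1 ≤ β * E := by gcongr
  have hβyE : β * y ≤ β * E := by gcongr
  linarith

end AxisSolution

section Connection

variable {β c c' y : ℝ} {u : ℂ → ℂ}

theorem IsSubdominant.hasDerivAt_axis (hu : IsSubdominant β c u) (y : ℝ) :
    HasDerivAt (fun y : ℝ => u (y * I)) (I * deriv u (y * I)) y := by
  have h := hasDerivAt_comp_vertical (r := 0) (y := y)
    (hu.isSolutionOn.hasDerivAt isOpen_univ (mem_univ _))
  simpa [mul_comm] using h

theorem IsSubdominant.hasDerivAt_deriv_axis (hu : IsSubdominant β c u) (y : ℝ) :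
    HasDerivAt (fun y : ℝ => I * deriv u (y * I)) (-axisPotential β c y * u (y * I)) y := by
  have h := hasDerivAt_comp_vertical (r := 0) (y := y)
    (hu.isSolutionOn.hasDerivAt_deriv isOpen_univ (mem_univ _))
  refine (show HasDerivAt _ _ y by simpa using h.const_mul I).congr_deriv ?_
  rw [potential_mul_I]
  linear_combination axisPotential β c y * u (y * I) * I_mul_I

theorem IsSubdominant.tendsto_wronskian_axisSolution (hu : IsSubdominant β c u) (hβ : 0 ≤ β)
    (hc : axisThreshold β ≤ c) :
    Tendsto (fun y : ℝ => u (y * I) * axisSolutionDeriv β c y -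
      I * deriv u (y * I) * axisSolution β c y) atTop (𝓝 0) := by
  have hc₀ : 0 ≤ c := zero_le_one.trans (one_le_of_axisThreshold_le hβ hc)
  have hO := hu.isBigO_vertical hβ hc₀ le_rfl 2
  have hO' := hu.deriv_isBigO_vertical hβ hc₀ le_rfl 2
  simp only [ofReal_zero, zero_add] at hO hO'
  have hbdd : axisSolution β c =O[atTop] fun y => Real.exp (y ^ 2) :=
    .of_bound 2 ((eventually_ge_atTop 0).mono fun y hy => by
      rw [Real.norm_of_nonneg (Real.exp_nonneg _)]
      linarith [norm_axisSolution_le hβ hc hy, Real.one_le_exp (sq_nonneg y)])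
  have hexp : Tendsto (fun y : ℝ => Real.exp (-(2 * y ^ 2)) * Real.exp (y ^ 2)) atTop (𝓝 0) := by
    simp only [← Real.exp_add]
    refine Real.tendsto_exp_neg_atTop_nhds_zero.comp (tendsto_pow_atTop two_ne_zero) |>.congr
      fun y => ?_
    rw [Function.comp_apply]
    ring_nf
  refine (((hO.mul (axisSolutionDeriv_isBigO hβ hc)).sub
    ((hO'.const_mul_left I).mul hbdd)).trans_tendsto hexp)

theorem IsSubdominant.exists_eq_mul_axisSolution (hu : IsSubdominant β c u) (hβ : 0 ≤ β)
    (hc : axisThreshold β ≤ c) :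
    ∃ γ : ℂ, ∀ y ∈ Ici (0 : ℝ), u (y * I) = γ * axisSolution β c y := by
  obtain ⟨γ, hγ⟩ := exists_eq_mul_of_tendsto_wronskian (Y := 0)
    (fun y _ => hu.hasDerivAt_axis y) (fun y _ => hu.hasDerivAt_deriv_axis y)
    (fun y hy => hasDerivAt_axisSolution hβ hc hy)
    (fun y hy => hasDerivAt_axisSolutionDeriv hβ hc hy)
    (fun y hy => axisSolution_ne_zero hβ hc (le_of_lt hy))
    (hu.tendsto_wronskian_axisSolution hβ hc)
  have heq : EqOn (fun y : ℝ => u (y * I)) (fun y => γ * axisSolution β c y) (Ioi 0) := hγ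
  refine ⟨γ, heq.of_subset_closure
    (fun y _ => (hu.hasDerivAt_axis y).continuousAt.continuousWithinAt)
    (continuousOn_const.mul (continuousOn_axisSolution hβ hc)) Ioi_subset_Ici_self ?_⟩
  rw [closure_Ioi]

theorem tendsto_volterraSolution_verticalFlow {ι : Type*} {l : Filter ι} {x : ι → ℂ} (hβ : 0 ≤ β)
    (hc : 0 ≤ c) (hre : ∀ᶠ i in l, 0 ≤ (x i).re) (him : ∀ᶠ i in l, 0 ≤ (x i).im)
    (hx : Tendsto (fun i => (x i).re + (x i).im) l atTop) :
    Tendsto (fun i => volterraSolution verticalFlow (fun p => phase β p.1) (errorTerm β) (x i, c)) l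
      (𝓝 1) := by
  refine tendsto_iff_norm_sub_tendsto_zero.2 (squeeze_zero' (.of_forall fun _ => norm_nonneg _)
    ?_ (tendsto_const_nhds.div_atTop (Real.tendsto_sqrt_atTop.comp hx) : Tendsto
      (fun i => 24 * (c + 1) / √((x i).re + (x i).im)) l (𝓝 0)))
  filter_upwards [hre, him, hx.eventually_ge_atTop (radius β c)] with i hre him hR
  exact norm_volterraSolution_sub_one_le_of_region hβ hc hre him hR

theorem tendsto_outerSolution_div (hβ : 0 ≤ β) (hc : 0 ≤ c) (hc' : 0 ≤ c') :
    Tendsto (fun y : ℝ => outerSolution β c (y * I) / outerSolution β c' (y * I)) atTop (𝓝 1) := by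
  have hm : ∀ {c : ℝ}, 0 ≤ c → Tendsto (fun y : ℝ => volterraSolution verticalFlow
      (fun p => phase β p.1) (errorTerm β) (y * I, c)) atTop (𝓝 1) := fun {c} hc =>
    tendsto_volterraSolution_verticalFlow hβ hc (.of_forall fun y => by simp)
      ((eventually_ge_atTop 0).mono fun y hy => by simpa using hy)
      (tendsto_id.congr fun y => by simp)
  refine (div_one (1 : ℂ) ▸ (hm hc).div (hm hc') one_ne_zero).congr' ?_
  filter_upwards [eventually_ge_atTop 0, eventually_ge_atTop (radius β c)] with y hy hRy
  have hfar := isFar_of_radius_le (x := y * I) hβ (by simp) (by simpa using hy) (by simpa using hRy)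
  exact (mul_div_mul_left _ _ (mul_ne_zero (amplitude_ne_zero hfar.fourthRoot_sub_ne_zero)
    (exp_ne_zero _))).symm

/-- The limit of `(axisPhase β c' - axisPhase β c) / I` at infinity: the total difference of phase
between the solutions with parameters `c` and `c'`. -/
noncomputable def phaseDifference (β c c' : ℝ) : ℂ :=
  ∫ s in Ioi (0 : ℝ), (momentum β c s - momentum β c' s)

theorem momentum_sub_mul_momentum_add (hc : 0 < c) (hc' : 0 < c') :
    (momentum β c y - momentum β c' y) * (momentum β c y + momentum β c' y) = (c - c' : ℝ) := by
  rw [mul_comm, ← sq_sub_sq, momentum_sq hc, momentum_sq hc', axisPotential, axisPotential]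
  push_cast
  ring

theorem sqrt_one_add_pow_three_le_re_momentum (hβ : 0 ≤ β) (hc : 1 ≤ c) (hy : 0 ≤ y) :
    √(1 + y) ^ 3 ≤ 4 * (momentum β c y).re := by
  have hc₀ : 0 < c := zero_lt_one.trans_le hc
  have hre := re_momentum_pos (β := β) (y := y) hc₀
  refine le_of_sq_le_sq ?_ (by linarith)
  calc (√(1 + y) ^ 3) ^ 2 = (√(1 + y) ^ 2) ^ 3 := by ring
    _ = (1 + y) ^ 3 := by rw [Real.sq_sqrt (by linarith)]
    _ ≤ 8 * ‖axisPotential β c y‖ := one_add_pow_three_le hβ hc hy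
    _ = 8 * ‖momentum β c y‖ ^ 2 := by rw [norm_momentum_sq hc₀]
    _ ≤ 8 * (2 * (momentum β c y).re ^ 2) := by gcongr; exact norm_momentum_sq_le hc₀
    _ = (4 * (momentum β c y).re) ^ 2 := by ring

theorem norm_momentum_sub_le (hβ : 0 ≤ β) (hc : 1 ≤ c) (hc' : 0 < c') (hy : 0 ≤ y) :
    ‖momentum β c y - momentum β c' y‖ ≤ 4 * |c - c'| * (1 / √(1 + y) ^ 3) := by
  have hc₀ : 0 < c := zero_lt_one.trans_le hc
  have : 0 < √(1 + y) := Real.sqrt_pos.2 (by linarith)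
  have hsum : √(1 + y) ^ 3 ≤ 4 * ‖momentum β c y + momentum β c' y‖ := by
    have hre := re_le_norm (momentum β c y + momentum β c' y)
    rw [add_re] at hre
    linarith [sqrt_one_add_pow_three_le_re_momentum hβ hc hy,
      re_momentum_pos (β := β) (y := y) hc']
  have hmul := congrArg norm (momentum_sub_mul_momentum_add (β := β) (y := y) hc₀ hc')
  rw [norm_mul, norm_real, Real.norm_eq_abs] at hmul
  rw [mul_one_div, le_div_iff₀ (by positivity), ← hmul]
  nlinarith [norm_nonneg (momentum β c y - momentum β c' y)]

theorem integrableOn_momentum_sub (hβ : 0 ≤ β) (hc : 1 ≤ c) (hc' : 0 < c') :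
    IntegrableOn (fun s => momentum β c s - momentum β c' s) (Ioi 0) := by
  refine ((integrableOn_one_div_sqrt_pow_three one_pos).const_mul (4 * |c - c'|)).mono'
    ((continuous_momentum (zero_lt_one.trans_le hc)).sub
      (continuous_momentum hc')).aestronglyMeasurable ?_
  filter_upwards [self_mem_ae_restrict measurableSet_Ioi] with s hs
  exact norm_momentum_sub_le hβ hc hc' (le_of_lt hs)

theorem norm_phaseDifference_le (hβ : 0 ≤ β) (hc : 1 ≤ c) (hc' : 0 < c') :
    ‖phaseDifference β c c'‖ ≤ 8 * |c - c'| := by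
  calc ‖phaseDifference β c c'‖ ≤ ∫ s in Ioi (0 : ℝ), 4 * |c - c'| * (1 / √(1 + s) ^ 3) := by
        refine norm_integral_le_of_norm_le
          ((integrableOn_one_div_sqrt_pow_three one_pos).const_mul _) ?_
        filter_upwards [self_mem_ae_restrict measurableSet_Ioi] with s hs
        exact norm_momentum_sub_le hβ hc hc' (le_of_lt hs)
    _ = 8 * |c - c'| := by
        rw [integral_const_mul, integral_one_div_sqrt_pow_three one_pos, Real.sqrt_one]
        ring

theorem phaseDifference_sub {c'' : ℝ} (hβ : 0 ≤ β) (hc : 1 ≤ c) (hc' : 1 ≤ c') (hc'' : 0 < c'') :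
    phaseDifference β c c'' - phaseDifference β c' c'' = phaseDifference β c c' := by
  rw [phaseDifference, phaseDifference, ← integral_sub (integrableOn_momentum_sub hβ hc hc'')
    (integrableOn_momentum_sub hβ hc' hc'')]
  simp only [sub_sub_sub_cancel_right, phaseDifference]

theorem continuousOn_phaseDifference (hβ : 0 ≤ β) (hc' : 0 < c') :
    ContinuousOn (phaseDifference β · c') (Ici 1) := by
  refine (LipschitzOnWith.of_dist_le_mul (K := 8) fun c₁ h₁ c₂ h₂ => ?_).continuousOn
  rw [dist_eq_norm, Real.dist_eq, phaseDifference_sub hβ h₁ h₂ hc']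
  exact norm_phaseDifference_le hβ h₁ (zero_lt_one.trans_le h₂)

theorem re_nonneg_of_mul_eq_ofReal {z w : ℂ} {t : ℝ} (h : z * w = t) (ht : 0 ≤ t) (hw : 0 < w.re) :
    0 ≤ z.re := by
  have hw₀ : w ≠ 0 := fun h₀ => hw.ne' (by rw [h₀, zero_re])
  rw [eq_div_of_mul_eq hw₀ h, div_re, ofReal_re, ofReal_im, zero_mul, zero_div, add_zero]
  have := normSq_nonneg w
  positivity

theorem le_re_momentum_sub (hβ : 0 ≤ β) (hc : 0 < c) (hc' : 1 ≤ c') (hy : 0 ≤ y) (hy₁ : y ≤ 1) :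
    √c - (c' + 1 + 4 * β) ≤ (momentum β c y - momentum β c' y).re := by
  have hc₀' : 0 < c' := zero_lt_one.trans_le hc'
  have hnorm : ‖momentum β c' y‖ ≤ c' + 1 + 4 * β := by
    calc ‖momentum β c' y‖ = ‖fourthRoot (axisPotential β c' y)‖ ^ 2 := norm_pow _ _
      _ ≤ ‖fourthRoot (axisPotential β c' y)‖ ^ 4 :=
          pow_le_pow_right₀ (one_le_norm_fourthRoot_axisPotential hc') (by norm_num)
      _ = ‖axisPotential β c' y‖ :=
          norm_fourthRoot_pow_four (slitPlane_ne_zero (axisPotential_mem_slitPlane hc₀'))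
      _ ≤ c' + (y ^ 3 + 4 * β * y) := norm_axisPotential_le hβ hc₀'.le hy
      _ ≤ c' + (1 + 4 * β * 1) := by
          gcongr
          exact pow_le_one₀ hy hy₁
      _ = c' + 1 + 4 * β := by ring
  rw [sub_re]
  linarith [sqrt_le_re_momentum (β := β) (y := y) hc, re_le_norm (momentum β c' y)]

theorem le_re_phaseDifference (hβ : 0 ≤ β) (hc' : 1 ≤ c') (h : c' ≤ c) :
    √c - (c' + 1 + 4 * β) ≤ (phaseDifference β c c').re := by
  have hc : 1 ≤ c := hc'.trans h
  have hc₀ : 0 < c := zero_lt_one.trans_le hc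
  have hc₀' : 0 < c' := zero_lt_one.trans_le hc'
  have hint := integrableOn_momentum_sub hβ hc hc₀'
  have hint_re : IntegrableOn (fun s => (momentum β c s - momentum β c' s).re) (Ioi 0) := hint.re
  have hnonneg : ∀ s, 0 ≤ (momentum β c s - momentum β c' s).re := fun s => by
    refine re_nonneg_of_mul_eq_ofReal (momentum_sub_mul_momentum_add hc₀ hc₀') (by linarith) ?_
    rw [add_re]
    linarith [re_momentum_pos (β := β) (y := s) hc₀, re_momentum_pos (β := β) (y := s) hc₀']
  calc √c - (c' + 1 + 4 * β) = ∫ _ in Ioc (0 : ℝ) 1, (√c - (c' + 1 + 4 * β)) := by simp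
    _ ≤ ∫ s in Ioc (0 : ℝ) 1, (momentum β c s - momentum β c' s).re :=
        setIntegral_mono_on (integrableOn_const (by simp))
          (hint_re.mono_set Ioc_subset_Ioi_self) measurableSet_Ioc
          fun s hs => le_re_momentum_sub hβ hc₀ hc' hs.1.le hs.2
    _ ≤ ∫ s in Ioi (0 : ℝ), (momentum β c s - momentum β c' s).re :=
        setIntegral_mono_set hint_re (.of_forall hnonneg) Ioc_subset_Ioi_self.eventuallyLE
    _ = (phaseDifference β c c').re := integral_re hint

theorem tendsto_re_phaseDifference (hβ : 0 ≤ β) (hc' : 1 ≤ c') :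
    Tendsto (fun c => (phaseDifference β c c').re) atTop atTop :=
  tendsto_atTop_mono' atTop ((eventually_ge_atTop c').mono fun _ => le_re_phaseDifference hβ hc')
    (tendsto_atTop_add_const_right _ (-(c' + 1 + 4 * β)) Real.tendsto_sqrt_atTop)

end Connection

section Phase

variable {β c c' y : ℝ} {u u' : ℂ → ℂ}

theorem norm_fourthRoot_le_two_mul_re (x : ℂ) : ‖fourthRoot x‖ ≤ 2 * (fourthRoot x).re := by
  have him : (log x / 4).im = arg x / 4 := by simp [log_im]
  have harg := abs_le.1 (abs_arg_le_pi x)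
  have hcos : 1 / 2 ≤ Real.cos (arg x / 4) := by
    rw [← Real.cos_abs, ← Real.cos_pi_div_three]
    refine Real.cos_le_cos_of_nonneg_of_le_pi (abs_nonneg _) (by linarith [Real.pi_pos]) ?_
    rw [abs_le]
    constructor <;> linarith [Real.pi_pos]
  rw [fourthRoot, norm_exp, exp_re, him]
  nlinarith [Real.exp_pos (log x / 4).re]

theorem norm_fourthRoot_axisPotential_sub_le (hc : 1 ≤ c) (hc' : 1 ≤ c') :
    ‖fourthRoot (axisPotential β c y) - fourthRoot (axisPotential β c' y)‖ ≤
      ‖momentum β c y - momentum β c' y‖ := by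
  have hsum : 1 ≤ ‖fourthRoot (axisPotential β c y) + fourthRoot (axisPotential β c' y)‖ := by
    refine le_trans ?_ (re_le_norm _)
    rw [add_re]
    linarith [norm_fourthRoot_le_two_mul_re (axisPotential β c y),
      norm_fourthRoot_le_two_mul_re (axisPotential β c' y),
      one_le_norm_fourthRoot_axisPotential (β := β) (y := y) hc,
      one_le_norm_fourthRoot_axisPotential (β := β) (y := y) hc']
  rw [momentum, momentum, sq_sub_sq, norm_mul]
  exact le_mul_of_one_le_left (norm_nonneg _) hsum

theorem tendsto_momentum_sub (hβ : 0 ≤ β) (hc : 1 ≤ c) (hc' : 0 < c') :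
    Tendsto (fun y => momentum β c y - momentum β c' y) atTop (𝓝 0) := by
  have hlim := (tendsto_one_div_sqrt_one_add three_ne_zero).const_mul (4 * |c - c'|)
  rw [mul_zero] at hlim
  exact squeeze_zero_norm'
    ((eventually_ge_atTop 0).mono fun y hy => norm_momentum_sub_le hβ hc hc' hy) hlim

theorem tendsto_axisAmplitude_div (hβ : 0 ≤ β) (hc : 1 ≤ c) (hc' : 1 ≤ c') :
    Tendsto (fun y => axisAmplitude β c y / axisAmplitude β c' y) atTop (𝓝 1) := by
  refine tendsto_iff_norm_sub_tendsto_zero.2 (squeeze_zero (fun _ => norm_nonneg _)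
    (fun y => ?_) (norm_zero (E := ℂ) ▸
      (tendsto_momentum_sub hβ hc' (zero_lt_one.trans_le hc)).norm))
  rw [axisAmplitude, axisAmplitude, one_div, one_div, div_inv_eq_mul, inv_mul_eq_div,
    div_sub_one (fourthRoot_ne_zero _), norm_div]
  exact (div_le_self (norm_nonneg _) (one_le_norm_fourthRoot_axisPotential hc)).trans
    (norm_fourthRoot_axisPotential_sub_le hc' hc)

theorem tendsto_exp_axisPhase_div (hβ : 0 ≤ β) (hc : 1 ≤ c) (hc' : 0 < c') :
    Tendsto (fun y => exp (axisPhase β c y) / exp (axisPhase β c' y)) atTop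
      (𝓝 (exp (-(I * phaseDifference β c c')))) := by
  refine ((intervalIntegral_tendsto_integral_Ioi 0 (integrableOn_momentum_sub hβ hc hc')
    tendsto_id).const_mul I).neg.cexp.congr fun y => ?_
  rw [id, intervalIntegral.integral_sub
    ((continuous_momentum (zero_lt_one.trans_le hc)).intervalIntegrable _ _)
    ((continuous_momentum hc').intervalIntegrable _ _), ← exp_sub, axisPhase, axisPhase]
  ring_nf

theorem tendsto_axisSolution_div (hβ : 0 ≤ β) (hc : axisThreshold β ≤ c)
    (hc' : axisThreshold β ≤ c') :
    Tendsto (fun y => axisSolution β c y / axisSolution β c' y) atTop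
      (𝓝 (exp (-(I * phaseDifference β c c')))) := by
  have hc₁ := one_le_of_axisThreshold_le hβ hc
  have hc₁' := one_le_of_axisThreshold_le hβ hc'
  have hlim := ((tendsto_axisAmplitude_div hβ hc₁ hc₁').mul
    (tendsto_exp_axisPhase_div hβ hc₁ (zero_lt_one.trans_le hc₁'))).mul
      ((tendsto_axisCorrection hβ hc).div (tendsto_axisCorrection hβ hc') one_ne_zero)
  rw [one_mul, div_one, mul_one] at hlim
  refine hlim.congr fun y => ?_
  rw [axisSolution_eq, axisSolution_eq, Pi.div_apply]
  ring

theorem IsSubdominant.tendsto_div (hu : IsSubdominant β c u) (hu' : IsSubdominant β c' u')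
    (hβ : 0 ≤ β) (hc : 0 ≤ c) (hc' : 0 ≤ c') :
    Tendsto (fun y : ℝ => u (y * I) / u' (y * I)) atTop (𝓝 1) := by
  refine (tendsto_outerSolution_div hβ hc hc').congr' ?_
  filter_upwards [eventually_ge_atTop 0, eventually_ge_atTop (radius β c),
    eventually_ge_atTop (radius β c')] with y hy hRy hRy'
  rw [hu.eq_outerSolution (y * I) (by simp) (by simpa using hy) (by simpa using hRy),
    hu'.eq_outerSolution (y * I) (by simp) (by simpa using hy) (by simpa using hRy')]

theorem IsSubdominant.div_eq_exp_phaseDifference (hu : IsSubdominant β c u)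
    (hu' : IsSubdominant β c' u') (hβ : 0 ≤ β) (hc : axisThreshold β ≤ c)
    (hc' : axisThreshold β ≤ c') {γ γ' : ℂ}
    (hγ : ∀ y ∈ Ici (0 : ℝ), u (y * I) = γ * axisSolution β c y)
    (hγ' : ∀ y ∈ Ici (0 : ℝ), u' (y * I) = γ' * axisSolution β c' y) :
    γ / γ' = exp (I * phaseDifference β c c') := by
  have hone := hu.tendsto_div hu' hβ (zero_le_one.trans (one_le_of_axisThreshold_le hβ hc))
    (zero_le_one.trans (one_le_of_axisThreshold_le hβ hc'))
  have hlim := (tendsto_axisSolution_div hβ hc hc').const_mul (γ / γ')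
  have heq := tendsto_nhds_unique (hlim.congr' ((eventually_ge_atTop 0).mono fun y hy => by
    rw [hγ y hy, hγ' y hy, mul_div_mul_comm])) hone
  rwa [exp_neg, mul_inv_eq_one₀ (exp_ne_zero _)] at heq

theorem fourthRoot_ofReal (hc : 0 ≤ c) : fourthRoot c = Real.exp (Real.log c / 4) := by
  rw [fourthRoot, ← ofReal_log hc]
  push_cast
  rfl

theorem re_axisSolution_zero_pos (hβ : 0 ≤ β) (hc : axisThreshold β ≤ c) :
    0 < (axisSolution β c 0).re := by
  have hc₀ : 0 ≤ c := zero_le_one.trans (one_le_of_axisThreshold_le hβ hc)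
  have heq : axisSolution β c 0 =
      ((1 / Real.exp (Real.log c / 4) : ℝ) : ℂ) * axisCorrection β c 0 := by
    simp [axisSolution_eq, axisAmplitude, axisPotential, axisPhase, ← fourthRoot_ofReal hc₀]
  rw [heq, re_ofReal_mul]
  exact mul_pos (by positivity) (re_axisCorrection_zero_pos hβ hc)

theorem exists_forall_isSubdominant_apply_zero_eq (hβ : 0 ≤ β) :
    ∃ γ : ℂ, γ ≠ 0 ∧ ∀ c u, axisThreshold β ≤ c → IsSubdominant β c u →
      u 0 = γ * exp (I * phaseDifference β c (axisThreshold β)) * axisSolution β c 0 := by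
  obtain ⟨u', hu', -⟩ := exists_subdominant_family hβ (sq_nonneg (3000 * (1 + β) ^ 2))
  have hk := hu' (axisThreshold β) (right_mem_Icc.2 (sq_nonneg _))
  obtain ⟨γ', hγ'⟩ := hk.exists_eq_mul_axisSolution hβ le_rfl
  have hγ₀ : γ' ≠ 0 := fun h => exp_ne_zero (I * phaseDifference β (axisThreshold β)
    (axisThreshold β)) (by
      rw [← hk.div_eq_exp_phaseDifference hk hβ le_rfl le_rfl hγ' hγ', h, div_zero])
  refine ⟨γ', hγ₀, fun c u hc hu => ?_⟩
  obtain ⟨γ, hγ⟩ := hu.exists_eq_mul_axisSolution hβ hc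
  rw [← hu.div_eq_exp_phaseDifference hk hβ hc le_rfl hγ hγ', mul_div_cancel₀ _ hγ₀]
  simpa using hγ 0 self_mem_Ici

theorem exists_mul_exp_eq_mul_I {J : ℝ → ℂ} {c₀ : ℝ} (hJ : ContinuousOn J (Ici c₀))
    (hlim : Tendsto (fun c => (J c).re) atTop atTop) {γ : ℂ} (hγ : γ ≠ 0) :
    ∃ c ∈ Ici c₀, ∃ A : ℝ, 0 < A ∧ γ * exp (I * J c) = A * I := by
  obtain ⟨n, hn⟩ := exists_nat_gt (((J c₀).re + arg γ) / (2 * Real.pi))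
  rw [div_lt_iff₀ Real.two_pi_pos] at hn
  obtain ⟨c, hc, hre⟩ := isPreconnected_Ici.intermediate_value_Ici self_mem_Ici
    (le_principal_iff.2 (Ici_mem_atTop c₀)) (continuous_re.comp_continuousOn hJ) hlim
    (show Real.pi / 2 - arg γ + n * (2 * Real.pi) ∈ Ici (J c₀).re by
      rw [mem_Ici]
      linarith [Real.pi_pos])
  refine ⟨c, hc, ‖γ‖ * Real.exp (-(J c).im), mul_pos (norm_pos_iff.2 hγ) (Real.exp_pos _), ?_⟩
  have hexponent : arg γ * I + I * J c =
      (-(J c).im : ℝ) + Real.pi / 2 * I + n * (2 * Real.pi * I) := by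
    have hJc : (J c : ℂ) = (Real.pi / 2 - arg γ + n * (2 * Real.pi) : ℝ) + (J c).im * I := by
      rw [← hre, Function.comp_apply, re_add_im]
    push_cast at hJc ⊢
    linear_combination I * hJc + ((J c).im : ℂ) * I_mul_I
  calc γ * exp (I * J c) = ‖γ‖ * exp (arg γ * I + I * J c) := by
        rw [exp_add, ← mul_assoc, norm_mul_exp_arg_mul_I]
    _ = (‖γ‖ * Real.exp (-(J c).im) : ℝ) * I := by
        rw [hexponent, exp_add, exp_nat_mul_two_pi_mul_I, mul_one, exp_add,
          exp_pi_div_two_mul_I]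
        push_cast
        ring

theorem exists_isSubdominant_im_apply_zero_eq_zero (hβ : 0 ≤ β) (M : ℝ) :
    ∃ c u, M < c ∧ 0 < c ∧ IsSubdominant β c u ∧ (u 0).im = 0 := by
  obtain ⟨γ, hγ, hzero⟩ := exists_forall_isSubdominant_apply_zero_eq hβ
  set k := axisThreshold β
  have hk : 1 ≤ k := one_le_of_axisThreshold_le hβ le_rfl
  set c₀ := max M k + 1
  have hMc₀ : M < c₀ := by linarith [le_max_left M k]
  have hkc₀ : k ≤ c₀ := by linarith [le_max_right M k]
  have hJ : ContinuousOn (phaseDifference β · k) (Ici c₀) :=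
    (continuousOn_phaseDifference hβ (by linarith)).mono (Ici_subset_Ici.2 (hk.trans hkc₀))
  have hlim := tendsto_re_phaseDifference hβ hk
  obtain ⟨c₁, hc₁, A₁, hA₁, h₁⟩ := exists_mul_exp_eq_mul_I hJ hlim hγ
  obtain ⟨c₂, hc₂, A₂, hA₂, h₂⟩ := exists_mul_exp_eq_mul_I hJ hlim (neg_ne_zero.2 hγ)
  rw [mem_Ici] at hc₁ hc₂
  obtain ⟨u, hu, hcont⟩ := exists_subdominant_family hβ
    (show 0 ≤ max c₁ c₂ by linarith [le_max_left c₁ c₂])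
  have hsub : uIcc c₂ c₁ ⊆ Icc 0 (max c₁ c₂) := fun c hc => by
    rw [uIcc_comm] at hc
    exact ⟨by linarith [le_min hc₁ hc₂, hc.1], hc.2⟩
  have hpos : 0 < (u c₁ 0).im := by
    rw [hzero c₁ _ (hkc₀.trans hc₁) (hu c₁ (hsub right_mem_uIcc)), h₁]
    simpa using mul_pos hA₁ (re_axisSolution_zero_pos hβ (hkc₀.trans hc₁))
  have hneg : (u c₂ 0).im < 0 := by
    rw [hzero c₂ _ (hkc₀.trans hc₂) (hu c₂ (hsub left_mem_uIcc)), ← neg_neg γ, neg_mul, h₂]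
    simpa using mul_pos hA₂ (re_axisSolution_zero_pos hβ (hkc₀.trans hc₂))
  obtain ⟨c, hc, him⟩ := intermediate_value_uIcc
    (continuous_im.comp_continuousOn (hcont.mono hsub)) (mem_uIcc_of_le hneg.le hpos.le)
  have hc₀c : c₀ ≤ c := (le_min hc₂ hc₁).trans hc.1
  exact ⟨c, u c, by linarith, by linarith, hu c (hsub hc), him⟩

end Phase

/-! ### Reality of the subdominant solution -/

section RealEquation

variable {V f f' g g' : ℝ → ℝ} {s t x : ℝ}

theorem le_of_hasDerivAt_nonneg (hst : s ≤ t) (hf : ∀ x ∈ Icc s t, HasDerivAt f (f' x) x)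
    (hf' : ∀ x ∈ Icc s t, 0 ≤ f' x) : f s ≤ f t := by
  refine monotoneOn_of_hasDerivWithinAt_nonneg (convex_Icc s t)
    (fun x hx => (hf x hx).continuousAt.continuousWithinAt)
    (fun x hx => (hf x (interior_subset hx)).hasDerivWithinAt)
    (fun x hx => hf' x (interior_subset hx)) (left_mem_Icc.2 hst) (right_mem_Icc.2 hst) hst

theorem lt_of_hasDerivAt_nonneg (hst : s < t)
    (hf : ∀ x ∈ Icc s t, HasDerivAt f (f' x) x) (hf' : ∀ x ∈ Icc s t, 0 ≤ f' x)
    (hx : x ∈ Icc s t) (hpos : 0 < f' x) : f s < f t := by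
  have hmono : MonotoneOn f (Icc s t) := fun y hy z hz hyz => le_of_hasDerivAt_nonneg hyz
    (fun x hx => hf x ⟨hy.1.trans hx.1, hx.2.trans hz.2⟩)
    fun x hx => hf' x ⟨hy.1.trans hx.1, hx.2.trans hz.2⟩
  have hs := left_mem_Icc.2 hst.le
  have ht := right_mem_Icc.2 hst.le
  refine (hmono hs ht hst.le).lt_of_ne fun heq => hpos.ne' ?_
  have hconst : EqOn f (fun _ => f s) (Icc s t) := fun y hy =>
    ((hmono hy ht hy.2).trans heq.ge).antisymm (hmono hs hy hy.1)
  exact (uniqueDiffOn_Icc hst x hx).eq_deriv _ (hf x hx).hasDerivWithinAt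
    ((hasDerivWithinAt_const x _ _).congr hconst (hconst hx))

theorem sq_le_sq_of_nonneg_potential (hf : ∀ x, HasDerivAt f (f' x) x)
    (hf' : ∀ x, HasDerivAt f' (V x * f x) x) (hV : ∀ x ∈ Ici s, 0 ≤ V x) (hs : 0 ≤ f s * f' s)
    (hst : s ≤ t) : f s ^ 2 ≤ f t ^ 2 := by
  have hprod : ∀ x ∈ Ici s, 0 ≤ f x * f' x := fun x hx =>
    hs.trans (le_of_hasDerivAt_nonneg (f := fun x => f x * f' x) hx
      (fun y _ => (hf y).mul (hf' y)) fun y hy => by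
        nlinarith [mul_nonneg (hV y hy.1) (sq_nonneg (f y)), sq_nonneg (f' y)])
  exact le_of_hasDerivAt_nonneg (f := fun x => f x ^ 2) hst (fun y _ => (hf y).pow 2)
    fun y hy => by
      have := hprod y hy.1
      simp only [Nat.cast_ofNat, Nat.add_one_sub_one, pow_one]
      linarith

/-- A solution recessive relative to `g` cannot start from a zero: otherwise `f * f'` becomes
positive and stays so for `f - r * g` with `r` small, whereas `f - r * g` vanishes at any point
where `f / g = r`. -/
theorem deriv_eq_zero_of_tendsto_div_zero (hf : ∀ x, HasDerivAt f (f' x) x)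
    (hf' : ∀ x, HasDerivAt f' (V x * f x) x) (hg : ∀ x, HasDerivAt g (g' x) x)
    (hg' : ∀ x, HasDerivAt g' (V x * g x) x) (hV : ∀ x ∈ Ici s, 0 ≤ V x) (hs : f s = 0)
    (hlim : Tendsto (fun x => f x / g x) atTop (𝓝 0)) (hg₀ : ∀ᶠ x in atTop, g x ≠ 0) :
    f' s = 0 := by
  by_contra hne
  have hprod : HasDerivAt (fun x => f x * f' x) (f' s ^ 2) s :=
    ((hf s).mul (hf' s)).congr_deriv (by rw [hs]; ring)
  obtain ⟨x₀, hpos, hx₀⟩ : ∃ x₀, 0 < f x₀ * f' x₀ ∧ s < x₀ := by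
    have hderiv : 0 < deriv (fun x => f x * f' x) s := hprod.deriv ▸ by positivity
    have hsign : ∀ᶠ x in 𝓝[>] s, SignType.sign (f x * f' x) = SignType.sign (x - s) :=
      nhdsWithin_le_nhds (eventually_nhdsWithin_sign_eq_of_deriv_pos hderiv (by simp [hs]))
    obtain ⟨x, hx, hsx⟩ := (hsign.and self_mem_nhdsWithin).exists
    exact ⟨x, sign_eq_one_iff.1 (hx.trans (sign_pos (sub_pos.2 hsx))), hsx⟩
  have hperturb : Tendsto (fun r => (f x₀ - r * g x₀) * (f' x₀ - r * g' x₀)) (𝓝 0)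
      (𝓝 (f x₀ * f' x₀)) := by
    refine Continuous.tendsto' (by fun_prop) _ _ (by ring)
  obtain ⟨x, hx₀x, hgx, hpos'⟩ := ((eventually_ge_atTop x₀).and
    (hg₀.and ((hperturb.comp hlim).eventually (lt_mem_nhds hpos)))).exists
  set r := f x / g x
  change 0 < (f x₀ - r * g x₀) * _ at hpos'
  have hle := sq_le_sq_of_nonneg_potential (f := fun y => f y - r * g y)
    (fun y => (hf y).sub ((hg y).const_mul r))
    (fun y => ((hf' y).sub ((hg' y).const_mul r)).congr_deriv (by ring))
    (fun y hy => hV y (hx₀.le.trans hy)) hpos'.le hx₀x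
  have hfx : f x - r * g x = 0 := by rw [div_mul_cancel₀ _ hgx, sub_self]
  simp only [hfx] at hle
  have : f x₀ - r * g x₀ = 0 := by nlinarith
  simp [this] at hpos'

end RealEquation

section Reality

variable {β c : ℝ} {u : ℂ → ℂ}

theorem potential_ofReal (β c x : ℝ) :
    potential β c x = (x ^ 3 - 4 * β * x + c : ℝ) := by
  rw [potential]
  push_cast
  ring

theorem hasDerivAt_re_comp_ofReal {f : ℂ → ℂ} {f' : ℂ} {x : ℝ} (hf : HasDerivAt f f' x) :
    HasDerivAt (fun x : ℝ => (f x).re) f'.re x :=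
  hf.real_of_complex

theorem hasDerivAt_im_comp_ofReal {f : ℂ → ℂ} {f' : ℂ} {x : ℝ} (hf : HasDerivAt f f' x) :
    HasDerivAt (fun x : ℝ => (f x).im) f'.im x :=
  imCLM.hasFDerivAt.comp_hasDerivAt x hf.comp_ofReal

theorem potential_ofReal_nonneg (hβ : 0 ≤ β) (hc : (4 * β + 1) ^ 2 ≤ c) {x : ℝ} (hx : 0 ≤ x) :
    0 ≤ x ^ 3 - 4 * β * x + c := by
  rcases le_total x (4 * β + 1) with h | h
  · nlinarith [mul_nonneg hβ (sub_nonneg.2 h), pow_nonneg hx 3]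
  · have hle : 4 * β * x ≤ x ^ 2 * x := by
      gcongr
      nlinarith
    nlinarith

theorem exists_amplitude_mul_exp_phase_eq_ofReal (β : ℝ) {x : ℝ} (hx : 0 ≤ x) :
    ∃ e : ℝ, amplitude β x * exp (phase β x) = e := by
  rw [amplitude, phase, fourthRoot_ofReal hx]
  set t := Real.exp (Real.log x / 4)
  refine ⟨t ^ 5 / (t ^ 8 - β) *
    Real.exp (2 / 5 * t ^ 10 - 4 * β * t ^ 2 - 2 / 3 * β ^ 2 * (t ^ 6)⁻¹), ?_⟩
  push_cast
  rfl

theorem IsSubdominant.eventually_eq_ofReal_mul (hu : IsSubdominant β c u) (hβ : 0 ≤ β)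
    (hc : 0 ≤ c) : ∃ m : ℝ → ℂ, Tendsto m atTop (𝓝 1) ∧
      ∀ᶠ x : ℝ in atTop, ∃ e : ℝ, e ≠ 0 ∧ u x = e * m x := by
  refine ⟨fun x => _, tendsto_volterraSolution_verticalFlow (x := fun x : ℝ => (x : ℂ)) hβ hc
    ((eventually_ge_atTop 0).mono fun x hx => by simpa using hx) (.of_forall fun _ => by simp)
    (tendsto_id.congr fun _ => by simp), ?_⟩
  filter_upwards [eventually_ge_atTop 0, eventually_ge_atTop (radius β c)] with x hx hR
  obtain ⟨e, he⟩ := exists_amplitude_mul_exp_phase_eq_ofReal β hx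
  have heq := hu.eq_outerSolution x (by simpa using hx) (by simp) (by simpa using hR)
  have hne := outerSolution_ne_zero (x := x) hβ hc (by simpa using hx) (by simp) (by simpa using hR)
  refine ⟨e, fun h => ?_, ?_⟩
  · refine hne (mul_eq_zero_of_left ?_ _)
    rw [he, h, ofReal_zero]
  · rw [heq, ← he]
    rfl

theorem IsSubdominant.tendsto_im_div_re (hu : IsSubdominant β c u) (hβ : 0 ≤ β) (hc : 0 ≤ c) :
    Tendsto (fun x : ℝ => (u x).im / (u x).re) atTop (𝓝 0) ∧ ∀ᶠ x : ℝ in atTop, (u x).re ≠ 0 := by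
  obtain ⟨m, hm, hum⟩ := hu.eventually_eq_ofReal_mul hβ hc
  have hre : Tendsto (fun x => (m x).re) atTop (𝓝 1) := (continuous_re.tendsto 1).comp hm
  have him : Tendsto (fun x => (m x).im) atTop (𝓝 0) := (continuous_im.tendsto 1).comp hm
  have hdiv := him.div hre one_ne_zero
  rw [zero_div] at hdiv
  refine ⟨hdiv.congr' ?_, ?_⟩
  · filter_upwards [hum] with x ⟨e, he, hx⟩
    rw [Pi.div_apply, hx, im_ofReal_mul, re_ofReal_mul, mul_div_mul_left _ _ he]
  · filter_upwards [hum, hre.eventually_ne one_ne_zero] with x ⟨e, he, hx⟩ hmx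
    rw [hx, re_ofReal_mul]
    exact mul_ne_zero he hmx

theorem IsSubdominant.im_deriv_zero (hu : IsSubdominant β c u) (hβ : 0 ≤ β)
    (hc : (4 * β + 1) ^ 2 ≤ c) (h₀ : (u 0).im = 0) : (deriv u 0).im = 0 := by
  have hd := fun x : ℝ => hu.isSolutionOn.hasDerivAt isOpen_univ (mem_univ (x : ℂ))
  have hdd := fun x : ℝ => hu.isSolutionOn.hasDerivAt_deriv isOpen_univ (mem_univ (x : ℂ))
  obtain ⟨hlim, hne⟩ := hu.tendsto_im_div_re hβ ((sq_nonneg _).trans hc)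
  refine deriv_eq_zero_of_tendsto_div_zero (s := 0) (f := fun x : ℝ => (u x).im)
    (f' := fun x : ℝ => (deriv u x).im) (g := fun x : ℝ => (u x).re)
    (g' := fun x : ℝ => (deriv u x).re) (fun x => hasDerivAt_im_comp_ofReal (hd x))
    (fun x => ?_) (fun x => hasDerivAt_re_comp_ofReal (hd x)) (fun x => ?_)
    (fun x hx => potential_ofReal_nonneg hβ hc hx) (by simpa using h₀) hlim hne
  · exact (hasDerivAt_im_comp_ofReal (hdd x)).congr_deriv (by
      rw [potential_ofReal, im_ofReal_mul])
  · exact (hasDerivAt_re_comp_ofReal (hdd x)).congr_deriv (by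
      rw [potential_ofReal, re_ofReal_mul])

theorem eq_zero_of_isSolutionOn_potential (hu : IsSolutionOn (potential β c) u univ) (hc : 0 ≤ c)
    {z₀ : ℂ} (h₀ : u z₀ = 0) (h₁ : deriv u z₀ = 0) : u = 0 := by
  obtain ⟨S, T, hST, -⟩ := exists_isFundamentalSystem_potential β c
  exact (hST c (right_mem_Icc.2 hc)).eq_zero hu h₀ h₁

open scoped ComplexConjugate

theorem IsSolutionOn.comp_conj (hu : IsSolutionOn (potential β c) u univ) :
    IsSolutionOn (potential β c) (conj ∘ u ∘ conj) univ := by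
  refine ⟨fun z _ => ?_, fun z _ => ?_⟩
  · exact (differentiableAt_conj_conj_iff.2
      (hu.hasDerivAt isOpen_univ (mem_univ _)).differentiableAt).differentiableWithinAt
  · rw [deriv_conj_conj, deriv_conj_conj, Function.comp_apply, Function.comp_apply,
      hu.deriv_deriv _ (mem_univ _)]
    simp [potential, map_ofNat]

theorem IsSolutionOn.apply_conj (hu : IsSolutionOn (potential β c) u univ) (hc : 0 ≤ c)
    (h₀ : (u 0).im = 0) (h₁ : (deriv u 0).im = 0) (z : ℂ) : u (conj z) = conj (u z) := by
  rw [← conj_eq_iff_im] at h₀ h₁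
  have hv : HasDerivAt (conj ∘ u ∘ conj) (conj (deriv u 0)) 0 :=
    hasDerivAt_conj_conj_iff.2 (by simpa using hu.hasDerivAt isOpen_univ (mem_univ 0))
  have hderiv : deriv (fun z => 1 * u z - 1 * (conj ∘ u ∘ conj) z) 0 = 0 :=
    (((hu.hasDerivAt isOpen_univ (mem_univ 0)).const_mul 1).sub (hv.const_mul 1)).deriv.trans
      (by simp [h₁])
  have hsub := eq_zero_of_isSolutionOn_potential (hu.linearCombination hu.comp_conj 1 1) hc
    (by simp [h₀]) hderiv
  simpa [sub_eq_zero] using congrFun hsub (conj z)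

theorem im_deriv_eq_zero_of_apply_conj (hu : ∀ z, u (conj z) = conj (u z)) (x : ℝ) :
    (deriv u x).im = 0 := by
  have hderiv : deriv (conj ∘ u ∘ conj) = deriv u := by
    congr 1
    exact funext fun z => by simp [hu]
  rw [deriv_conj_conj] at hderiv
  simpa [conj_eq_iff_im] using congrFun hderiv x

end Reality

/-! ### Zeros -/

section Flux

open scoped ComplexConjugate

/-- The product `conj u * u'`, whose real and imaginary parts are monotone along horizontal and
vertical lines where the potential has the right sign. -/
noncomputable def flux (u : ℂ → ℂ) (z : ℂ) : ℂ := conj (u z) * deriv u z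

variable {V u : ℂ → ℂ} {γ : ℝ → ℂ} {γ' : ℂ} {t : ℝ}

theorem flux_eq_zero {z : ℂ} (hz : u z = 0) : flux u z = 0 := by
  rw [flux, hz, map_zero, zero_mul]

theorem IsSolutionOn.hasDerivAt_flux_comp (hu : IsSolutionOn V u univ) (hγ : HasDerivAt γ γ' t) :
    HasDerivAt (fun t => flux u (γ t))
      (conj γ' * normSq (deriv u (γ t)) + γ' * V (γ t) * normSq (u (γ t))) t := by
  have hd := (hu.hasDerivAt isOpen_univ (mem_univ (γ t))).comp t hγ
  have hdd := (hu.hasDerivAt_deriv isOpen_univ (mem_univ (γ t))).comp t hγ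
  refine ((conjCLE : ℂ →L[ℝ] ℂ).hasFDerivAt.comp_hasDerivAt t hd |>.mul hdd).congr_deriv ?_
  rw [normSq_eq_conj_mul_self, normSq_eq_conj_mul_self]
  simp only [ContinuousLinearEquiv.coe_coe, conjCLE_apply, map_mul, Function.comp_apply]
  ring

theorem IsSolutionOn.hasDerivAt_re_flux_horizontal (hu : IsSolutionOn V u univ) (x y : ℝ) :
    HasDerivAt (fun x : ℝ => (flux u (x + y * I)).re)
      (normSq (deriv u (x + y * I)) + (V (x + y * I)).re * normSq (u (x + y * I))) x := by
  have hγ : HasDerivAt (fun x : ℝ => (x + y * I : ℂ)) 1 x := ofRealCLM.hasDerivAt.add_const _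
  refine (reCLM.hasFDerivAt.comp_hasDerivAt x (hu.hasDerivAt_flux_comp hγ)).congr_deriv ?_
  simp

theorem IsSolutionOn.hasDerivAt_re_flux_vertical (hu : IsSolutionOn V u univ) (r y : ℝ) :
    HasDerivAt (fun y : ℝ => (flux u (r + y * I)).re)
      (-(V (r + y * I)).im * normSq (u (r + y * I))) y := by
  refine (reCLM.hasFDerivAt.comp_hasDerivAt y
    (hu.hasDerivAt_flux_comp (hasDerivAt_vertical r y))).congr_deriv ?_
  simp

theorem IsSolutionOn.hasDerivAt_im_flux_vertical (hu : IsSolutionOn V u univ) (r y : ℝ) :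
    HasDerivAt (fun y : ℝ => (flux u (r + y * I)).im)
      ((V (r + y * I)).re * normSq (u (r + y * I)) - normSq (deriv u (r + y * I))) y := by
  refine (imCLM.hasFDerivAt.comp_hasDerivAt y
    (hu.hasDerivAt_flux_comp (hasDerivAt_vertical r y))).congr_deriv ?_
  simp only [conj_I, neg_mul, imCLM_apply, add_im, neg_im, mul_im, I_re, ofReal_im, mul_zero, I_im,
    ofReal_re, one_mul, zero_add, mul_re, zero_mul, zero_sub]
  ring

theorem im_flux_ofReal (hu : ∀ z, u (conj z) = conj (u z)) (x : ℝ) : (flux u x).im = 0 := by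
  have him : (u x).im = 0 := by rw [← conj_eq_iff_im, ← hu, conj_ofReal]
  simp [flux, him, im_deriv_eq_zero_of_apply_conj hu x]

end Flux

section NonrealZeros

open scoped ComplexConjugate

variable {β c r s y : ℝ} {u : ℂ → ℂ} {z : ℂ}

theorem re_potential_add_mul_I (β c r y : ℝ) :
    (potential β c (r + y * I)).re = r ^ 3 - 3 * r * y ^ 2 - 4 * β * r + c := by
  simp only [potential, pow_succ, pow_zero, one_mul, add_re, sub_re, mul_re, ofReal_re, I_re,
    mul_zero, ofReal_im, I_im, mul_one, sub_self, add_zero, add_im, mul_im, zero_add, re_ofNat,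
    im_ofNat, sub_zero, zero_mul, add_left_inj, sub_left_inj]
  ring

theorem im_potential_add_mul_I (β c r y : ℝ) :
    (potential β c (r + y * I)).im = -(y * (y ^ 2 + 4 * β - 3 * r ^ 2)) := by
  simp only [potential, pow_succ, pow_zero, one_mul, add_im, sub_im, mul_im, mul_re, add_re,
    ofReal_re, I_re, mul_zero, ofReal_im, I_im, mul_one, sub_self, add_zero, zero_add, re_ofNat,
    im_ofNat, sub_zero, zero_mul]
  ring

theorem IsSubdominant.ne_zero_of_radius_le (hu : IsSubdominant β c u) (hβ : 0 ≤ β) (hc : 0 ≤ c)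
    (hre : 0 ≤ z.re) (him : 0 ≤ z.im) (h : radius β c ≤ z.re + z.im) : u z ≠ 0 := by
  rw [hu.eq_outerSolution z hre him h]
  exact outerSolution_ne_zero hβ hc hre him h

theorem IsSubdominant.ne_zero (hu : IsSubdominant β c u) (hβ : 0 ≤ β) (hc : 0 ≤ c) : u ≠ 0 :=
  fun h => hu.ne_zero_of_radius_le (z := radius β c) hβ hc (by simpa using (radius_pos β hc).le)
    (by simp) (by simp) (congrFun h _)

theorem IsSubdominant.tendsto_re_flux_vertical (hu : IsSubdominant β c u) (hβ : 0 ≤ β)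
    (hc : 0 ≤ c) (hr : 0 ≤ r) :
    Tendsto (fun y : ℝ => (flux u (r + y * I)).re) atTop (𝓝 0) := by
  have hexp : Tendsto (fun y : ℝ => Real.exp (-(1 * y ^ 2))) atTop (𝓝 0) := by
    simpa only [one_mul, Function.comp_def] using Real.tendsto_exp_neg_atTop_nhds_zero.comp
      (tendsto_pow_atTop (α := ℝ) two_ne_zero)
  have hu₀ := (hu.isBigO_vertical hβ hc hr 1).trans_tendsto hexp
  have hu₁ := (hu.deriv_isBigO_vertical hβ hc hr 1).trans_tendsto hexp
  have hflux := ((continuous_conj.tendsto 0).comp hu₀).mul hu₁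
  rw [map_zero, zero_mul] at hflux
  exact (continuous_re.tendsto 0).comp hflux

/-- The flux increases upwards and tends to `0`. -/
theorem IsSubdominant.re_flux_neg (hu : IsSubdominant β c u) (hβ : 0 ≤ β) (hc : 0 ≤ c)
    (hr : 0 ≤ r) (hy : 0 < y) (hry : 3 * r ^ 2 ≤ y ^ 2) : (flux u (r + y * I)).re < 0 := by
  set G : ℝ → ℝ := fun y => (flux u (r + y * I)).re
  have hG : ∀ t : ℝ, HasDerivAt G (t * (t ^ 2 + 4 * β - 3 * r ^ 2) * normSq (u (r + t * I))) t :=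
    fun t => (hu.isSolutionOn.hasDerivAt_re_flux_vertical r t).congr_deriv (by
      rw [im_potential_add_mul_I, neg_neg])
  have hcoeff : ∀ t, y ≤ t → 0 ≤ t ^ 2 + 4 * β - 3 * r ^ 2 := fun t ht => by nlinarith
  have hnonneg : ∀ t, y ≤ t → 0 ≤ t * (t ^ 2 + 4 * β - 3 * r ^ 2) * normSq (u (r + t * I)) :=
    fun t ht => mul_nonneg (mul_nonneg (hy.le.trans ht) (hcoeff t ht)) (normSq_nonneg _)
  set Y := max (y + 1) (radius β c)
  have hyY : y < Y := (lt_add_one y).trans_le (le_max_left _ _)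
  have hpos : 0 < Y * (Y ^ 2 + 4 * β - 3 * r ^ 2) * normSq (u (r + Y * I)) := by
    have hYc : 0 < Y ^ 2 + 4 * β - 3 * r ^ 2 := by nlinarith
    have hYu : u (r + Y * I) ≠ 0 := hu.ne_zero_of_radius_le hβ hc (by simpa)
      (by simpa using (hy.trans hyY).le)
      (by simpa using (le_max_right _ _).trans (le_add_of_nonneg_left hr))
    exact mul_pos (mul_pos (hy.trans hyY) hYc) (normSq_pos.2 hYu)
  calc G y < G Y := lt_of_hasDerivAt_nonneg hyY (fun t _ => hG t) (fun t ht => hnonneg t ht.1)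
        (right_mem_Icc.2 hyY.le) hpos
    _ ≤ 0 := ge_of_tendsto (hu.tendsto_re_flux_vertical hβ hc hr) <| by
      filter_upwards [eventually_ge_atTop Y] with t ht
      exact le_of_hasDerivAt_nonneg ht (fun x _ => hG x) fun x hx => hnonneg x (hyY.le.trans hx.1)

theorem IsSolutionOn.ne_zero_of_re_potential_nonpos (hu : IsSolutionOn (potential β c) u univ)
    (hc : 0 ≤ c) (hne : u ≠ 0) (hconj : ∀ z, u (conj z) = conj (u z)) (hs : s ≤ 0) (hy : 0 < y)
    (hV : (potential β c (s + y * I)).re ≤ 0) : u (s + y * I) ≠ 0 := by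
  intro hzero
  have hderiv : deriv u (s + y * I) ≠ 0 := fun h =>
    hne (eq_zero_of_isSolutionOn_potential hu hc hzero h)
  have hneg : ∀ t ∈ Icc 0 y, (potential β c (s + t * I)).re ≤ 0 := fun t ht => by
    rw [re_potential_add_mul_I] at hV ⊢
    have hty : t ^ 2 ≤ y ^ 2 := pow_le_pow_left₀ ht.1 ht.2 2
    nlinarith [mul_nonneg (neg_nonneg.2 hs) (sub_nonneg.2 hty)]
  have hlt := lt_of_hasDerivAt_nonneg (x := y) hy
    (fun t _ => (hu.hasDerivAt_im_flux_vertical s t).neg)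
    (fun t ht => neg_nonneg.2 (sub_nonpos.2 ((mul_nonpos_of_nonpos_of_nonneg (hneg t ht)
      (normSq_nonneg _)).trans (normSq_nonneg _)))) ⟨hy.le, le_rfl⟩
    (by simpa [hzero] using hderiv)
  simp [flux_eq_zero hzero, im_flux_ofReal hconj] at hlt

theorem re_potential_nonneg_of_mem_Icc (hc : 0 ≤ c) (h : 0 ≤ (potential β c (s + y * I)).re)
    {x : ℝ} (hx : x ∈ Icc s 0) : 0 ≤ (potential β c (x + y * I)).re := by
  rw [re_potential_add_mul_I] at h ⊢
  set k := 3 * y ^ 2 + 4 * β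
  have hsq : x ^ 2 ≤ s ^ 2 := by nlinarith [hx.1, hx.2]
  have hxs : x * (s ^ 2 - k) ≤ x * (x ^ 2 - k) :=
    mul_le_mul_of_nonpos_left (sub_le_sub_right hsq k) hx.2
  rcases le_total (s ^ 2 - k) 0 with hk | hk
  · linarith [mul_nonneg_of_nonpos_of_nonpos hx.2 hk]
  · linarith [mul_le_mul_of_nonneg_right hx.1 hk]

theorem IsSubdominant.ne_zero_of_re_nonpos (hu : IsSubdominant β c u) (hβ : 0 ≤ β) (hc : 0 ≤ c)
    (hconj : ∀ z, u (conj z) = conj (u z)) (hre : z.re ≤ 0) (him : 0 < z.im) : u z ≠ 0 := by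
  rw [← re_add_im z]
  rcases le_total (potential β c (z.re + z.im * I)).re 0 with hV | hV
  · exact hu.isSolutionOn.ne_zero_of_re_potential_nonpos hc (hu.ne_zero hβ hc) hconj hre him hV
  · intro hzero
    have hle := le_of_hasDerivAt_nonneg hre
      (fun x _ => hu.isSolutionOn.hasDerivAt_re_flux_horizontal x z.im) fun x hx =>
        add_nonneg (normSq_nonneg _)
          (mul_nonneg (re_potential_nonneg_of_mem_Icc hc hV hx) (normSq_nonneg _))
    rw [flux_eq_zero hzero, zero_re] at hle
    exact (hu.re_flux_neg hβ hc le_rfl him (by nlinarith)).not_ge hle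

theorem IsSubdominant.norm_le_of_zero_of_im_pos (hu : IsSubdominant β c u) (hβ : 0 ≤ β)
    (hc : 0 ≤ c) (hconj : ∀ z, u (conj z) = conj (u z)) (hz : u z = 0) (him : 0 < z.im) :
    ‖z‖ ≤ radius β c := by
  have hre : 0 < z.re := not_le.1 fun h => hu.ne_zero_of_re_nonpos hβ hc hconj h him hz
  have hsum : z.re + z.im < radius β c :=
    not_le.1 fun h => hu.ne_zero_of_radius_le hβ hc hre.le him.le h hz
  calc ‖z‖ ≤ |z.re| + |z.im| := norm_le_abs_re_add_abs_im z
    _ = z.re + z.im := by rw [abs_of_pos hre, abs_of_pos him]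
    _ ≤ radius β c := hsum.le

theorem finite_zeros_inter_isCompact {f : ℂ → ℂ} {K : Set ℂ} (hf : Differentiable ℂ f) (hne : f ≠ 0)
    (hK : IsCompact K) : (f ⁻¹' {0} ∩ K).Finite := by
  by_contra hinf
  obtain ⟨x, -, hacc⟩ := Set.Infinite.exists_accPt_of_subset_isCompact hinf hK inter_subset_right
  have hfreq : ∃ᶠ z in 𝓝[≠] x, f z = 0 :=
    (accPt_iff_frequently_nhdsNE.1 hacc).mono fun z hz => hz.1
  exact hne (funext fun z => AnalyticOnNhd.eqOn_zero_of_preconnected_of_frequently_eq_zero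
    (fun z _ => hf.analyticAt z) isPreconnected_univ (mem_univ x) hfreq (mem_univ z))

theorem IsSubdominant.finite_nonreal_zeros (hu : IsSubdominant β c u) (hβ : 0 ≤ β) (hc : 0 ≤ c)
    (hconj : ∀ z, u (conj z) = conj (u z)) : {z | u z = 0 ∧ z.im ≠ 0}.Finite := by
  refine (finite_zeros_inter_isCompact (differentiableOn_univ.1 hu.isSolutionOn.differentiableOn)
    (hu.ne_zero hβ hc) (isCompact_closedBall 0 (radius β c))).subset ?_
  rintro z ⟨hz, him⟩
  refine ⟨hz, mem_closedBall_zero_iff.2 ?_⟩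
  rcases him.lt_or_gt with h | h
  · rw [← norm_conj]
    exact hu.norm_le_of_zero_of_im_pos hβ hc hconj (by rw [hconj, hz, map_zero]) (by simpa)
  · exact hu.norm_le_of_zero_of_im_pos hβ hc hconj hz h

end NonrealZeros

section RealZeros

variable {g g' P : ℝ → ℝ} {S : ℝ}

/-- Sturm comparison: the Wronskian of `g` and `sin (· - S)` would otherwise decrease from
`-g S < 0` to `g (S + π) > 0`. -/
theorem exists_nonpos_of_one_le (hg : ∀ s, HasDerivAt g (g' s) s)
    (hg' : ∀ s, HasDerivAt g' (-(P s * g s)) s) (hP : ∀ s, S ≤ s → 1 ≤ P s) :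
    ∃ s ∈ Icc S (S + Real.pi), g s ≤ 0 := by
  by_contra! hpos
  have hSπ : S ≤ S + Real.pi := le_add_of_nonneg_right Real.pi_pos.le
  have hsub : ∀ s, HasDerivAt (fun s => s - S) 1 s := fun s => (hasDerivAt_id s).sub_const S
  have hW : ∀ s, HasDerivAt (fun s => g s * Real.cos (s - S) - g' s * Real.sin (s - S))
      ((P s - 1) * (g s * Real.sin (s - S))) s := fun s =>
    (((hg s).mul (hsub s).cos).sub ((hg' s).mul (hsub s).sin)).congr_deriv (by ring)
  have hle := le_of_hasDerivAt_nonneg hSπ (fun s _ => hW s) fun s hs =>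
    mul_nonneg (sub_nonneg.2 (hP s hs.1)) (mul_nonneg (hpos s hs).le
      (Real.sin_nonneg_of_nonneg_of_le_pi (sub_nonneg.2 hs.1) (by linarith [hs.2])))
  simp only [sub_self, add_sub_cancel_left, Real.cos_zero, Real.sin_zero, Real.cos_pi,
    Real.sin_pi] at hle
  linarith [hpos S (left_mem_Icc.2 hSπ), hpos _ (right_mem_Icc.2 hSπ)]

theorem exists_zero_of_one_le (hg : ∀ s, HasDerivAt g (g' s) s)
    (hg' : ∀ s, HasDerivAt g' (-(P s * g s)) s) (hP : ∀ s, S ≤ s → 1 ≤ P s) :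
    ∃ s, S ≤ s ∧ g s = 0 := by
  obtain ⟨s, hs, hgs⟩ := exists_nonpos_of_one_le hg hg' hP
  obtain ⟨t, ht, hgt⟩ := exists_nonpos_of_one_le (g := fun s => -g s) (fun s => (hg s).neg)
    (fun s => (hg' s).neg.congr_deriv (by ring)) hP
  obtain ⟨x, hx, hgx⟩ := isPreconnected_Ici.intermediate_value hs.1 ht.1
    (fun x _ => (hg x).continuousAt.continuousWithinAt) ⟨hgs, neg_nonpos.1 hgt⟩
  exact ⟨x, hx, hgx⟩

open scoped ComplexConjugate

theorem IsSolutionOn.exists_ofReal_zero {β c : ℝ} {u : ℂ → ℂ}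
    (hu : IsSolutionOn (potential β c) u univ) (hβ : 0 ≤ β) (hc : 0 ≤ c)
    (hconj : ∀ z, u (conj z) = conj (u z)) (S : ℝ) : ∃ s, S ≤ s ∧ u ((-s : ℝ) : ℂ) = 0 := by
  have hd := fun x : ℝ => hu.hasDerivAt isOpen_univ (mem_univ (x : ℂ))
  have hdd := fun x : ℝ => hu.hasDerivAt_deriv isOpen_univ (mem_univ (x : ℂ))
  obtain ⟨s, hs, hzero⟩ := exists_zero_of_one_le (S := max S (4 * β + c + 1))
    (g := fun s => (u ((-s : ℝ) : ℂ)).re) (g' := fun s => -(deriv u ((-s : ℝ) : ℂ)).re)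
    (P := fun s => s ^ 3 - 4 * β * s - c)
    (fun s => ((hasDerivAt_re_comp_ofReal (hd (-s))).scomp s (hasDerivAt_neg s)).congr_deriv
      (by simp))
    (fun s => ((hasDerivAt_re_comp_ofReal (hdd (-s))).scomp s (hasDerivAt_neg s)).neg.congr_deriv
      (by rw [potential_ofReal, re_ofReal_mul, smul_eq_mul]; ring))
    (fun s hs => by
      have hle : 4 * β + c + 1 ≤ s := (le_max_right _ _).trans hs
      have hcube : s * (4 * β + c + 1) ≤ s * s ^ 2 := by gcongr <;> nlinarith
      nlinarith)
  refine ⟨s, (le_max_left _ _).trans hs, Complex.ext hzero ?_⟩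
  rw [zero_im, ← conj_eq_iff_im, ← hconj, conj_ofReal]

theorem IsSolutionOn.infinite_zeros {β c : ℝ} {u : ℂ → ℂ}
    (hu : IsSolutionOn (potential β c) u univ) (hβ : 0 ≤ β) (hc : 0 ≤ c)
    (hconj : ∀ z, u (conj z) = conj (u z)) : {z | u z = 0}.Infinite := by
  have hinj : Function.Injective fun s : ℝ => ((-s : ℝ) : ℂ) :=
    ofReal_injective.comp neg_injective
  refine fun hfin => Set.infinite_of_forall_exists_gt (fun S => ?_) (hfin.preimage hinj.injOn)
  obtain ⟨s, hs, hzero⟩ := hu.exists_ofReal_zero hβ hc hconj (S + 1)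
  exact ⟨s, hzero, by linarith⟩

end RealZeros

/-! ### The general cubic -/

theorem IsSolutionOn.iteratedDeriv_two_comp_neg_add {V u : ℂ → ℂ} (hu : IsSolutionOn V u univ)
    (d z : ℂ) : iteratedDeriv 2 (fun z => u (-(z + d))) z = V (-(z + d)) * u (-(z + d)) := by
  have hσ : ∀ z : ℂ, HasDerivAt (fun z => -(z + d)) (-1) z := fun z =>
    ((hasDerivAt_id z).add_const d).neg
  have hd : deriv (fun z => u (-(z + d))) = fun z => deriv u (-(z + d)) * -1 :=
    funext fun z => ((hu.hasDerivAt isOpen_univ (mem_univ _)).comp z (hσ z)).deriv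
  have hdd := ((hu.hasDerivAt_deriv isOpen_univ (mem_univ _)).comp z (hσ z)).mul_const (-1)
  rw [iteratedDeriv_succ, iteratedDeriv_one, hd]
  exact hdd.deriv.trans (by ring)

theorem exists_solution_finite_nonreal_zeros {β : ℝ} (hβ : 0 ≤ β) (M : ℝ) :
    ∃ (c : ℝ) (u : ℂ → ℂ), M < c ∧ IsSolutionOn (potential β c) u univ ∧ u ≠ 0 ∧
      {z | u z = 0}.Infinite ∧ {z | u z = 0 ∧ z.im ≠ 0}.Finite := by
  obtain ⟨c, u, hM, hc, hu, him⟩ :=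
    exists_isSubdominant_im_apply_zero_eq_zero hβ (max M ((4 * β + 1) ^ 2))
  obtain ⟨hMc, hβc⟩ := max_lt_iff.1 hM
  have hconj := hu.isSolutionOn.apply_conj hc.le him (hu.im_deriv_zero hβ hβc.le him)
  exact ⟨c, u, hMc, hu.isSolutionOn, hu.ne_zero hβ hc.le,
    hu.isSolutionOn.infinite_zeros hβ hc.le hconj, hu.finite_nonreal_zeros hβ hc.le hconj⟩

theorem potential_neg_add (a b γ : ℝ) (z : ℂ) :
    potential ((a ^ 2 / 3 - b) / 4) γ (-(z + a / 3)) =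
      -(z ^ 3 + a * z ^ 2 + b * z - ((γ - (a * b / 3 - 2 * a ^ 3 / 27) : ℝ) : ℂ)) := by
  rw [potential]
  push_cast
  ring

end CubicOscillator

open CubicOscillator in
theorem stmt_19_general (a b : ℝ) (hb : 3 * b ≤ a ^ 2) :
    {c : ℝ | 0 < c ∧ ∃ w : ℂ → ℂ,
        Differentiable ℂ w ∧ w ≠ 0 ∧
        (∀ z : ℂ, iteratedDeriv 2 w z
            + (z ^ 3 + (a : ℂ) * z ^ 2 + (b : ℂ) * z - (c : ℂ)) * w z = 0) ∧
        {z : ℂ | w z = 0}.Infinite ∧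
        {z : ℂ | w z = 0 ∧ z.im ≠ 0}.Finite}.Infinite := by
  refine Set.infinite_of_forall_exists_gt fun N => ?_
  obtain ⟨γ, u, hγ, hu, hne, hinf, hfin⟩ := exists_solution_finite_nonreal_zeros
    (β := (a ^ 2 / 3 - b) / 4) (by linarith) (a * b / 3 - 2 * a ^ 3 / 27 + |N|)
  let σ : ℂ ≃ ℂ := (Equiv.addRight (a / 3 : ℂ)).trans (Equiv.neg ℂ)
  have hσ_im (z : ℂ) : (σ z).im = -z.im := by simp [σ]
  have hu_diff : Differentiable ℂ u := differentiableOn_univ.1 hu.differentiableOn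
  refine ⟨γ - (a * b / 3 - 2 * a ^ 3 / 27), ⟨by linarith [abs_nonneg N], u ∘ σ,
    hu_diff.comp (differentiable_id.add_const _).neg,
    fun h => hne (σ.surjective.injective_comp_right h), fun z => ?_,
    hinf.preimage (by simp [σ.surjective.range_eq]), ?_⟩, by linarith [le_abs_self N]⟩
  · have hw := hu.iteratedDeriv_two_comp_neg_add (a / 3) z
    rw [potential_neg_add, neg_mul] at hw
    exact eq_neg_iff_add_eq_zero.1 hw
  · refine (hfin.preimage σ.injective.injOn).subset fun z hz => ⟨hz.1, ?_⟩
    rw [hσ_im]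
    exact neg_ne_zero.2 hz.2

/-- For real `a` and `b ≤ 0`, there are infinitely many positive real `c` such that
`w'' + (z³ + a·z² + b·z − c)·w = 0` has a nonzero entire solution with infinitely many
zeros, all but finitely many of them real. -/
theorem stmt_19 (a b : ℝ) (hb : b ≤ 0) :
    {c : ℝ | 0 < c ∧ ∃ w : ℂ → ℂ,
        Differentiable ℂ w ∧ w ≠ 0 ∧
        (∀ z : ℂ, iteratedDeriv 2 w z
            + (z ^ 3 + (a : ℂ) * z ^ 2 + (b : ℂ) * z - (c : ℂ)) * w z = 0) ∧
        {z : ℂ | w z = 0}.Infinite ∧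
        {z : ℂ | w z = 0 ∧ z.im ≠ 0}.Finite}.Infinite := by
  exact stmt_19_general a b (by nlinarith [sq_nonneg a])
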